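/- arXiv:1106.6041 — 3 statements merged into one kernel-verified Lean document; each statement's English description precedes it below -/
import Mathlib

section
/- Let n ≥ 1 and let a_1, …, a_n : ℝ → ℝ be functions of class C^n. Suppose that for every t ∈ ℝ the monic polynomial P(t)(x) = x^n + Σ_{j=1}^n (-1)^j a_j(t) x^{n-j} is hyperbolic, i.e. all its complex roots are real. If λ_1, …, λ_n : ℝ → ℝ are differentiable functions such that P(t)(x) = ∏_{j=1}^n (x - λ_j(t)) for all t and x, then each λ_j is of class C^1. -/
/-
A parameterization of the roots is `C^1` at a point as soon as the roots meeting there are, and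
these form a factor coprime to the rest: multiplication of coprime monic polynomials is a local
diffeomorphism on coefficients, so that factor is again of class `C^n`. Translate the point and the
common root to `0`. The blow-up `λ(s + s τ / 2) / (s + s τ / 2)`, `|τ| < 1`, has `τ`-derivative
`(λ'(s) - λ(s) / s) / 2` at `τ = 0`, and as `s → 0` the derivatives of orders `1, …, n` of its
coefficients tend to `0` uniformly. It remains to see that for any family of differentiable curves
of `n` roots with this property, whose roots at `τ = 0` converge, the root derivatives at `0` tend
to `0`; then `λ'(s) → λ'(0)`.

This goes by induction on `n`, along an ultrafilter. If the limits of the roots differ, split off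
the coprime factors. Otherwise subtract the mean, so that `-∑ λ_j ^ 2 / 2` becomes a coefficient and
has small second derivative. If all roots vanish at `0`, this bounds their derivatives there. If
not, divide roots and parameter by the `ℓ²` size of the roots at `0`: the rescaled roots stay
bounded on every fixed interval, so by Landau's interpolation inequality the derivatives of their
coefficients still tend to `0`. Now the limits of the roots have sum `0` and square sum `1`, hence
are not all equal.
-/

open Filter Set Topology Polynomial Asymptotics

namespace HyperbolicRoots

section IteratedDeriv

variable {E : Type*} [NormedAddCommGroup E] [NormedSpace ℝ E] {f : ℝ → E} {n k : ℕ} {t : ℝ}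

theorem differentiableAt_iteratedDeriv (hf : ContDiffAt ℝ n f t) (hk : k < n) :
    DifferentiableAt ℝ (iteratedDeriv k f) t := by
  rw [iteratedDeriv_eq_equiv_comp, LinearIsometryEquiv.comp_differentiableAt_iff]
  exact (hf.iteratedFDeriv_right (m := 1) (by norm_cast; omega)).differentiableAt one_ne_zero

theorem continuousAt_iteratedDeriv (hf : ContDiffAt ℝ n f t) (hk : k ≤ n) :
    ContinuousAt (iteratedDeriv k f) t := by
  rw [iteratedDeriv_eq_equiv_comp]
  exact (LinearIsometryEquiv.continuous _).continuousAt.comp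
    (hf.iteratedFDeriv_right (m := 0) (by norm_cast; omega)).continuousAt

theorem iteratedDeriv_comp_add_mul (f : ℝ → E) (b c : ℝ) (k : ℕ) :
    iteratedDeriv k (fun x => f (b + c * x)) = fun x => c ^ k • iteratedDeriv k f (b + c * x) := by
  induction k with
  | zero => simp
  | succ k ih =>
    funext x
    have h := deriv_comp_mul_left c (fun y => iteratedDeriv k f (b + y)) x
    rw [iteratedDeriv_succ, ih, deriv_fun_const_smul_field, h, deriv_comp_const_add,
      ← iteratedDeriv_succ, smul_smul, pow_succ]

end IteratedDeriv

section Interpolation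

theorem exists_mem_Ioo_abs_iteratedDeriv_le (k : ℕ) : ∃ c, 0 ≤ c ∧
    ∀ (f : ℝ → ℝ) (a b M : ℝ), a < b → ContDiffOn ℝ k f (Ioo a b) → (∀ t ∈ Ioo a b, |f t| ≤ M) →
    ∃ ξ ∈ Ioo a b, (b - a) ^ k * |iteratedDeriv k f ξ| ≤ c * M := by
  induction k with
  | zero =>
    refine ⟨1, zero_le_one, fun f a b M hab _ hM => ?_⟩
    obtain ⟨ξ, hξ⟩ := nonempty_Ioo.mpr hab
    exact ⟨ξ, hξ, by simpa using hM ξ hξ⟩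
  | succ k ih =>
    obtain ⟨c, hc, ih⟩ := ih
    refine ⟨3 ^ (k + 1) * (2 * c), by positivity, fun f a b M hab hf hM => ?_⟩
    obtain ⟨d, rfl⟩ : ∃ d, b = a + 3 * d := ⟨(b - a) / 3, by ring⟩
    have hd : 0 < d := by linarith
    have hleft : Ioo a (a + d) ⊆ Ioo a (a + 3 * d) := Ioo_subset_Ioo_right (by linarith)
    have hright : Ioo (a + 2 * d) (a + 3 * d) ⊆ Ioo a (a + 3 * d) :=
      Ioo_subset_Ioo_left (by linarith)
    have hf' : ContDiffOn ℝ k f (Ioo a (a + 3 * d)) := hf.of_le (by norm_cast; omega)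
    obtain ⟨ξ, hξ, h₁⟩ := ih f _ _ M (by linarith) (hf'.mono hleft) fun t ht => hM t (hleft ht)
    obtain ⟨η, hη, h₂⟩ := ih f _ _ M (by linarith) (hf'.mono hright) fun t ht => hM t (hright ht)
    have hgap : d ≤ η - ξ := by linarith [hξ.2, hη.1]
    have hdiff : ∀ t ∈ Icc ξ η, DifferentiableAt ℝ (iteratedDeriv k f) t := fun t ht =>
      differentiableAt_iteratedDeriv
        (hf.contDiffAt (isOpen_Ioo.mem_nhds ⟨hξ.1.trans_le ht.1, ht.2.trans_lt hη.2⟩))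
        k.lt_succ_self
    obtain ⟨ζ, hζ, hslope⟩ := exists_deriv_eq_slope (iteratedDeriv k f) (show ξ < η by linarith)
      (fun t ht => (hdiff t ht).continuousAt.continuousWithinAt)
      fun t ht => (hdiff t (Ioo_subset_Icc_self ht)).differentiableWithinAt
    refine ⟨ζ, ⟨hξ.1.trans hζ.1, hζ.2.trans hη.2⟩, ?_⟩
    rw [← iteratedDeriv_succ] at hslope
    have hMVT : d * |iteratedDeriv (k + 1) f ζ| ≤
        |iteratedDeriv k f η| + |iteratedDeriv k f ξ| := by
      refine le_trans ?_ (abs_sub _ _)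
      rw [hslope, abs_div, abs_of_pos (show 0 < η - ξ by linarith), mul_div_left_comm]
      exact mul_le_of_le_one_right (abs_nonneg _) (div_le_one_of_le₀ hgap (by linarith))
    calc (a + 3 * d - a) ^ (k + 1) * |iteratedDeriv (k + 1) f ζ|
        = 3 ^ (k + 1) * (d ^ k * (d * |iteratedDeriv (k + 1) f ζ|)) := by ring
      _ ≤ 3 ^ (k + 1) * (d ^ k * (|iteratedDeriv k f η| + |iteratedDeriv k f ξ|)) := by gcongr
      _ ≤ 3 ^ (k + 1) * (2 * c) * M := by
        rw [show a + d - a = d by ring] at h₁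
        rw [show a + 3 * d - (a + 2 * d) = d by ring] at h₂
        rw [mul_assoc]
        exact mul_le_mul_of_nonneg_left (by linarith) (by positivity)

theorem landau_abs_iteratedDeriv_le {k m : ℕ} (hkm : k ≤ m) : ∃ A, 0 ≤ A ∧
    ∀ (f : ℝ → ℝ) (a b M : ℝ), a < b → ContDiffOn ℝ m f (Ioo a b) →
      (∀ t ∈ Ioo a b, |f t| ≤ M) → (∀ t ∈ Ioo a b, (b - a) ^ m * |iteratedDeriv m f t| ≤ M) →
      ∀ t ∈ Ioo a b, (b - a) ^ k * |iteratedDeriv k f t| ≤ A * M := by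
  induction hkm using Nat.decreasingInduction with
  | self => exact ⟨1, zero_le_one, fun f a b M _ _ _ hm t ht => by simpa using hm t ht⟩
  | of_succ k hkm ih =>
    obtain ⟨A, hA, ih⟩ := ih
    obtain ⟨c, hc, hpoint⟩ := exists_mem_Ioo_abs_iteratedDeriv_le k
    refine ⟨c + A, by positivity, fun f a b M hab hf hM hm t ht => ?_⟩
    obtain ⟨ξ, hξ, hfξ⟩ := hpoint f a b M hab (hf.of_le (by norm_cast; omega)) hM
    have hpos : 0 < b - a := sub_pos.mpr hab
    have hderiv : ∀ x ∈ Ioo a b, ‖deriv (iteratedDeriv k f) x‖ ≤ A * M / (b - a) ^ (k + 1) := by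
      intro x hx
      rw [← iteratedDeriv_succ, Real.norm_eq_abs, le_div_iff₀' (by positivity)]
      exact ih f a b M hab hf hM hm x hx
    have hdist := (convex_Ioo a b).norm_image_sub_le_of_norm_deriv_le
      (fun x hx => differentiableAt_iteratedDeriv (hf.contDiffAt (isOpen_Ioo.mem_nhds hx)) hkm)
      hderiv hξ ht
    have hlen : ‖t - ξ‖ ≤ b - a :=
      abs_le.mpr ⟨by linarith [ht.1, hξ.2], by linarith [ht.2, hξ.1]⟩
    have hAM : 0 ≤ A * M := mul_nonneg hA ((abs_nonneg _).trans (hM t ht))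
    have hvar : (b - a) ^ k * |iteratedDeriv k f t - iteratedDeriv k f ξ| ≤ A * M :=
      calc (b - a) ^ k * |iteratedDeriv k f t - iteratedDeriv k f ξ|
          ≤ (b - a) ^ k * (A * M / (b - a) ^ (k + 1) * (b - a)) := by
            gcongr
            exact hdist.trans (by gcongr)
        _ = A * M := by rw [pow_succ]; field_simp
    calc (b - a) ^ k * |iteratedDeriv k f t|
        ≤ (b - a) ^ k * (|iteratedDeriv k f ξ| + |iteratedDeriv k f t - iteratedDeriv k f ξ|) := by
          gcongr
          simpa using abs_add_le (iteratedDeriv k f ξ) (iteratedDeriv k f t - iteratedDeriv k f ξ)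
      _ ≤ (c + A) * M := by linarith

theorem add_comp_neg_le_of_abs_iteratedDeriv_le {f : ℝ → ℝ} {η r u : ℝ}
    (hf : ContDiffOn ℝ 2 f (Ioo (-r) r)) (hη : ∀ t ∈ Ioo (-r) r, |iteratedDeriv 2 f t| ≤ η)
    (hu : u ∈ Ico 0 r) : f u + f (-u) ≤ 2 * f 0 + η * u ^ 2 := by
  have hmem {u : ℝ} (hu : u ∈ Ico 0 r) : u ∈ Ioo (-r) r ∧ -u ∈ Ioo (-r) r :=
    ⟨⟨by linarith [hu.1, hu.2], hu.2⟩, ⟨neg_lt_neg hu.2, by linarith [hu.1, hu.2]⟩⟩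
  have hdiff {k : ℕ} (hk : k < 2) {u : ℝ} (hu : u ∈ Ioo (-r) r) :
      DifferentiableAt ℝ (iteratedDeriv k f) u :=
    differentiableAt_iteratedDeriv (hf.contDiffAt (isOpen_Ioo.mem_nhds hu)) hk
  have hlip {u v : ℝ} (hu : u ∈ Ioo (-r) r) (hv : v ∈ Ioo (-r) r) :
      ‖deriv f u - deriv f v‖ ≤ η * ‖u - v‖ := by
    rw [← iteratedDeriv_one]
    refine (convex_Ioo (-r) r).norm_image_sub_le_of_norm_deriv_le
      (fun x hx => hdiff one_lt_two hx) (fun x hx => ?_) hv hu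
    rw [← iteratedDeriv_succ]
    exact hη x hx
  have hderiv {u : ℝ} (hu : u ∈ Ico 0 r) : HasDerivAt (fun u => f u + f (-u) - η * u ^ 2)
      (deriv f u - deriv f (-u) - η * (2 * u)) u := by
    have h₁ : HasDerivAt f (deriv f u) u := by simpa using (hdiff two_pos (hmem hu).1).hasDerivAt
    have h₂ : HasDerivAt (fun u => f (-u)) (-deriv f (-u)) u := by
      simpa [Function.comp_def] using
        (hdiff two_pos (hmem hu).2).hasDerivAt.comp u (hasDerivAt_neg u)
    simpa [sub_eq_add_neg] using (h₁.fun_add h₂).fun_sub ((hasDerivAt_pow 2 u).const_mul η)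
  have hanti : AntitoneOn (fun u => f u + f (-u) - η * u ^ 2) (Ico 0 r) := by
    refine antitoneOn_of_hasDerivWithinAt_nonpos (convex_Ico 0 r)
      (fun u hu => (hderiv hu).continuousAt.continuousWithinAt)
      (fun u hu => (hderiv (interior_subset hu)).hasDerivWithinAt) fun u hu => ?_
    have hu' := interior_subset hu
    have h := (le_abs_self _).trans (hlip (hmem hu').1 (hmem hu').2)
    rw [Real.norm_eq_abs, abs_of_nonneg (by linarith [hu'.1])] at h
    linarith
  have := hanti ⟨le_rfl, hu.1.trans_lt hu.2⟩ hu hu.1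
  simp only [neg_zero] at this
  linarith

theorem le_two_mul_add_of_nonneg_of_abs_iteratedDeriv_le {f : ℝ → ℝ} {η r t : ℝ}
    (hf : ContDiffOn ℝ 2 f (Ioo (-r) r)) (hnonneg : ∀ t ∈ Ioo (-r) r, 0 ≤ f t)
    (hη : ∀ t ∈ Ioo (-r) r, |iteratedDeriv 2 f t| ≤ η) (ht : t ∈ Ioo (-r) r) :
    f t ≤ 2 * f 0 + η * t ^ 2 := by
  have hneg : 0 ≤ f (-t) := hnonneg _ ⟨neg_lt_neg ht.2, neg_lt.mp ht.1⟩
  rcases le_total 0 t with h | h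
  · linarith [add_comp_neg_le_of_abs_iteratedDeriv_le hf hη ⟨h, ht.2⟩]
  · have := add_comp_neg_le_of_abs_iteratedDeriv_le hf hη ⟨neg_nonneg.mpr h, neg_lt.mp ht.1⟩
    rw [neg_neg, neg_sq] at this
    linarith

end Interpolation

section AsympConst

variable {α E G : Type*} [NormedAddCommGroup E] [NormedSpace ℝ E] [NormedAddCommGroup G]
  [NormedSpace ℝ G] {F F' : Filter α} {m n : ℕ} {f g : α → ℝ → E}

/-- The curves `f a` are asymptotically constant of order `n` along `F`: on `(-1, 1)` they are
eventually of class `C^n`, and their derivatives of orders `1, …, n` tend to `0` uniformly. -/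
def AsympConst (F : Filter α) (n : ℕ) (f : α → ℝ → E) : Prop :=
  (∀ᶠ a in F, ContDiffOn ℝ n (f a) (Ioo (-1) 1)) ∧
    ∀ k, 1 ≤ k → k ≤ n → ∀ ε > 0, ∀ᶠ a in F, ∀ t ∈ Ioo (-1) 1, ‖iteratedDeriv k (f a) t‖ ≤ ε

theorem zero_mem_Ioo : (0 : ℝ) ∈ Ioo (-1) 1 := by norm_num

namespace AsympConst

theorem mono_order (hf : AsympConst F n f) (hmn : m ≤ n) : AsympConst F m f :=
  ⟨hf.1.mono fun _ h => h.of_le (by exact_mod_cast hmn),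
    fun k hk hkm => hf.2 k hk (hkm.trans hmn)⟩

theorem mono_filter (hf : AsympConst F n f) (hF : F' ≤ F) : AsympConst F' n f :=
  ⟨hf.1.filter_mono hF, fun k hk hkn ε hε => (hf.2 k hk hkn ε hε).filter_mono hF⟩

theorem congr (hf : AsympConst F n f) (hfg : ∀ᶠ a in F, EqOn (g a) (f a) (Ioo (-1) 1)) :
    AsympConst F n g := by
  refine ⟨(hf.1.and hfg).mono fun a h => h.1.congr h.2, fun k hk hkn ε hε => ?_⟩
  filter_upwards [hf.2 k hk hkn ε hε, hfg] with a ha hag t ht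
  rw [hag.iteratedDeriv_of_isOpen isOpen_Ioo k ht]
  exact ha t ht

theorem eventually_norm_sub_le (hf : AsympConst F n f) (hn : 1 ≤ n) {ε : ℝ} (hε : 0 < ε) :
    ∀ᶠ a in F, ∀ t ∈ Ioo (-1) 1, ‖f a t - f a 0‖ ≤ ε := by
  filter_upwards [hf.1, hf.2 1 le_rfl hn ε hε] with a hdiff hderiv t ht
  rw [iteratedDeriv_one] at hderiv
  calc ‖f a t - f a 0‖ ≤ ε * ‖t - 0‖ := (convex_Ioo _ _).norm_image_sub_le_of_norm_deriv_le
        (fun x hx => (hdiff.contDiffAt (isOpen_Ioo.mem_nhds hx)).differentiableAt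
          (by norm_cast; omega)) hderiv zero_mem_Ioo ht
    _ ≤ ε * 1 := by
      gcongr
      rw [sub_zero]
      exact abs_le.mpr ⟨ht.1.le, ht.2.le⟩
    _ = ε := mul_one ε

theorem tendsto_deriv (hf : AsympConst F n f) (hn : 1 ≤ n) :
    Tendsto (fun a => deriv (f a) 0) F (𝓝 0) := by
  rw [NormedAddGroup.tendsto_nhds_zero]
  intro ε hε
  filter_upwards [hf.2 1 le_rfl hn (ε / 2) (half_pos hε)] with a ha
  rw [iteratedDeriv_one] at ha
  exact (ha 0 zero_mem_Ioo).trans_lt (half_lt_self hε)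

theorem eventually_forall_mem (hf : AsympConst F n f) (hn : 1 ≤ n) {c : E}
    (hc : Tendsto (fun a => f a 0) F (𝓝 c)) {U : Set E} (hU : U ∈ 𝓝 c) :
    ∀ᶠ a in F, ∀ t ∈ Ioo (-1) 1, f a t ∈ U := by
  obtain ⟨ε, hε, hball⟩ := Metric.mem_nhds_iff.mp hU
  filter_upwards [hf.eventually_norm_sub_le hn (half_pos hε),
    hc.eventually (Metric.ball_mem_nhds c (half_pos hε))] with a hvar hzero t ht
  refine hball ?_
  rw [dist_eq_norm] at hzero
  rw [mem_ball_iff_norm]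
  linarith [hvar t ht, norm_sub_le_norm_sub_add_norm_sub (f a t) (f a 0) c]

theorem pi {ι : Type*} [Fintype ι] {f : α → ℝ → ι → ℝ}
    (hf : ∀ i, AsympConst F n (fun a t => f a t i)) : AsympConst F n f := by
  have hsmooth : ∀ᶠ a in F, ContDiffOn ℝ n (f a) (Ioo (-1) 1) :=
    (eventually_all.mpr fun i => (hf i).1).mono fun a => contDiffOn_pi.mpr
  refine ⟨hsmooth, fun k hk hkn ε hε => ?_⟩
  filter_upwards [hsmooth, eventually_all.mpr fun i => (hf i).2 k hk hkn ε hε] with a ha hderiv t ht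
  refine (pi_norm_le_iff_of_nonneg hε.le).mpr fun i => ?_
  have hk : ContDiffAt ℝ k (f a) t :=
    (ha.contDiffAt (isOpen_Ioo.mem_nhds ht)).of_le (by exact_mod_cast hkn)
  have hcoord : iteratedDeriv k (fun t => f a t i) t = iteratedDeriv k (f a) t i := by
    simpa [iteratedDeriv, Function.comp_def] using congrArg (· fun _ => (1 : ℝ))
      ((ContinuousLinearMap.proj (R := ℝ) (φ := fun _ : ι => ℝ) i).iteratedFDeriv_comp_left
        hk le_rfl)
  rw [← hcoord]
  exact hderiv i t ht

end AsympConst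

theorem exists_eventually_norm_iteratedFDeriv_le {Φ : E → G} {c : E} (hΦ : ContDiffAt ℝ n Φ c) :
    ∃ C, ∀ᶠ y in 𝓝 c, ∀ k ≤ n, ‖iteratedFDeriv ℝ k Φ y‖ ≤ C := by
  refine ⟨∑ k ∈ Finset.range (n + 1), (‖iteratedFDeriv ℝ k Φ c‖ + 1), ?_⟩
  have hnear : ∀ k ∈ Finset.range (n + 1), ∀ᶠ y in 𝓝 c,
      ‖iteratedFDeriv ℝ k Φ y‖ < ‖iteratedFDeriv ℝ k Φ c‖ + 1 := fun k hk =>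
    (hΦ.continuousAt_iteratedFDeriv
      (by exact_mod_cast Finset.mem_range_succ_iff.mp hk)).norm.eventually_lt_const (lt_add_one _)
  filter_upwards [(eventually_all_finset _).mpr hnear] with y hy k hk
  have hk' := Finset.mem_range_succ_iff.mpr hk
  exact (hy k hk').le.trans
    (Finset.single_le_sum (f := fun k => ‖iteratedFDeriv ℝ k Φ c‖ + 1)
      (fun k _ => by positivity) hk')

/-- Every term of the Faà di Bruno formula for `Φ ∘ f a` contains a small derivative of `f a`. -/
theorem AsympConst.comp (hf : AsympConst F n f) (hn : 1 ≤ n) {c : E}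
    (hc : Tendsto (fun a => f a 0) F (𝓝 c)) {Φ : E → G} (hΦ : ContDiffAt ℝ n Φ c) :
    AsympConst F n (fun a t => Φ (f a t)) := by
  obtain ⟨C, hC⟩ := exists_eventually_norm_iteratedFDeriv_le hΦ
  obtain ⟨ρ, hρ, hball⟩ :=
    Metric.eventually_nhds_iff_ball.mp ((hΦ.eventually (by simp)).and hC)
  have hmem := hf.eventually_forall_mem hn hc (Metric.ball_mem_nhds c hρ)
  have hΦ' : ContDiffOn ℝ n Φ (Metric.ball c ρ) := fun y hy => (hball y hy).1.contDiffWithinAt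
  refine ⟨(hf.1.and hmem).mono fun a h => hΦ'.comp h.1 h.2, fun k hk hkn ε hε => ?_⟩
  have hC0 : 0 ≤ C := (norm_nonneg _).trans ((hball c (Metric.mem_ball_self hρ)).2 0 n.zero_le)
  obtain ⟨D, hD, hD1, hDε⟩ : ∃ D > 0, D ≤ 1 ∧ k.factorial * C * D ≤ ε := by
    have hpos : 0 < k.factorial * C + 1 := by positivity
    refine ⟨min 1 (ε / (k.factorial * C + 1)), by positivity, min_le_left _ _, ?_⟩
    calc k.factorial * C * min 1 (ε / (k.factorial * C + 1))
        ≤ (k.factorial * C + 1) * (ε / (k.factorial * C + 1)) := by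
          gcongr
          exacts [(lt_add_one _).le, min_le_right _ _]
      _ = ε := mul_div_cancel₀ ε hpos.ne'
  have hsmall : ∀ᶠ a in F, ∀ i ∈ Finset.Icc 1 k, ∀ t ∈ Ioo (-1) 1,
      ‖iteratedDeriv i (f a) t‖ ≤ D ^ k := (eventually_all_finset _).mpr fun i hi =>
    hf.2 i (Finset.mem_Icc.mp hi).1 ((Finset.mem_Icc.mp hi).2.trans hkn) _ (by positivity)
  filter_upwards [hf.1, hmem, hsmall] with a hsmooth hmem hsmall t ht
  have hbound := norm_iteratedFDerivWithin_comp_le hΦ' hsmooth (by exact_mod_cast hkn)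
    Metric.isOpen_ball.uniqueDiffOn isOpen_Ioo.uniqueDiffOn hmem ht (C := C) (D := D)
    (fun i hi => by
      rw [iteratedFDerivWithin_of_isOpen i Metric.isOpen_ball (hmem t ht)]
      exact (hball _ (hmem t ht)).2 i (hi.trans hkn))
    (fun i hi hik => by
      rw [iteratedFDerivWithin_of_isOpen i isOpen_Ioo ht,
        norm_iteratedFDeriv_eq_norm_iteratedDeriv]
      exact (hsmall i (Finset.mem_Icc.mpr ⟨hi, hik⟩) t ht).trans
        (pow_le_pow_of_le_one hD.le hD1 hik))
  rw [iteratedFDerivWithin_of_isOpen k isOpen_Ioo ht,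
    norm_iteratedFDeriv_eq_norm_iteratedDeriv] at hbound
  calc ‖iteratedDeriv k (fun t => Φ (f a t)) t‖ ≤ k.factorial * C * D ^ k := hbound
    _ ≤ k.factorial * C * D := by gcongr; exact pow_le_of_le_one hD.le hD1 (by omega)
    _ ≤ ε := hDε

end AsympConst

section Rescale

variable {α : Type*} {F : Filter α} {m n : ℕ} {g : α → ℝ → ℝ} {s : α → ℝ}

theorem eventually_forall_mul_mem_Ioo (hpos : ∀ᶠ a in F, 0 < s a) (hs : Tendsto s F (𝓝 0)) (T : ℝ) :
    ∀ᶠ a in F, ∀ τ ∈ Ioo (-T) T, s a * τ ∈ Ioo (-1 : ℝ) 1 := by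
  have hlim : Tendsto (fun a => s a * T) F (𝓝 0) := by simpa using hs.mul_const T
  filter_upwards [hpos, hlim.eventually_lt_const one_pos] with a ha hT τ hτ
  constructor <;> nlinarith [hτ.1, hτ.2]

namespace AsympConst

theorem eventually_contDiffOn_rescale (hg : AsympConst F n g) (hpos : ∀ᶠ a in F, 0 < s a)
    (hs : Tendsto s F (𝓝 0)) (m : ℕ) (T : ℝ) :
    ∀ᶠ a in F, ContDiffOn ℝ n (fun τ => g a (s a * τ) / s a ^ m) (Ioo (-T) T) := by
  filter_upwards [hg.1, eventually_forall_mul_mem_Ioo hpos hs T] with a ha hmem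
  exact (ha.comp (contDiff_const.mul contDiff_id).contDiffOn hmem).div_const _

theorem eventually_abs_iteratedDeriv_rescale_le (hg : AsympConst F n g)
    (hpos : ∀ᶠ a in F, 0 < s a) (hs : Tendsto s F (𝓝 0)) {k : ℕ} (hk : 1 ≤ k) (hmk : m ≤ k)
    (hkn : k ≤ n) (T : ℝ) {ε : ℝ} (hε : 0 < ε) :
    ∀ᶠ a in F, ∀ τ ∈ Ioo (-T) T,
      |iteratedDeriv k (fun τ => g a (s a * τ) / s a ^ m) τ| ≤ ε := by
  filter_upwards [hpos, hs.eventually_lt_const one_pos, eventually_forall_mul_mem_Ioo hpos hs T,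
    hg.2 k hk hkn ε hε] with a ha ha1 hmem hderiv τ hτ
  have hchain : iteratedDeriv k (fun τ => g a (s a * τ) / s a ^ m) τ
      = s a ^ (k - m) * iteratedDeriv k (g a) (s a * τ) := by
    have h := congrFun (iteratedDeriv_comp_add_mul (g a) 0 (s a) k) τ
    simp only [zero_add, smul_eq_mul] at h
    rw [iteratedDeriv_div_const, h, pow_sub₀ _ ha.ne' hmk]
    ring
  rw [hchain, abs_mul, abs_of_nonneg (by positivity)]
  calc s a ^ (k - m) * |iteratedDeriv k (g a) (s a * τ)|
      ≤ 1 * ε := mul_le_mul (pow_le_one₀ ha.le ha1.le) (hderiv _ (hmem τ hτ)) (abs_nonneg _)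
        zero_le_one
    _ = ε := one_mul ε

/-- Derivatives of order at least `m` are small by scaling; the lower ones are interpolated between
the bound `C` and the derivative of order `m`, on an interval `(-T, T)` with `T` large. -/
theorem rescale (hg : AsympConst F n g) (hpos : ∀ᶠ a in F, 0 < s a) (hs : Tendsto s F (𝓝 0))
    (hmn : m ≤ n) {C : ℝ}
    (hC : ∀ T, ∀ᶠ a in F, ∀ τ ∈ Ioo (-T) T, |g a (s a * τ) / s a ^ m| ≤ C) :
    AsympConst F n (fun a τ => g a (s a * τ) / s a ^ m) := by
  refine ⟨hg.eventually_contDiffOn_rescale hpos hs m 1, fun k hk hkn ε hε => ?_⟩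
  rcases le_total m k with hmk | hkm
  · exact hg.eventually_abs_iteratedDeriv_rescale_le hpos hs hk hmk hkn 1 hε
  obtain ⟨A, -, hlandau⟩ := landau_abs_iteratedDeriv_le hkm
  wlog hC0 : 0 < C generalizing C
  · exact this (C := |C| + 1) (fun T => (hC T).mono fun a ha τ hτ =>
      (ha τ hτ).trans ((le_abs_self C).trans (lt_add_one _).le)) (by positivity)
  obtain ⟨T, hT1, hTε⟩ : ∃ T : ℝ, 1 ≤ T ∧ A * C / ε ≤ T := ⟨_, le_max_left _ _, le_max_right _ _⟩
  have hlen : 0 < T - -T := by linarith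
  filter_upwards [hC T, hg.eventually_contDiffOn_rescale hpos hs m T,
    hg.eventually_abs_iteratedDeriv_rescale_le hpos hs (hk.trans hkm) le_rfl hmn T
      (div_pos hC0 (pow_pos hlen m))] with a hbd hsmooth hderiv τ hτ
  have hkey := hlandau _ (-T) T C (by linarith) (hsmooth.of_le (by exact_mod_cast hmn)) hbd
    (fun t ht => (le_div_iff₀' (pow_pos hlen m)).mp (hderiv t ht)) τ
    (Ioo_subset_Ioo (by linarith) hT1 hτ)
  have hpow : T ≤ (T - -T) ^ k :=
    (by linarith : T ≤ T - -T).trans (le_self_pow₀ (by linarith) (by omega))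
  refine le_of_mul_le_mul_left ?_ (zero_lt_one.trans_le hT1)
  calc T * |iteratedDeriv k (fun τ => g a (s a * τ) / s a ^ m) τ|
      ≤ (T - -T) ^ k * |iteratedDeriv k (fun τ => g a (s a * τ) / s a ^ m) τ| := by gcongr
    _ ≤ A * C := hkey
    _ ≤ T * ε := (div_le_iff₀ hε).mp hTε

end AsympConst

end Rescale

section BlowUp

theorem eventually_forall_mem_Ioo_abs {p : ℝ → Prop} (hp : ∀ᶠ t in 𝓝[≠] 0, p t) :
    ∀ᶠ t in 𝓝[≠] 0, ∀ u ∈ Ioo (t - |t| / 2) (t + |t| / 2), p u ∧ |t| / 2 ≤ |u| ∧ |u| ≤ 2 * |t| := by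
  obtain ⟨r, hr, hp⟩ := Metric.eventually_nhds_iff.mp (eventually_nhdsWithin_iff.mp hp)
  have hnear : ∀ᶠ t : ℝ in 𝓝[≠] 0, |t| < r / 2 := nhdsWithin_le_nhds
    (continuous_abs.continuousAt.eventually_lt_const (by simpa using half_pos hr))
  filter_upwards [hnear, self_mem_nhdsWithin] with t ht htne u hu
  have htpos : 0 < |t| := abs_pos.mpr htne
  have hdist : |t - u| ≤ |t| / 2 := abs_le.mpr ⟨by linarith [hu.2], by linarith [hu.1]⟩
  have hlow := abs_sub_abs_le_abs_sub t u
  have hupp := abs_sub_abs_le_abs_sub u t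
  rw [abs_sub_comm] at hupp
  refine ⟨hp ?_ (abs_pos.mp (by linarith)), by linarith, by linarith⟩
  rw [dist_zero_right, Real.norm_eq_abs]
  linarith

variable {f : ℝ → ℝ} {m n k : ℕ}

theorem add_half_mul_mem_Ioo {t τ : ℝ} (ht : t ≠ 0) (hτ : τ ∈ Ioo (-1) 1) :
    t + t / 2 * τ ∈ Ioo (t - |t| / 2) (t + |t| / 2) := by
  have h : |t / 2 * τ| < |t| / 2 := by
    rw [abs_mul, abs_div, abs_two]
    exact mul_lt_of_lt_one_right (by positivity) (abs_lt.mpr hτ)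
  constructor <;> linarith [(abs_lt.mp h).1, (abs_lt.mp h).2]

theorem eventually_forall_abs_le_mul_abs_pow (hf : f =o[𝓝[≠] 0] fun t => t ^ m) {ε : ℝ}
    (hε : 0 < ε) :
    ∀ᶠ t in 𝓝[≠] 0, ∀ u ∈ Ioo (t - |t| / 2) (t + |t| / 2), |f u| ≤ ε * |t| ^ m := by
  filter_upwards [eventually_forall_mem_Ioo_abs
    (isLittleO_iff.mp hf (show 0 < ε / 2 ^ m by positivity))] with t ht u hu
  obtain ⟨hfu, -, hut⟩ := ht u hu
  rw [Real.norm_eq_abs, Real.norm_eq_abs, abs_pow] at hfu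
  calc |f u| ≤ ε / 2 ^ m * |u| ^ m := hfu
    _ ≤ ε / 2 ^ m * (2 * |t|) ^ m := by gcongr
    _ = ε * |t| ^ m := by rw [mul_pow]; field_simp

theorem eventually_contDiffOn_Ioo_abs (hf : ContDiffAt ℝ n f 0) :
    ∀ᶠ t in 𝓝[≠] 0, ContDiffOn ℝ n f (Ioo (t - |t| / 2) (t + |t| / 2)) :=
  (eventually_forall_mem_Ioo_abs (nhdsWithin_le_nhds (hf.eventually (by simp)))).mono
    fun _ ht u hu => (ht u hu).1.contDiffWithinAt

theorem iteratedDeriv_eq_zero_of_isLittleO (hf : ContDiffAt ℝ m f 0)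
    (hfo : f =o[𝓝[≠] 0] fun t => t ^ m) : iteratedDeriv m f 0 = 0 := by
  obtain ⟨c, hc, hpoint⟩ := exists_mem_Ioo_abs_iteratedDeriv_le m
  refine abs_nonpos_iff.mp (le_of_forall_pos_le_add fun ε hε => ?_)
  rw [zero_add]
  refine le_of_tendsto_of_frequently (continuousAt_iteratedDeriv hf le_rfl).abs
    (frequently_iff.mpr fun {U} hU => ?_)
  obtain ⟨t, hsmooth, hsmall, hmem, htne⟩ := ((eventually_contDiffOn_Ioo_abs hf).and
    ((eventually_forall_abs_le_mul_abs_pow hfo (show 0 < ε / (c + 1) by positivity)).and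
      ((eventually_forall_mem_Ioo_abs (mem_of_superset (nhdsWithin_le_nhds hU) fun _ => id)).and
        self_mem_nhdsWithin))).exists
  have htpos : 0 < |t| := abs_pos.mpr htne
  obtain ⟨ξ, hξ, hfξ⟩ := hpoint f _ _ _ (by linarith) hsmooth hsmall
  refine ⟨ξ, (hmem ξ hξ).1, le_of_mul_le_mul_left ?_ (pow_pos htpos m)⟩
  rw [show t + |t| / 2 - (t - |t| / 2) = |t| by ring] at hfξ
  calc |t| ^ m * |iteratedDeriv m f ξ| ≤ c * (ε / (c + 1) * |t| ^ m) := hfξ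
    _ ≤ (c + 1) * (ε / (c + 1) * |t| ^ m) := by gcongr; exact (lt_add_one c).le
    _ = |t| ^ m * ε := by field_simp

theorem isLittleO_pow_mul_iteratedDeriv (hf : ContDiffAt ℝ n f 0) (hmn : m ≤ n)
    (hfo : f =o[𝓝[≠] 0] fun t => t ^ m) (hk : k ≤ n) :
    (fun t => t ^ k * iteratedDeriv k f t) =o[𝓝[≠] 0] fun t => t ^ m := by
  have hzero := iteratedDeriv_eq_zero_of_isLittleO (hf.of_le (by exact_mod_cast hmn)) hfo
  rcases le_or_gt m k with hmk | hkm
  · have hlim : Tendsto (fun t => t ^ (k - m) * iteratedDeriv k f t) (𝓝[≠] 0) (𝓝 0) := by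
      have h := ((continuousAt_id.pow (k - m)).mul (continuousAt_iteratedDeriv hf hk)).tendsto
      refine (tendsto_nhdsWithin_of_tendsto_nhds h).congr' .rfl |>.trans (le_of_eq ?_)
      rcases hmk.eq_or_lt with rfl | hlt
      · simp [hzero]
      · simp [(Nat.sub_pos_of_lt hlt).ne']
    simpa [← mul_assoc, ← pow_add, Nat.add_sub_cancel' hmk] using
      (isBigO_refl (fun t : ℝ => t ^ m) (𝓝[≠] 0)).mul_isLittleO ((isLittleO_one_iff ℝ).mpr hlim)
  · obtain ⟨A, hA, hlandau⟩ := landau_abs_iteratedDeriv_le hkm.le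
    refine isLittleO_iff.mpr fun ε hε => ?_
    have hδ : 0 < ε / (A + 1) := by positivity
    have htop : ∀ᶠ t in 𝓝 0, |iteratedDeriv m f t| < ε / (A + 1) :=
      (continuousAt_iteratedDeriv hf hmn).abs.eventually_lt_const (by simpa [hzero] using hδ)
    filter_upwards [eventually_contDiffOn_Ioo_abs (hf.of_le (by exact_mod_cast hmn)),
      eventually_forall_abs_le_mul_abs_pow hfo hδ,
      eventually_forall_mem_Ioo_abs (nhdsWithin_le_nhds htop), self_mem_nhdsWithin]
      with t hsmooth hsmall htop htne
    have htpos : 0 < |t| := abs_pos.mpr htne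
    have hlen : t + |t| / 2 - (t - |t| / 2) = |t| := by ring
    have hkey := hlandau f _ _ _ (by linarith) hsmooth hsmall (fun u hu => by
      rw [hlen, mul_comm]
      exact mul_le_mul_of_nonneg_right (htop u hu).1.le (by positivity)) t
      ⟨by linarith, by linarith⟩
    rw [hlen] at hkey
    rw [norm_mul, norm_pow, norm_pow, Real.norm_eq_abs, Real.norm_eq_abs]
    calc |t| ^ k * |iteratedDeriv k f t| ≤ A * (ε / (A + 1) * |t| ^ m) := hkey
      _ ≤ (A + 1) * (ε / (A + 1) * |t| ^ m) := by gcongr; exact (lt_add_one A).le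
      _ = ε * |t| ^ m := by field_simp

theorem tendsto_pow_mul_iteratedDeriv_mul_zpow (hf : ContDiffAt ℝ n f 0) (hmn : m ≤ n)
    (hfo : f =o[𝓝[≠] 0] fun t => t ^ m) (hk : k ≤ n) :
    Tendsto (fun t => t ^ k * iteratedDeriv k (fun t => f t * t ^ (-m : ℤ)) t)
      (𝓝[≠] 0) (𝓝 0) := by
  let c (j : ℕ) : ℝ := ∏ i ∈ Finset.range j, (((-m : ℤ) : ℝ) - i)
  have hsum : Tendsto (fun t => ∑ i ∈ Finset.range (k + 1), (k.choose i * c (k - i)) *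
      (t ^ i * iteratedDeriv i f t / t ^ m)) (𝓝[≠] 0) (𝓝 0) := by
    rw [← Finset.sum_const_zero (s := Finset.range (k + 1))]
    refine tendsto_finsetSum _ fun i hi => ?_
    simpa using ((isLittleO_pow_mul_iteratedDeriv hf hmn hfo
      ((Finset.mem_range_succ_iff.mp hi).trans hk)).tendsto_div_nhds_zero).const_mul
        (k.choose i * c (k - i))
  refine hsum.congr' ?_
  filter_upwards [nhdsWithin_le_nhds (hf.eventually (by simp)), self_mem_nhdsWithin] with t ht hne
  have hzpow : ContDiffAt ℝ k (fun t : ℝ => t ^ (-m : ℤ)) t := by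
    simp only [zpow_neg, zpow_natCast]
    exact (contDiffAt_id.pow m).inv (pow_ne_zero _ hne)
  rw [iteratedDeriv_fun_mul (ht.of_le (by exact_mod_cast hk)) hzpow, Finset.mul_sum]
  refine Finset.sum_congr rfl fun i hi => ?_
  have hik : i ≤ k := Finset.mem_range_succ_iff.mp hi
  have hpow : t ^ k = t ^ i * t ^ (k - i) := by rw [← pow_add, Nat.add_sub_cancel' hik]
  rw [iteratedDeriv_eq_iterate (f := fun t : ℝ => t ^ (-m : ℤ)), iter_deriv_zpow, zpow_sub₀ hne,
    zpow_neg, zpow_natCast, zpow_natCast, hpow]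
  simp only [c]
  have : t ≠ 0 := hne
  field_simp

theorem tendsto_pow_mul_iteratedDeriv_div_pow (hf : ContDiffAt ℝ n f 0) (hmn : m ≤ n) {A : ℝ}
    (hA : Tendsto (fun t => f t / t ^ m) (𝓝[≠] 0) (𝓝 A)) (hk : 1 ≤ k) (hkn : k ≤ n) :
    Tendsto (fun t => t ^ k * iteratedDeriv k (fun t => f t / t ^ m) t) (𝓝[≠] 0) (𝓝 0) := by
  have hfo : (fun t => f t - A * t ^ m) =o[𝓝[≠] 0] fun t => t ^ m := by
    have hne : ∀ᶠ t : ℝ in 𝓝[≠] 0, t ^ m ≠ 0 :=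
      eventually_mem_nhdsWithin.mono fun t ht => pow_ne_zero m ht
    refine (isLittleO_iff_tendsto' (hne.mono fun t ht h => absurd h ht)).mpr ?_
    refine Tendsto.congr' ?_ (by simpa using hA.sub_const A)
    filter_upwards [hne] with t ht
    field_simp
  refine (tendsto_pow_mul_iteratedDeriv_mul_zpow (hf.sub (by fun_prop)) hmn hfo hkn).congr' ?_
  filter_upwards [self_mem_nhdsWithin] with t hne
  have heq : (fun t => f t / t ^ m) =ᶠ[𝓝 t] fun t => A + (f t - A * t ^ m) * t ^ (-m : ℤ) := by
    filter_upwards [isOpen_ne.mem_nhds hne] with u hu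
    have : u ≠ 0 := hu
    rw [zpow_neg, zpow_natCast]
    field_simp
    ring
  rw [heq.iteratedDeriv_eq, iteratedDeriv_const_add (by omega)]

theorem asympConst_comp_add_mul_div_pow (hf : ContDiffAt ℝ n f 0) (hmn : m ≤ n) {A : ℝ}
    (hA : Tendsto (fun t => f t / t ^ m) (𝓝[≠] 0) (𝓝 A)) :
    AsympConst (𝓝[≠] 0) n fun s τ => f (s + s / 2 * τ) / (s + s / 2 * τ) ^ m := by
  have hsmooth : ∀ᶠ t in 𝓝[≠] 0, ContDiffAt ℝ n (fun t => f t / t ^ m) t := by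
    filter_upwards [nhdsWithin_le_nhds (hf.eventually (by simp)), self_mem_nhdsWithin] with t ht hne
    exact ht.div (by fun_prop) (pow_ne_zero _ hne)
  refine ⟨?_, fun k hk hkn ε hε => ?_⟩
  · filter_upwards [eventually_forall_mem_Ioo_abs hsmooth, self_mem_nhdsWithin] with s hs hne τ hτ
    exact ((hs _ (add_half_mul_mem_Ioo hne hτ)).1.comp τ (f := fun τ => s + s / 2 * τ)
      (by fun_prop)).contDiffWithinAt
  have hlim := (tendsto_pow_mul_iteratedDeriv_div_pow hf hmn hA hk hkn).abs
  rw [abs_zero] at hlim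
  filter_upwards [eventually_forall_mem_Ioo_abs (hlim.eventually_lt_const hε), self_mem_nhdsWithin]
    with s hs hne τ hτ
  obtain ⟨hsmall, hlow, -⟩ := hs _ (add_half_mul_mem_Ioo hne hτ)
  rw [abs_mul, abs_pow] at hsmall
  rw [congrFun (iteratedDeriv_comp_add_mul (fun t => f t / t ^ m) s (s / 2) k) τ, smul_eq_mul,
    Real.norm_eq_abs, abs_mul, abs_pow, abs_div, abs_two]
  exact le_trans (by gcongr) hsmall.le

end BlowUp

section MonicOfFn

/-- The monic real polynomial of degree `p` with lower coefficients `c 0, …, c (p - 1)`. -/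
noncomputable def monicOfFn {p : ℕ} (c : Fin p → ℝ) : ℝ[X] :=
  X ^ p + ofFn p c

variable {p q : ℕ}

theorem monic_monicOfFn (c : Fin p → ℝ) : (monicOfFn c).Monic :=
  monic_X_pow_add (ofFn_degree_lt c)

theorem natDegree_monicOfFn (c : Fin p → ℝ) : (monicOfFn c).natDegree = p := by
  refine natDegree_eq_of_degree_eq_some ?_
  rw [monicOfFn, degree_add_eq_left_of_degree_lt (by simpa using ofFn_degree_lt c), degree_X_pow]

theorem coeff_monicOfFn (c : Fin p → ℝ) (i : Fin p) : (monicOfFn c).coeff i = c i := by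
  rw [monicOfFn, coeff_add, coeff_X_pow, if_neg i.2.ne, zero_add,
    ofFn_coeff_eq_val_of_lt _ i.2]

theorem eval_monicOfFn (c : Fin p → ℝ) (x : ℝ) :
    (monicOfFn c).eval x = x ^ p + ∑ i, c i * x ^ (i : ℕ) := by
  simp [monicOfFn, ofFn_eq_sum_monomial, eval_finsetSum]

theorem monicOfFn_coeff {P : ℝ[X]} (hP : P.Monic) (hp : P.natDegree = p) :
    monicOfFn (fun i : Fin p => P.coeff i) = P := by
  ext k
  rw [monicOfFn, coeff_add, coeff_X_pow]
  rcases lt_trichotomy k p with hk | rfl | hk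
  · rw [if_neg hk.ne, zero_add, ofFn_coeff_eq_val_of_lt _ hk]
  · rw [if_pos rfl, ofFn_coeff_eq_zero_of_ge _ le_rfl, add_zero, ← hp, hP.coeff_natDegree]
  · rw [if_neg hk.ne', zero_add, ofFn_coeff_eq_zero_of_ge _ hk.le,
      coeff_eq_zero_of_natDegree_lt (hp.trans_lt hk)]

theorem contDiff_coeff_monicOfFn (k : ℕ) (n : WithTop ℕ∞) :
    ContDiff ℝ n fun c : Fin p → ℝ => (monicOfFn c).coeff k := by
  simp only [monicOfFn, coeff_add]
  exact contDiff_const.add (lcoeff ℝ k ∘ₗ ofFn p).toContinuousLinearMap.contDiff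

theorem hasFDerivAt_coeff_monicOfFn (k : ℕ) (c : Fin p → ℝ) :
    HasFDerivAt (fun c : Fin p → ℝ => (monicOfFn c).coeff k)
      (lcoeff ℝ k ∘ₗ ofFn p).toContinuousLinearMap c := by
  simp only [monicOfFn, coeff_add]
  exact (lcoeff ℝ k ∘ₗ ofFn p).toContinuousLinearMap.hasFDerivAt.const_add _

/-- Multiplication of monic polynomials of degrees `p` and `q`, in terms of lower coefficients. -/
noncomputable def mulCoeffs (u : (Fin p → ℝ) × (Fin q → ℝ)) : Fin (p + q) → ℝ :=
  fun i => (monicOfFn u.1 * monicOfFn u.2).coeff i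

theorem contDiff_mulCoeffs (n : WithTop ℕ∞) :
    ContDiff ℝ n (mulCoeffs : (Fin p → ℝ) × (Fin q → ℝ) → Fin (p + q) → ℝ) := by
  refine contDiff_pi.mpr fun i => ?_
  simp only [mulCoeffs, coeff_mul]
  exact ContDiff.sum fun x _ => ((contDiff_coeff_monicOfFn x.1 n).comp contDiff_fst).mul
    ((contDiff_coeff_monicOfFn x.2 n).comp contDiff_snd)

theorem fderiv_mulCoeffs_apply (u h : (Fin p → ℝ) × (Fin q → ℝ)) (i : Fin (p + q)) :
    fderiv ℝ mulCoeffs u h i =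
      (monicOfFn u.1 * ofFn q h.2 + ofFn p h.1 * monicOfFn u.2).coeff i := by
  have hderiv := HasFDerivAt.fun_sum (u := Finset.HasAntidiagonal.antidiagonal (i : ℕ)) fun x _ =>
    ((hasFDerivAt_coeff_monicOfFn x.1 u.1).comp u hasFDerivAt_fst).fun_mul
      ((hasFDerivAt_coeff_monicOfFn x.2 u.2).comp u hasFDerivAt_snd)
  have hpi : HasFDerivAt (fun v : (Fin p → ℝ) × (Fin q → ℝ) => mulCoeffs v i)
      (ContinuousLinearMap.proj (R := ℝ) (φ := fun _ => ℝ) i ∘L fderiv ℝ mulCoeffs u) u :=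
    hasFDerivAt_pi'.mp ((contDiff_mulCoeffs 1).differentiable one_ne_zero u).hasFDerivAt i
  simp only [mulCoeffs, coeff_mul] at hpi
  have happly := DFunLike.congr_fun (hpi.unique hderiv) h
  simp only [ContinuousLinearMap.comp_apply, ContinuousLinearMap.proj_apply] at happly
  rw [happly]
  simp only [Function.comp_apply, Finset.sum_add_distrib, add_apply, sum_apply, smul_apply,
    smul_eq_mul, ContinuousLinearMap.comp_apply, ContinuousLinearMap.coe_fst',
    ContinuousLinearMap.coe_snd', LinearMap.coe_toContinuousLinearMap', LinearMap.coe_comp,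
    lcoeff_apply, coeff_add, coeff_mul, add_right_inj]
  exact Finset.sum_congr rfl fun _ _ => mul_comm _ _

theorem injective_fderiv_mulCoeffs {u : (Fin p → ℝ) × (Fin q → ℝ)}
    (hu : IsCoprime (monicOfFn u.1) (monicOfFn u.2)) :
    Function.Injective (fderiv ℝ mulCoeffs u) := by
  have hdeg {k : ℕ} (c : Fin k → ℝ) : (monicOfFn c).degree = k := by
    rw [degree_eq_natDegree (monic_monicOfFn c).ne_zero, natDegree_monicOfFn]
  refine (injective_iff_map_eq_zero _).mpr fun h hh => ?_
  have hsum : monicOfFn u.1 * ofFn q h.2 + ofFn p h.1 * monicOfFn u.2 = 0 := by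
    have hlt : (monicOfFn u.1 * ofFn q h.2 + ofFn p h.1 * monicOfFn u.2).degree < (p + q : ℕ) := by
      refine (degree_add_le _ _).trans_lt (max_lt ?_ ?_)
      · rw [degree_mul, hdeg, Nat.cast_add]
        exact WithBot.add_lt_add_left (by simp) (ofFn_degree_lt h.2)
      · rw [degree_mul, hdeg, Nat.cast_add]
        exact WithBot.add_lt_add_right (by simp) (ofFn_degree_lt h.1)
    ext k
    rcases lt_or_ge k (p + q) with hk | hk
    · rw [coeff_zero, ← fderiv_mulCoeffs_apply u h ⟨k, hk⟩, hh, Pi.zero_apply]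
    · exact (degree_lt_iff_coeff_zero _ _).mp hlt k hk
  have hdvd : monicOfFn u.1 ∣ ofFn p h.1 :=
    hu.dvd_of_dvd_mul_right ⟨-ofFn q h.2, by linear_combination hsum⟩
  have h₁ : ofFn p h.1 = 0 :=
    eq_zero_of_dvd_of_degree_lt hdvd (by simpa [hdeg] using ofFn_degree_lt h.1)
  rw [h₁, zero_mul, add_zero] at hsum
  have h₂ : ofFn q h.2 = 0 := (mul_eq_zero.mp hsum).resolve_left (monic_monicOfFn _).ne_zero
  exact Prod.ext (injective_ofFn p (by simpa using h₁)) (injective_ofFn q (by simpa using h₂))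

theorem exists_openPartialHomeomorph_mulCoeffs {u : (Fin p → ℝ) × (Fin q → ℝ)}
    (hu : IsCoprime (monicOfFn u.1) (monicOfFn u.2)) {n : WithTop ℕ∞} (hn : n ≠ 0) :
    ∃ φ : OpenPartialHomeomorph ((Fin p → ℝ) × (Fin q → ℝ)) (Fin (p + q) → ℝ),
      ⇑φ = mulCoeffs ∧ u ∈ φ.source ∧ ContDiffAt ℝ n φ.symm (mulCoeffs u) := by
  let L : ((Fin p → ℝ) × (Fin q → ℝ)) ≃L[ℝ] (Fin (p + q) → ℝ) :=
    (LinearEquiv.ofInjectiveOfFinrankEq (fderiv ℝ mulCoeffs u).toLinearMap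
      (injective_fderiv_mulCoeffs hu) (by simp)).toContinuousLinearEquiv
  have hsmooth : ContDiffAt ℝ n mulCoeffs u := (contDiff_mulCoeffs n).contDiffAt
  have hderiv : HasFDerivAt mulCoeffs (L : _ →L[ℝ] _) u := (hsmooth.differentiableAt hn).hasFDerivAt
  exact ⟨hsmooth.toOpenPartialHomeomorph mulCoeffs hderiv hn, rfl,
    hsmooth.mem_toOpenPartialHomeomorph_source hderiv hn, hsmooth.to_localInverse hderiv hn⟩

end MonicOfFn

section CoprimeFactors

theorem forall_mem_source_of_continuous {X Y Z : Type*} [TopologicalSpace X] [PreconnectedSpace X]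
    [TopologicalSpace Y] [T2Space Y] [TopologicalSpace Z] (φ : OpenPartialHomeomorph Y Z)
    {u : X → Y} (hu : Continuous u) (hφu : Continuous fun x => φ (u x))
    (htarget : ∀ x, φ (u x) ∈ φ.target) {x₀ : X} (hx₀ : u x₀ ∈ φ.source) (x : X) :
    u x ∈ φ.source := by
  have hset : u ⁻¹' φ.source = {x | φ.symm (φ (u x)) = u x} := by
    ext x
    refine ⟨φ.left_inv, fun h => ?_⟩
    have hmem := φ.map_target (htarget x)
    rwa [mem_ofPred_eq.mp h] at hmem
  have hclosed : IsClosed {x | φ.symm (φ (u x)) = u x} :=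
    isClosed_eq (φ.continuousOn_symm.comp_continuous hφu htarget) hu
  have hclopen : IsClopen (u ⁻¹' φ.source) := ⟨hset ▸ hclosed, φ.open_source.preimage hu⟩
  exact eq_univ_iff_forall.mp (hclopen.eq_univ ⟨x₀, hx₀⟩) x

variable {p q n : ℕ}

theorem contDiffAt_of_mulCoeffs {u : ℝ → (Fin p → ℝ) × (Fin q → ℝ)} {t : ℝ} (hn : 1 ≤ n)
    (hu : ContinuousAt u t) (hcop : IsCoprime (monicOfFn (u t).1) (monicOfFn (u t).2))
    (h : ContDiffAt ℝ n (fun t => mulCoeffs (u t)) t) : ContDiffAt ℝ n u t := by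
  obtain ⟨φ, hφ, hmem, hsymm⟩ :=
    exists_openPartialHomeomorph_mulCoeffs hcop (n := n) (by norm_cast; omega)
  refine (hsymm.comp t h).congr_of_eventuallyEq ?_
  filter_upwards [hu.eventually (φ.open_source.mem_nhds hmem)] with t ht
  exact (hφ ▸ φ.left_inv ht).symm

theorem AsympConst.of_mulCoeffs {α : Type*} {F : Filter α}
    {u : α → ℝ → (Fin p → ℝ) × (Fin q → ℝ)} {v : (Fin p → ℝ) × (Fin q → ℝ)} (hn : 1 ≤ n)
    (hu : ∀ᶠ a in F, ContinuousOn (u a) (Ioo (-1) 1)) (hv : Tendsto (fun a => u a 0) F (𝓝 v))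
    (hcop : IsCoprime (monicOfFn v.1) (monicOfFn v.2))
    (h : AsympConst F n fun a t => mulCoeffs (u a t)) : AsympConst F n u := by
  obtain ⟨φ, hφ, hmem, hsymm⟩ :=
    exists_openPartialHomeomorph_mulCoeffs hcop (n := n) (by norm_cast; omega)
  have hcont : Continuous φ := hφ ▸ (contDiff_mulCoeffs 0).continuous
  rw [← hφ] at h hsymm
  have hφv : Tendsto (fun a => φ (u a 0)) F (𝓝 (φ v)) := (hcont.tendsto v).comp hv
  refine (h.comp hn hφv hsymm).congr ?_
  filter_upwards [hu, hv.eventually (φ.open_source.mem_nhds hmem),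
    h.eventually_forall_mem hn hφv (φ.open_target.mem_nhds (φ.map_source hmem))]
    with a ha hzero htarget t ht
  have : PreconnectedSpace (Ioo (-1 : ℝ) 1) := Subtype.preconnectedSpace isPreconnected_Ioo
  exact (φ.left_inv (forall_mem_source_of_continuous φ ha.domRestrict (hcont.comp ha.domRestrict)
    (fun x => htarget x x.2) (x₀ := ⟨0, zero_mem_Ioo⟩) hzero ⟨t, ht⟩)).symm

end CoprimeFactors

section RootPoly

variable {ι R K : Type*} [CommRing R] [Field K] {s : Finset ι} {k : ℕ}

/-- The monic polynomial whose roots are the `r j` for `j ∈ s`, with multiplicity. -/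
noncomputable def rootPoly (s : Finset ι) (r : ι → R) : R[X] :=
  ∏ j ∈ s, (X - C (r j))

theorem monic_rootPoly (s : Finset ι) (r : ι → R) : (rootPoly s r).Monic :=
  monic_prod_X_sub_C r s

theorem natDegree_rootPoly (s : Finset ι) (r : ι → K) : (rootPoly s r).natDegree = s.card :=
  natDegree_finsetProd_X_sub_C_eq_card s r

theorem rootPoly_filter_mul_rootPoly_filter_not (s : Finset ι) (p : ι → Prop) [DecidablePred p]
    (r : ι → R) : rootPoly {j ∈ s | p j} r * rootPoly {j ∈ s | ¬ p j} r = rootPoly s r :=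
  Finset.prod_filter_mul_prod_filter_not s p _

theorem isCoprime_rootPoly {s' : Finset ι} {r : ι → K} (h : ∀ i ∈ s, ∀ j ∈ s', r i ≠ r j) :
    IsCoprime (rootPoly s r) (rootPoly s' r) :=
  IsCoprime.prod_left fun i hi => IsCoprime.prod_right fun j hj =>
    isCoprime_X_sub_C_of_isUnit_sub (sub_ne_zero.mpr (h i hi j hj)).isUnit

theorem taylor_rootPoly (s : Finset ι) (r : ι → R) (h : R) :
    taylor h (rootPoly s r) = rootPoly s fun j => r j - h := by
  simp only [rootPoly, ← taylorAlgHom_apply, map_prod]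
  refine Finset.prod_congr rfl fun j _ => ?_
  rw [taylorAlgHom_apply, map_sub, taylor_X, taylor_C, C_sub]
  ring

theorem coeff_rootPoly (r : ι → R) (hk : k ≤ s.card) :
    (rootPoly s r).coeff k = ∑ t ∈ s.powersetCard (s.card - k), ∏ j ∈ t, -r j := by
  simpa [rootPoly, sub_eq_add_neg] using Finset.prod_X_add_C_coeff s (fun j => -r j) hk

theorem coeff_rootPoly_div (r : ι → K) (c : K) (hk : k ≤ s.card) :
    (rootPoly s fun j => r j / c).coeff k = (rootPoly s r).coeff k / c ^ (s.card - k) := by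
  rw [coeff_rootPoly _ hk, coeff_rootPoly _ hk, Finset.sum_div]
  refine Finset.sum_congr rfl fun t ht => ?_
  simp only [← neg_div]
  rw [Finset.prod_div_distrib, Finset.prod_const, (Finset.mem_powersetCard.mp ht).2]

theorem coeff_card_sub_one_rootPoly (r : ι → R) (hs : s.Nonempty) :
    (rootPoly s r).coeff (s.card - 1) = -∑ j ∈ s, r j :=
  prod_X_sub_C_coeff_card_pred s r hs.card_pos

theorem two_mul_coeff_rootPoly_of_card_eq_add_two (r : ι → R) (hs : s.card = k + 2) :
    2 * (rootPoly s r).coeff k = (∑ j ∈ s, r j) ^ 2 - ∑ j ∈ s, r j ^ 2 := by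
  induction s using Finset.cons_induction generalizing k with
  | empty => simp at hs
  | cons i s hi ih =>
    rw [Finset.card_cons, add_left_inj] at hs
    have hsum : (rootPoly s r).coeff k = -∑ j ∈ s, r j := by
      rw [← coeff_card_sub_one_rootPoly r (Finset.card_pos.mp (by omega)), hs, Nat.add_sub_cancel]
    rw [rootPoly, Finset.prod_cons, ← rootPoly, Finset.sum_cons, Finset.sum_cons, sub_mul,
      coeff_sub, coeff_C_mul, hsum]
    cases k with
    | zero =>
      obtain ⟨j, rfl⟩ := Finset.card_eq_one.mp hs
      simp
      ring
    | succ k =>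
      rw [coeff_X_mul]
      linear_combination ih hs

theorem exists_forall_abs_coeff_rootPoly_le (s : Finset ι) (B : ℝ) :
    ∃ C, ∀ r : ι → ℝ, (∀ j ∈ s, |r j| ≤ B) → ∀ k, |(rootPoly s r).coeff k| ≤ C := by
  refine ⟨max B 1 ^ s.card * s.card.choose (s.card / 2), fun r hr k => ?_⟩
  have hsplits : (rootPoly s r).Splits := Splits.prod fun j _ => Splits.X_sub_C (r j)
  have hroots : ∀ z ∈ (rootPoly s r).roots, ‖z‖ ≤ B := by
    intro z hz
    obtain ⟨j, hj, hz⟩ : ∃ j ∈ s, z - r j = 0 := by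
      simpa [rootPoly, IsRoot, eval_prod, Finset.prod_eq_zero_iff] using (mem_roots'.mp hz).2
    rw [sub_eq_zero.mp hz]
    exact hr j hj
  simpa using coeff_bdd_of_roots_le (RingHom.id ℝ) (monic_rootPoly s r) (by simpa using hsplits)
    (natDegree_rootPoly s r).le (by simpa using hroots) k

theorem tendsto_coeff_rootPoly {α : Type*} {F : Filter α} {r : α → ι → ℝ} {ρ : ι → ℝ}
    (h : ∀ j ∈ s, Tendsto (r · j) F (𝓝 (ρ j))) (hk : k ≤ s.card) :
    Tendsto (fun a => (rootPoly s (r a)).coeff k) F (𝓝 ((rootPoly s ρ).coeff k)) := by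
  simp only [coeff_rootPoly _ hk]
  exact tendsto_finsetSum _ fun t ht => tendsto_finsetProd _ fun j hj =>
    (h j ((Finset.mem_powersetCard.mp ht).1 hj)).neg

/-- The lower coefficients of `rootPoly s r`, a point of `ℝ ^ #s`. -/
noncomputable def rootCoeffs (s : Finset ι) (r : ι → R) : Fin s.card → R :=
  fun k => (rootPoly s r).coeff k

theorem monicOfFn_rootCoeffs (s : Finset ι) (r : ι → ℝ) :
    monicOfFn (rootCoeffs s r) = rootPoly s r :=
  monicOfFn_coeff (monic_rootPoly s r) (natDegree_rootPoly s r)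

theorem mulCoeffs_rootCoeffs_filter (s : Finset ι) (p : ι → Prop) [DecidablePred p] (r : ι → ℝ)
    (k : Fin (Finset.card {j ∈ s | p j} + Finset.card {j ∈ s | ¬ p j})) :
    mulCoeffs (rootCoeffs {j ∈ s | p j} r, rootCoeffs {j ∈ s | ¬ p j} r) k =
      (rootPoly s r).coeff k := by
  rw [mulCoeffs, monicOfFn_rootCoeffs, monicOfFn_rootCoeffs,
    rootPoly_filter_mul_rootPoly_filter_not]

theorem tendsto_rootCoeffs {α : Type*} {F : Filter α} {r : α → ι → ℝ} {ρ : ι → ℝ}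
    (h : ∀ j ∈ s, Tendsto (r · j) F (𝓝 (ρ j))) :
    Tendsto (fun a => rootCoeffs s (r a)) F (𝓝 (rootCoeffs s ρ)) :=
  tendsto_pi_nhds.mpr fun k => tendsto_coeff_rootPoly h k.2.le

theorem tendsto_rootCoeffs_filter {α : Type*} {F : Filter α} {r : α → ι → ℝ} {ρ : ι → ℝ}
    (p : ι → Prop) [DecidablePred p] (h : ∀ j ∈ s, Tendsto (r · j) F (𝓝 (ρ j))) :
    Tendsto (fun a => (rootCoeffs {j ∈ s | p j} (r a), rootCoeffs {j ∈ s | ¬ p j} (r a))) F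
      (𝓝 (rootCoeffs {j ∈ s | p j} ρ, rootCoeffs {j ∈ s | ¬ p j} ρ)) :=
  (tendsto_rootCoeffs fun j hj => h j (Finset.mem_filter.mp hj).1).prodMk_nhds
    (tendsto_rootCoeffs fun j hj => h j (Finset.mem_filter.mp hj).1)

theorem isCoprime_monicOfFn_rootCoeffs_filter {p : ι → Prop} [DecidablePred p] {ρ : ι → ℝ}
    (hp : ∀ i ∈ s, ∀ j ∈ s, p i → ¬ p j → ρ i ≠ ρ j) :
    IsCoprime (monicOfFn (rootCoeffs {j ∈ s | p j} ρ))
      (monicOfFn (rootCoeffs {j ∈ s | ¬ p j} ρ)) := by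
  rw [monicOfFn_rootCoeffs, monicOfFn_rootCoeffs]
  refine isCoprime_rootPoly fun i hi j hj => ?_
  obtain ⟨hi, hpi⟩ := Finset.mem_filter.mp hi
  obtain ⟨hj, hpj⟩ := Finset.mem_filter.mp hj
  exact hp i hi j hj hpi hpj

theorem contDiff_coeff_taylor_monicOfFn {p : ℕ} (k : ℕ) (n : WithTop ℕ∞) :
    ContDiff ℝ n fun x : ℝ × (Fin p → ℝ) => (taylor x.1 (monicOfFn x.2)).coeff k := by
  have hsum (x : ℝ × (Fin p → ℝ)) : (taylor x.1 (monicOfFn x.2)).coeff k =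
      ∑ i ∈ Finset.range (p + 1),
        ((i + k).choose k : ℝ) * (monicOfFn x.2).coeff (i + k) * x.1 ^ i := by
    have hdeg : (hasseDeriv k (monicOfFn x.2)).natDegree < p + 1 := by
      have := natDegree_hasseDeriv_le (monicOfFn x.2) k
      rw [natDegree_monicOfFn] at this
      omega
    rw [taylor_coeff, eval_eq_sum_range' hdeg]
    simp only [hasseDeriv_coeff]
  simp only [hsum]
  exact ContDiff.sum fun i _ => (contDiff_const.mul
    ((contDiff_coeff_monicOfFn (i + k) n).comp contDiff_snd)).mul (contDiff_fst.pow i)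

end RootPoly

section RootFamily

variable {α ι : Type*} {F F' : Filter α} {s : Finset ι} {l : α → ι → ℝ → ℝ} {ρ : ι → ℝ}

theorem deriv_comp_mul_div (f : ℝ → ℝ) {c : ℝ} (hc : c ≠ 0) :
    deriv (fun τ => f (c * τ) / c) 0 = deriv f 0 := by
  rw [deriv_div_const, deriv_comp_mul_left, mul_zero, smul_eq_mul, mul_div_cancel_left₀ _ hc]

theorem exists_tendsto_of_eventually_abs_le {F : Ultrafilter α} {x : α → ℝ} {B : ℝ}
    (hx : ∀ᶠ a in F, |x a| ≤ B) : ∃ y, Tendsto x F (𝓝 y) := by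
  obtain ⟨y, -, hy⟩ := (isCompact_Icc (a := -B) (b := B)).ultrafilter_le_nhds (F.map x)
    (le_principal_iff.mpr (hx.mono fun _ => abs_le.mp))
  exact ⟨y, hy⟩

/-- A family of differentiable curves of roots on `(-1, 1)`, indexed by `s`, such that the
coefficients of the polynomials with these roots are asymptotically constant of order `#s`. -/
structure RootFamily (F : Filter α) (s : Finset ι) (l : α → ι → ℝ → ℝ) : Prop where
  differentiableOn : ∀ᶠ a in F, ∀ j ∈ s, DifferentiableOn ℝ (l a j) (Ioo (-1) 1)
  asympConst_coeff :
    ∀ k < s.card, AsympConst F s.card fun a t => (rootPoly s (l a · t)).coeff k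

namespace RootFamily

theorem mono_filter (h : RootFamily F s l) (hF : F' ≤ F) : RootFamily F' s l :=
  ⟨h.differentiableOn.filter_mono hF, fun k hk => (h.asympConst_coeff k hk).mono_filter hF⟩

theorem asympConst_rootCoeffs (h : RootFamily F s l) :
    AsympConst F s.card fun a t => rootCoeffs s (l a · t) :=
  AsympConst.pi fun k => h.asympConst_coeff k k.2

theorem eventually_differentiableAt (h : RootFamily F s l) :
    ∀ᶠ a in F, ∀ j ∈ s, DifferentiableAt ℝ (l a j) 0 :=
  h.differentiableOn.mono fun _ ha j hj =>
    (ha j hj).differentiableAt (isOpen_Ioo.mem_nhds zero_mem_Ioo)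

theorem asympConst_rootCoeffs_filter (h : RootFamily F s l)
    (hρ : ∀ j ∈ s, Tendsto (l · j 0) F (𝓝 (ρ j))) (hs : s.Nonempty) {p : ι → Prop}
    [DecidablePred p] (hp : ∀ i ∈ s, ∀ j ∈ s, p i → ¬ p j → ρ i ≠ ρ j) :
    AsympConst F s.card fun a t =>
      (rootCoeffs {j ∈ s | p j} (l a · t), rootCoeffs {j ∈ s | ¬ p j} (l a · t)) := by
  have hcont : ∀ᶠ a in F, ContinuousOn (fun t =>
      (rootCoeffs {j ∈ s | p j} (l a · t), rootCoeffs {j ∈ s | ¬ p j} (l a · t))) (Ioo (-1) 1) :=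
    h.differentiableOn.mono fun a ha t ht =>
      tendsto_rootCoeffs_filter p fun j hj => (ha j hj).continuousOn t ht
  have hmul : AsympConst F s.card fun a t => mulCoeffs
      (rootCoeffs {j ∈ s | p j} (l a · t), rootCoeffs {j ∈ s | ¬ p j} (l a · t)) := by
    refine AsympConst.pi fun i => ?_
    simp only [mulCoeffs_rootCoeffs_filter]
    exact h.asympConst_coeff i (i.2.trans_eq (Finset.card_filter_add_card_filter_not _))
  exact hmul.of_mulCoeffs hs.card_pos hcont (tendsto_rootCoeffs_filter p hρ)
    (isCoprime_monicOfFn_rootCoeffs_filter hp)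

theorem filter (h : RootFamily F s l) (hρ : ∀ j ∈ s, Tendsto (l · j 0) F (𝓝 (ρ j)))
    {p : ι → Prop} [DecidablePred p] (hp : ∀ i ∈ s, ∀ j ∈ s, p i → ¬ p j → ρ i ≠ ρ j) :
    RootFamily F {j ∈ s | p j} l := by
  refine ⟨h.differentiableOn.mono fun a ha j hj => ha j (Finset.mem_filter.mp hj).1,
    fun k hk => ?_⟩
  have hs : s.Nonempty := (Finset.card_pos.mp (k.zero_le.trans_lt hk)).mono (s.filter_subset p)
  exact ((h.asympConst_rootCoeffs_filter hρ hs hp).comp hs.card_pos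
    (tendsto_rootCoeffs_filter p hρ) (Φ := fun u => u.1 ⟨k, hk⟩)
    (by fun_prop)).mono_order (s.card_filter_le p)

theorem asympConst_mean (h : RootFamily F s l) (hs : s.Nonempty)
    (hρ : ∀ j ∈ s, Tendsto (l · j 0) F (𝓝 (ρ j))) :
    AsympConst F s.card fun a t => (∑ i ∈ s, l a i t) / s.card := by
  have hpos := hs.card_pos
  have hcoeff (r : ι → ℝ) : (∑ i ∈ s, r i) / s.card =
      -(rootPoly s r).coeff (s.card - 1) / s.card := by
    rw [coeff_card_sub_one_rootPoly r hs, neg_neg]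
  simp only [hcoeff]
  exact (h.asympConst_coeff (s.card - 1) (by omega)).comp hpos
    (tendsto_coeff_rootPoly hρ (by omega)) (Φ := fun c => -c / s.card) (by fun_prop)

theorem center (h : RootFamily F s l) (hs : s.Nonempty)
    (hρ : ∀ j ∈ s, Tendsto (l · j 0) F (𝓝 (ρ j))) :
    RootFamily F s fun a j t => l a j t - (∑ i ∈ s, l a i t) / s.card := by
  have hpos := hs.card_pos
  refine ⟨h.differentiableOn.mono fun a ha j hj =>
    (ha j hj).sub ((DifferentiableOn.fun_sum ha).div_const _), fun k _ => ?_⟩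
  have hcoeff (r : ι → ℝ) : (rootPoly s fun j => r j - (∑ i ∈ s, r i) / s.card).coeff k =
      (taylor (-rootCoeffs s r ⟨s.card - 1, by omega⟩ / s.card)
        (monicOfFn (rootCoeffs s r))).coeff k := by
    rw [monicOfFn_rootCoeffs, taylor_rootPoly, rootCoeffs, coeff_card_sub_one_rootPoly r hs,
      neg_neg]
  simp only [hcoeff]
  exact h.asympConst_rootCoeffs.comp hpos (tendsto_rootCoeffs hρ)
    (Φ := fun c => (taylor (-c ⟨s.card - 1, by omega⟩ / s.card) (monicOfFn c)).coeff k)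
    ((contDiff_coeff_taylor_monicOfFn k _).comp
      (f := fun c : Fin s.card → ℝ => (-c ⟨s.card - 1, by omega⟩ / s.card, c))
      (by fun_prop)).contDiffAt

theorem eventually_sum_sq_le (h : RootFamily F s l) (hsum : ∀ a t, ∑ j ∈ s, l a j t = 0) {η : ℝ}
    (hη : 0 < η) :
    ∀ᶠ a in F, ∀ t ∈ Ioo (-1) 1,
      ∑ j ∈ s, l a j t ^ 2 ≤ 2 * ∑ j ∈ s, l a j 0 ^ 2 + η * t ^ 2 := by
  obtain hs | hs | ⟨k, hs⟩ : s.card = 0 ∨ s.card = 1 ∨ ∃ k, s.card = k + 2 := by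
    rcases s.card with _ | _ | k <;> simp
  · rw [Finset.card_eq_zero.mp hs]
    exact .of_forall fun a t _ => by simp only [Finset.sum_empty]; positivity
  · obtain ⟨j, rfl⟩ := Finset.card_eq_one.mp hs
    simp only [Finset.sum_singleton] at hsum ⊢
    exact .of_forall fun a t _ => by rw [hsum, hsum]; nlinarith [sq_nonneg t]
  · have hcoeff (a) : (fun t => ∑ j ∈ s, l a j t ^ 2) =
        fun t => -2 * (rootPoly s (l a · t)).coeff k := by
      ext t
      have := two_mul_coeff_rootPoly_of_card_eq_add_two (l a · t) hs
      rw [hsum] at this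
      linarith
    have hconst := (h.asympConst_coeff k (by omega)).mono_order (show 2 ≤ s.card by omega)
    filter_upwards [hconst.1, hconst.2 2 (by norm_num) le_rfl (η / 2) (half_pos hη)] with a ha hη t
    refine le_two_mul_add_of_nonneg_of_abs_iteratedDeriv_le (f := fun t => ∑ j ∈ s, l a j t ^ 2) ?_
      (fun t _ => Finset.sum_nonneg fun j _ => sq_nonneg _) (fun t ht => ?_)
    · rw [hcoeff]
      exact contDiffOn_const.mul ha
    · rw [hcoeff, iteratedDeriv_const_mul_field, abs_mul, abs_neg, abs_two]
      linarith [hη t ht, Real.norm_eq_abs (iteratedDeriv 2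
        (fun t => (rootPoly s (l a · t)).coeff k) t)]

theorem tendsto_deriv_of_eventually_eq_zero (h : RootFamily F s l)
    (hsum : ∀ a t, ∑ j ∈ s, l a j t = 0) (hzero : ∀ᶠ a in F, ∀ j ∈ s, l a j 0 = 0) :
    ∀ j ∈ s, Tendsto (fun a => deriv (l a j) 0) F (𝓝 0) := by
  intro j hj
  rw [NormedAddGroup.tendsto_nhds_zero]
  intro ε hε
  filter_upwards [h.eventually_sum_sq_le hsum (sq_pos_of_pos (half_pos hε)), hzero]
    with a hsq hzero
  have hsq0 : ∑ j ∈ s, l a j 0 ^ 2 = 0 :=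
    Finset.sum_eq_zero fun j hj => by rw [hzero j hj, zero_pow two_ne_zero]
  refine (norm_deriv_le_of_lip' (half_pos hε).le ?_).trans_lt (half_lt_self hε)
  filter_upwards [isOpen_Ioo.mem_nhds zero_mem_Ioo] with t ht
  rw [hzero j hj, sub_zero, sub_zero, Real.norm_eq_abs, Real.norm_eq_abs]
  refine abs_le_of_sq_le_sq ?_ (by positivity)
  calc l a j t ^ 2 ≤ ∑ j ∈ s, l a j t ^ 2 :=
        Finset.single_le_sum (f := fun j => l a j t ^ 2) (fun _ _ => sq_nonneg _) hj
    _ ≤ 2 * ∑ j ∈ s, l a j 0 ^ 2 + (ε / 2) ^ 2 * t ^ 2 := hsq t ht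
    _ = (ε / 2 * |t|) ^ 2 := by rw [hsq0, mul_pow, sq_abs]; ring

theorem eventually_abs_rescale_le (h : RootFamily F s l) (hsum : ∀ a t, ∑ j ∈ s, l a j t = 0)
    {σ : α → ℝ} (hσ : Tendsto σ F (𝓝 0)) (hpos : ∀ᶠ a in F, 0 < σ a)
    (hsq : ∀ᶠ a in F, ∑ j ∈ s, l a j 0 ^ 2 = σ a ^ 2) (T : ℝ) :
    ∀ᶠ a in F, ∀ τ ∈ Ioo (-T) T, ∀ j ∈ s, |l a j (σ a * τ) / σ a| ≤ 2 := by
  filter_upwards [hpos, hsq, eventually_forall_mul_mem_Ioo hpos hσ T,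
    h.eventually_sum_sq_le hsum (η := (T ^ 2 + 1)⁻¹) (by positivity)]
    with a hpos hsq hmem hle τ hτ j hj
  have hτT : (T ^ 2 + 1)⁻¹ * τ ^ 2 ≤ 1 := by
    rw [inv_mul_le_one₀ (by positivity)]
    nlinarith [hτ.1, hτ.2]
  rw [abs_div, abs_of_pos hpos, div_le_iff₀ hpos]
  refine abs_le_of_sq_le_sq ?_ (by positivity)
  calc l a j (σ a * τ) ^ 2 ≤ ∑ j ∈ s, l a j (σ a * τ) ^ 2 :=
        Finset.single_le_sum (f := fun j => l a j (σ a * τ) ^ 2) (fun _ _ => sq_nonneg _) hj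
    _ ≤ 2 * σ a ^ 2 + (T ^ 2 + 1)⁻¹ * (σ a * τ) ^ 2 := hsq ▸ hle _ (hmem τ hτ)
    _ = (2 + (T ^ 2 + 1)⁻¹ * τ ^ 2) * σ a ^ 2 := by ring
    _ ≤ (2 + 2) * σ a ^ 2 := by gcongr; linarith
    _ = (2 * σ a) ^ 2 := by ring

theorem rescale (h : RootFamily F s l) (hsum : ∀ a t, ∑ j ∈ s, l a j t = 0)
    {σ : α → ℝ} (hσ : Tendsto σ F (𝓝 0)) (hpos : ∀ᶠ a in F, 0 < σ a)
    (hsq : ∀ᶠ a in F, ∑ j ∈ s, l a j 0 ^ 2 = σ a ^ 2) :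
    RootFamily F s fun a j τ => l a j (σ a * τ) / σ a := by
  refine ⟨?_, fun k hk => ?_⟩
  · filter_upwards [h.differentiableOn, eventually_forall_mul_mem_Ioo hpos hσ 1] with a ha hmem j hj
    exact ((ha j hj).comp (by fun_prop) hmem).div_const _
  · simp only [coeff_rootPoly_div _ _ hk.le]
    obtain ⟨C, hC⟩ := exists_forall_abs_coeff_rootPoly_le s 2
    refine (h.asympConst_coeff k hk).rescale hpos hσ (Nat.sub_le _ _) (C := C) fun T => ?_
    filter_upwards [h.eventually_abs_rescale_le hsum hσ hpos hsq T] with a ha τ hτ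
    rw [← coeff_rootPoly_div (fun j => l a j (σ a * τ)) _ hk.le]
    exact hC _ (ha τ hτ) k

theorem exists_ne_of_tendsto_rescale [F.NeBot] (hsum : ∀ a t, ∑ j ∈ s, l a j t = 0) {σ : α → ℝ}
    (hpos : ∀ᶠ a in F, 0 < σ a) (hsq : ∀ᶠ a in F, ∑ j ∈ s, l a j 0 ^ 2 = σ a ^ 2)
    (hρ : ∀ j ∈ s, Tendsto (fun a => l a j 0 / σ a) F (𝓝 (ρ j))) (v : ℝ) :
    ∃ i ∈ s, ρ i ≠ v := by
  by_contra! hconst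
  have hsum_lim : ∑ j ∈ s, ρ j = 0 := by
    refine tendsto_nhds_unique (tendsto_finsetSum s hρ) ?_
    simp only [← Finset.sum_div, hsum, zero_div, tendsto_const_nhds]
  have hsq_lim : ∑ j ∈ s, ρ j ^ 2 = 1 := by
    refine tendsto_nhds_unique (tendsto_finsetSum s fun j hj => (hρ j hj).pow 2)
      (tendsto_const_nhds.congr' ?_)
    filter_upwards [hpos, hsq] with a hpos hsq
    simp only [div_pow, ← Finset.sum_div]
    rw [hsq, div_self (by positivity)]
  rw [Finset.sum_congr rfl hconst, Finset.sum_const, nsmul_eq_mul] at hsum_lim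
  rw [Finset.sum_congr rfl fun j hj => by rw [hconst j hj], Finset.sum_const,
    nsmul_eq_mul] at hsq_lim
  have : s.card * v ^ 2 = 0 := by rw [sq, ← mul_assoc, hsum_lim, zero_mul]
  linarith

theorem tendsto_deriv_of_sum_eq_zero {F : Ultrafilter α} (h : RootFamily F s l)
    (hsum : ∀ a t, ∑ j ∈ s, l a j t = 0) (hlim : ∀ j ∈ s, Tendsto (l · j 0) F (𝓝 0))
    (hsplit : ∀ (l : α → ι → ℝ → ℝ) (ρ : ι → ℝ), RootFamily F s l →
      (∀ j ∈ s, Tendsto (l · j 0) F (𝓝 (ρ j))) → (∀ v, ∃ i ∈ s, ρ i ≠ v) →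
        ∀ j ∈ s, Tendsto (fun a => deriv (l a j) 0) F (𝓝 0)) :
    ∀ j ∈ s, Tendsto (fun a => deriv (l a j) 0) F (𝓝 0) := by
  rcases F.em fun a => ∀ j ∈ s, l a j 0 = 0 with hzero | hne
  · exact h.tendsto_deriv_of_eventually_eq_zero hsum hzero
  let σ (a : α) : ℝ := √(∑ j ∈ s, l a j 0 ^ 2)
  have hpos : ∀ᶠ a in F, 0 < σ a := hne.mono fun a ha => by
    push Not at ha
    obtain ⟨j, hj, hja⟩ := ha
    exact Real.sqrt_pos.mpr (Finset.sum_pos' (fun _ _ => sq_nonneg _) ⟨j, hj, by positivity⟩)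
  have hsq : ∀ᶠ a in F, ∑ j ∈ s, l a j 0 ^ 2 = σ a ^ 2 :=
    .of_forall fun a => (Real.sq_sqrt (Finset.sum_nonneg fun _ _ => sq_nonneg _)).symm
  have hσ : Tendsto σ F (𝓝 0) := by
    simpa using (tendsto_finsetSum s fun j hj => (hlim j hj).pow 2).sqrt
  have hbounded : ∀ j, ∃ y, j ∈ s → Tendsto (fun a => l a j (σ a * 0) / σ a) F (𝓝 y) := by
    intro j
    by_cases hj : j ∈ s
    · obtain ⟨y, hy⟩ := exists_tendsto_of_eventually_abs_le
        ((h.eventually_abs_rescale_le hsum hσ hpos hsq 1).mono fun a ha => ha 0 zero_mem_Ioo j hj)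
      exact ⟨y, fun _ => hy⟩
    · exact ⟨0, fun h => absurd h hj⟩
  choose ρ hρ using hbounded
  have hne := exists_ne_of_tendsto_rescale hsum hpos hsq (ρ := ρ) (by simpa using hρ)
  refine fun j hj => (hsplit _ ρ (h.rescale hsum hσ hpos hsq) hρ hne j hj).congr' ?_
  exact hpos.mono fun a ha => deriv_comp_mul_div (l a j) ha.ne'

theorem tendsto_deriv_of_tendsto_const {F : Ultrafilter α} (h : RootFamily F s l) {v : ℝ}
    (hv : ∀ j ∈ s, Tendsto (l · j 0) F (𝓝 v))
    (hsplit : ∀ (l : α → ι → ℝ → ℝ) (ρ : ι → ℝ), RootFamily F s l →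
      (∀ j ∈ s, Tendsto (l · j 0) F (𝓝 (ρ j))) → (∀ v, ∃ i ∈ s, ρ i ≠ v) →
        ∀ j ∈ s, Tendsto (fun a => deriv (l a j) 0) F (𝓝 0)) :
    ∀ j ∈ s, Tendsto (fun a => deriv (l a j) 0) F (𝓝 0) := by
  intro j hj
  have hs : s.Nonempty := ⟨j, hj⟩
  have hcard : (s.card : ℝ) ≠ 0 := by exact_mod_cast hs.card_ne_zero
  have hmean : Tendsto (fun a => (∑ i ∈ s, l a i 0) / s.card) F (𝓝 v) := by
    simpa [hcard] using (tendsto_finsetSum s hv).div_const (s.card : ℝ)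
  have hcenter := (h.center hs hv).tendsto_deriv_of_sum_eq_zero
    (fun a t => by rw [Finset.sum_sub_distrib, Finset.sum_const, nsmul_eq_mul,
      mul_div_cancel₀ _ hcard, sub_self])
    (fun i hi => by simpa using (hv i hi).sub hmean) hsplit j hj
  have hadd := hcenter.add ((h.asympConst_mean hs hv).tendsto_deriv hs.card_pos)
  rw [add_zero] at hadd
  refine hadd.congr' (h.eventually_differentiableAt.mono fun a ha => ?_)
  have hsum : DifferentiableAt ℝ (fun t => (∑ i ∈ s, l a i t) / s.card) 0 :=
    (DifferentiableAt.fun_sum ha).div_const _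
  rw [deriv_fun_sub (ha j hj) hsum, sub_add_cancel]

theorem tendsto_deriv_of_ultrafilter {F : Ultrafilter α} (h : RootFamily F s l)
    (hρ : ∀ j ∈ s, Tendsto (l · j 0) F (𝓝 (ρ j))) :
    ∀ j ∈ s, Tendsto (fun a => deriv (l a j) 0) F (𝓝 0) := by
  induction s using Finset.strongInduction generalizing l ρ with
  | H s ih =>
    have hsplit (l : α → ι → ℝ → ℝ) (ρ : ι → ℝ) (h : RootFamily F s l)
        (hρ : ∀ j ∈ s, Tendsto (l · j 0) F (𝓝 (ρ j))) (hne : ∀ v, ∃ i ∈ s, ρ i ≠ v) :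
        ∀ j ∈ s, Tendsto (fun a => deriv (l a j) 0) F (𝓝 0) := fun j hj =>
      ih {i ∈ s | ρ i = ρ j} (Finset.filter_ssubset.mpr (hne (ρ j)))
        (h.filter hρ fun i _ k _ hi hk hik => hk (hik ▸ hi))
        (fun i hi => hρ i (Finset.mem_filter.mp hi).1) j (Finset.mem_filter.mpr ⟨hj, rfl⟩)
    by_cases hconst : ∃ v, ∀ i ∈ s, ρ i = v
    · obtain ⟨v, hv⟩ := hconst
      exact h.tendsto_deriv_of_tendsto_const (fun j hj => hv j hj ▸ hρ j hj) hsplit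
    · push Not at hconst
      exact hsplit l ρ h hρ hconst

theorem tendsto_deriv (h : RootFamily F s l) (hρ : ∀ j ∈ s, Tendsto (l · j 0) F (𝓝 (ρ j)))
    {j : ι} (hj : j ∈ s) : Tendsto (fun a => deriv (l a j) 0) F (𝓝 0) :=
  (tendsto_iff_ultrafilter _ _ _).mpr fun _ hF =>
    (h.mono_filter hF).tendsto_deriv_of_ultrafilter (fun i hi => (hρ i hi).mono_left hF) j hj

end RootFamily

end RootFamily

section RootCurves

variable {ι : Type*} {s : Finset ι} {l : ι → ℝ → ℝ} {t₀ : ℝ}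

theorem contDiffAt_rootCoeffs_filter
    (hcoeff : ∀ k < s.card, ContDiffAt ℝ s.card (fun t => (rootPoly s (l · t)).coeff k) t₀)
    (hl : ∀ j ∈ s, ContinuousAt (l j) t₀) (hs : s.Nonempty) {p : ι → Prop} [DecidablePred p]
    (hp : ∀ i ∈ s, ∀ j ∈ s, p i → ¬ p j → l i t₀ ≠ l j t₀) :
    ContDiffAt ℝ s.card (fun t => rootCoeffs {j ∈ s | p j} (l · t)) t₀ := by
  refine (contDiffAt_of_mulCoeffs hs.card_pos (tendsto_rootCoeffs_filter p hl)
    (isCoprime_monicOfFn_rootCoeffs_filter hp) (contDiffAt_pi.mpr fun i => ?_)).fst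
  simp only [mulCoeffs_rootCoeffs_filter]
  exact hcoeff i (i.2.trans_eq (Finset.card_filter_add_card_filter_not _))

theorem contDiffAt_coeff_rootPoly_translate {n : ℕ}
    (hcoeff : ContDiffAt ℝ n (fun t => rootCoeffs s (l · t)) t₀) (c : ℝ) (k : ℕ) :
    ContDiffAt ℝ n (fun t => (rootPoly s fun j => l j (t₀ + t) - c).coeff k) 0 := by
  have htaylor (t : ℝ) : (rootPoly s fun j => l j (t₀ + t) - c).coeff k =
      (taylor c (monicOfFn (rootCoeffs s (l · (t₀ + t))))).coeff k := by
    rw [monicOfFn_rootCoeffs, taylor_rootPoly]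
  simp only [htaylor]
  have hshift : ContDiffAt ℝ n (fun t => rootCoeffs s (l · (t₀ + t))) 0 :=
    ContDiffAt.comp (g := fun t => rootCoeffs s (l · t)) (f := fun t => t₀ + t) 0
      (by simpa using hcoeff) (by fun_prop)
  exact ((contDiff_coeff_taylor_monicOfFn k n).contDiffAt).comp 0
    (f := fun t => (c, rootCoeffs s (l · (t₀ + t)))) (contDiffAt_const.prodMk hshift)

theorem tendsto_div_of_eq_zero {f : ℝ → ℝ} (hf : DifferentiableAt ℝ f 0) (h0 : f 0 = 0) :
    Tendsto (fun t => f t / t) (𝓝[≠] 0) (𝓝 (deriv f 0)) := by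
  simpa [h0, inv_mul_eq_div] using hasDerivAt_iff_tendsto_slope_zero.mp hf.hasDerivAt

theorem rootFamily_comp_add_mul_div
    (hcoeff : ∀ k < s.card, ContDiffAt ℝ s.card (fun t => (rootPoly s (l · t)).coeff k) 0)
    (hl : ∀ j ∈ s, ∀ᶠ t in 𝓝 0, DifferentiableAt ℝ (l j) t) (h0 : ∀ j ∈ s, l j 0 = 0) :
    RootFamily (𝓝[≠] 0) s fun a j τ => l j (a + a / 2 * τ) / (a + a / 2 * τ) := by
  refine ⟨?_, fun k hk => ?_⟩
  · filter_upwards [eventually_forall_mem_Ioo_abs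
      (nhdsWithin_le_nhds ((Filter.eventually_all_finset s).mpr hl)), self_mem_nhdsWithin]
      with a ha hne j hj τ hτ
    obtain ⟨hdiff, hlow, -⟩ := ha _ (add_half_mul_mem_Ioo hne hτ)
    have hne' : a + a / 2 * τ ≠ 0 := abs_pos.mp ((half_pos (abs_pos.mpr hne)).trans_le hlow)
    have hlin : DifferentiableAt ℝ (fun τ => a + a / 2 * τ) τ := by fun_prop
    exact (((hdiff j hj).comp τ hlin).fun_div hlin hne').differentiableWithinAt
  · simp only [coeff_rootPoly_div _ _ hk.le]
    refine asympConst_comp_add_mul_div_pow (hcoeff k hk) (Nat.sub_le _ _)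
      (A := (rootPoly s fun j => deriv (l j) 0).coeff k) ?_
    simp only [← coeff_rootPoly_div _ _ hk.le]
    exact tendsto_coeff_rootPoly
      (fun j hj => tendsto_div_of_eq_zero (hl j hj).self_of_nhds (h0 j hj)) hk.le

theorem deriv_comp_add_mul_div {f : ℝ → ℝ} {a : ℝ} (ha : a ≠ 0) (hf : DifferentiableAt ℝ f a) :
    deriv (fun τ => f (a + a / 2 * τ) / (a + a / 2 * τ)) 0 = (deriv f a - f a / a) / 2 := by
  have hlin : HasDerivAt (fun τ => a + a / 2 * τ) (a / 2) 0 := by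
    simpa using ((hasDerivAt_id (0 : ℝ)).const_mul (a / 2)).const_add a
  have hf' : HasDerivAt f (deriv f a) (a + a / 2 * 0) := by simpa using hf.hasDerivAt
  refine ((hf'.comp 0 hlin).fun_div hlin (by simpa using ha)).deriv.trans ?_
  simp only [Function.comp_apply, mul_zero, add_zero]
  field_simp

theorem continuousAt_deriv_of_forall_eq_zero
    (hcoeff : ∀ k < s.card, ContDiffAt ℝ s.card (fun t => (rootPoly s (l · t)).coeff k) 0)
    (hl : ∀ j ∈ s, ∀ᶠ t in 𝓝 0, DifferentiableAt ℝ (l j) t) (h0 : ∀ j ∈ s, l j 0 = 0)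
    {j : ι} (hj : j ∈ s) : ContinuousAt (deriv (l j)) 0 := by
  have hslope (i) (hi : i ∈ s) : Tendsto (fun t => l i t / t) (𝓝[≠] 0) (𝓝 (deriv (l i) 0)) :=
    tendsto_div_of_eq_zero (hl i hi).self_of_nhds (h0 i hi)
  have hblowup := (rootFamily_comp_add_mul_div hcoeff hl h0).tendsto_deriv
    (ρ := fun i => deriv (l i) 0) (by simpa using hslope) hj
  have hlim := (hblowup.const_mul 2).add (hslope j hj)
  rw [mul_zero, zero_add] at hlim
  refine continuousAt_iff_punctured_nhds.mpr (hlim.congr' ?_)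
  filter_upwards [nhdsWithin_le_nhds (hl j hj), self_mem_nhdsWithin] with t hdiff hne
  rw [deriv_comp_add_mul_div hne hdiff]
  ring

theorem continuousAt_deriv_of_contDiffAt_coeff
    (hcoeff : ∀ k < s.card, ContDiffAt ℝ s.card (fun t => (rootPoly s (l · t)).coeff k) t₀)
    (hl : ∀ j ∈ s, ∀ᶠ t in 𝓝 t₀, DifferentiableAt ℝ (l j) t) {j : ι} (hj : j ∈ s) :
    ContinuousAt (deriv (l j)) t₀ := by
  let S : Finset ι := {i ∈ s | l i t₀ = l j t₀}
  have hcoeffS : ContDiffAt ℝ S.card (fun t => rootCoeffs S (l · t)) t₀ :=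
    (contDiffAt_rootCoeffs_filter hcoeff
      (fun i hi => (hl i hi).self_of_nhds.continuousAt) ⟨j, hj⟩
      (fun i _ k _ hi hk hik => hk (hik ▸ hi))).of_le (by exact_mod_cast s.card_filter_le _)
  have hshift : Tendsto (fun t => t₀ + t) (𝓝 0) (𝓝 t₀) := by
    simpa using (continuous_const_add t₀).tendsto 0
  have hcont : ContinuousAt (deriv fun t => l j (t₀ + t) - l j t₀) 0 := by
    refine continuousAt_deriv_of_forall_eq_zero (s := S) (l := fun i t => l i (t₀ + t) - l j t₀)
      (fun k _ => contDiffAt_coeff_rootPoly_translate hcoeffS (l j t₀) k) (fun i hi => ?_)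
      (fun i hi => ?_) (Finset.mem_filter.mpr ⟨hj, rfl⟩)
    · filter_upwards [hshift.eventually (hl i (Finset.mem_filter.mp hi).1)] with t ht
      exact (ht.comp t (by fun_prop)).sub_const _
    · simp only [add_zero, (Finset.mem_filter.mp hi).2, sub_self]
  have hderiv : (deriv fun t => l j (t₀ + t) - l j t₀) = fun t => deriv (l j) (t₀ + t) := by
    ext t
    rw [deriv_sub_const, deriv_comp_const_add]
  rw [hderiv] at hcont
  have := ContinuousAt.comp (g := fun t => deriv (l j) (t₀ + t)) (f := fun t => t - t₀) (x := t₀)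
    (by simpa using hcont) (by fun_prop)
  simpa [Function.comp_def] using this

theorem coeff_rootPoly_univ {n : ℕ} {c r : Fin n → ℝ}
    (h : ∀ x, x ^ n + ∑ j : Fin n, (-1 : ℝ) ^ ((j : ℕ) + 1) * c j * x ^ (n - ((j : ℕ) + 1)) =
      ∏ j, (x - r j)) (k : Fin n) :
    (rootPoly Finset.univ r).coeff k = (-1) ^ ((k.rev : ℕ) + 1) * c k.rev := by
  have hpoly : monicOfFn (fun i : Fin n => (-1) ^ ((i.rev : ℕ) + 1) * c i.rev) =
      rootPoly Finset.univ r := by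
    refine Polynomial.funext fun x => ?_
    rw [eval_monicOfFn, rootPoly, eval_prod, ← Equiv.sum_comp Fin.revPerm]
    simp only [eval_sub, eval_X, eval_C, ← h x, Fin.revPerm_apply, Fin.rev_rev, Fin.val_rev]
  rw [← hpoly, coeff_monicOfFn]

end RootCurves

end HyperbolicRoots

/-- If the coefficients of a curve of monic hyperbolic polynomials are of class `C^n`,
then any differentiable parameterization of the roots is actually `C^1`. -/
theorem differentiable_roots_are_C1 (n : ℕ) (hn : 1 ≤ n) (a : Fin n → ℝ → ℝ)
    (ha : ∀ j, ContDiff ℝ n (a j))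
    (hhyp : ∀ t : ℝ, ∀ z : ℂ,
      z ^ n + ∑ j : Fin n, (-1 : ℂ) ^ ((j : ℕ) + 1) * (a j t : ℂ) * z ^ (n - ((j : ℕ) + 1)) = 0 →
        z.im = 0)
    (lam : Fin n → ℝ → ℝ)
    (hdiff : ∀ j, Differentiable ℝ (lam j))
    (hroots : ∀ t x : ℝ,
      x ^ n + ∑ j : Fin n, (-1 : ℝ) ^ ((j : ℕ) + 1) * a j t * x ^ (n - ((j : ℕ) + 1)) =
        ∏ j : Fin n, (x - lam j t)) :
    ∀ j, ContDiff ℝ 1 (lam j) := by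
  intro j
  refine contDiff_one_iff_deriv.mpr ⟨hdiff j, continuous_iff_continuousAt.mpr fun t₀ => ?_⟩
  refine HyperbolicRoots.continuousAt_deriv_of_contDiffAt_coeff (s := Finset.univ) (l := lam)
    (fun k hk => ?_) (fun i _ => .of_forall (hdiff i)) (Finset.mem_univ j)
  rw [Finset.card_fin] at hk ⊢
  have hcoeff (t : ℝ) : (HyperbolicRoots.rootPoly Finset.univ (lam · t)).coeff k =
      (-1) ^ ((Fin.rev ⟨k, hk⟩ : ℕ) + 1) * a (Fin.rev ⟨k, hk⟩) t :=
    HyperbolicRoots.coeff_rootPoly_univ (hroots t) ⟨k, hk⟩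
  simp only [hcoeff]
  exact contDiffAt_const.mul (ha _).contDiffAt
end

section
/- Let ρ : G → O(V) be an orthogonal representation of a finite group G on a finite-dimensional real Euclidean vector space V, let σ_1, …, σ_n be a system of homogeneous generators of the algebra ℝ[V]^G of G-invariant polynomial functions on V, let σ = (σ_1, …, σ_n) : V → ℝ^n, and let d = max{deg σ_i : 1 ≤ i ≤ n}. If c : ℝ → ℝ^n is a curve of class C^d whose values lie in σ(V), then there exists a differentiable curve c̄ : ℝ → V with σ ∘ c̄ = c. -/
/-!
Induct on the order of `G`. Choose any lift of the curve of orbits, and correct it by elements of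
`G` depending on the parameter. Where the lift is not a fixed vector, a slice reduces the problem to
the stabilizer, a smaller group: the invariants of the stabilizer extend to simple roots of
polynomials with `G`-invariant coefficients, so the implicit function theorem makes them of class
`C^d` along the curve. At a fixed vector, Taylor's formula shows that every homogeneous invariant of
degree `k ≤ d` has a limit along the difference quotients; since the invariants of degree at most
`d` separate orbits, the difference quotients approach a single orbit. If the parameter is isolated
among those of fixed vectors, this gives one-sided derivatives in the same orbit, which an element
of `G` makes equal. If it is a limit of parameters of fixed vectors, the orbit approached is a
single fixed vector, which is the derivative of every lift. Local lifts can be glued because, where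
two differentiable lifts meet, one element of `G` matches both their values and their derivatives.
-/

open Asymptotics Filter Polynomial Set Topology
open scoped ContDiff

section Taylor

theorem exists_polynomial_sub_isLittleO_of_contDiffAt {f : ℝ → ℝ} {a : ℝ} {k : ℕ}
    (hf : ContDiffAt ℝ k f a) :
    ∃ R : ℝ[X], (fun t => f t - R.eval t) =o[𝓝 a] fun t => (t - a) ^ k := by
  obtain ⟨u, hu, hfu⟩ := hf.contDiffOn (m := k) le_rfl (by simp)
  obtain ⟨ε, hε, hball⟩ := Metric.mem_nhds_iff.1 hu
  have taylor := taylor_isLittleO (convex_ball a ε) (Metric.mem_ball_self hε) (hfu.mono hball)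
  rw [Metric.isOpen_ball.nhdsWithin_eq (Metric.mem_ball_self hε)] at taylor
  refine ⟨∑ j ∈ Finset.range (k + 1),
    C ((j.factorial : ℝ)⁻¹ * iteratedDerivWithin j f (Metric.ball a ε) a) * (X - C a) ^ j,
    taylor.congr_left fun t => ?_⟩
  simp only [taylor_within_apply, eval_finsetSum, eval_mul, eval_C, eval_pow, eval_sub, eval_X,
    smul_eq_mul, mul_right_comm]

theorem eventually_sub_ne_zero {𝕜 : Type*} [Ring 𝕜] [TopologicalSpace 𝕜] (a : 𝕜) :
    ∀ᶠ t in 𝓝[≠] a, t - a ≠ 0 :=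
  eventually_mem_nhdsWithin.mono fun _ => sub_ne_zero.2

theorem sub_pow_succ_isLittleO {𝕜 : Type*} [NormedField 𝕜] (a : 𝕜) (k : ℕ) :
    (fun t => (t - a) ^ (k + 1)) =o[𝓝 a] fun t => (t - a) ^ k := by
  have sub_isLittleO_one : (fun t => t - a) =o[𝓝 a] (fun _ => (1 : 𝕜)) :=
    (isLittleO_one_iff 𝕜).2 (tendsto_sub_nhds_zero_iff.2 tendsto_id)
  simpa only [pow_succ, mul_one] using
    (isBigO_refl (fun t => (t - a) ^ k) (𝓝 a)).mul_isLittleO sub_isLittleO_one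

theorem X_sub_C_pow_succ_dvd_of_eval_isLittleO {𝕜 : Type*} [NontriviallyNormedField 𝕜] {R : 𝕜[X]}
    {a : 𝕜} {k : ℕ} (hR : (fun t => R.eval t) =o[𝓝[≠] a] fun t => (t - a) ^ k) :
    (X - C a) ^ (k + 1) ∣ R := by
  have root_of_isLittleO_one : ∀ S : 𝕜[X],
      (fun t => S.eval t) =o[𝓝[≠] a] (fun _ => (1 : 𝕜)) → X - C a ∣ S := fun S hS =>
    dvd_iff_isRoot.2 <| tendsto_nhds_unique (S.continuous.continuousWithinAt (s := {a}ᶜ))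
      ((isLittleO_one_iff 𝕜).1 hS)
  induction k with
  | zero => simpa using root_of_isLittleO_one R (by simpa using hR)
  | succ k ih =>
    obtain ⟨S, rfl⟩ := ih <|
      hR.trans ((sub_pow_succ_isLittleO a k).mono nhdsWithin_le_nhds)
    refine pow_succ (X - C a) (k + 1) ▸ mul_dvd_mul_left _ (root_of_isLittleO_one S ?_)
    refine (hR.mul_isBigO (isBigO_refl (fun t => ((t - a) ^ (k + 1))⁻¹) _)).congr' ?_ ?_ <;>
      filter_upwards [eventually_sub_ne_zero a] with t ht
    · simp [field]
    · simp [field]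

theorem exists_tendsto_div_pow_of_contDiffAt_of_isLittleO {f : ℝ → ℝ} {a : ℝ} {k : ℕ}
    (hf : ContDiffAt ℝ (k + 1) f a) (hfa : f =o[𝓝[≠] a] fun t => (t - a) ^ k) :
    ∃ L, Tendsto (fun t => f t / (t - a) ^ (k + 1)) (𝓝[≠] a) (𝓝 L) := by
  obtain ⟨R, hR⟩ := exists_polynomial_sub_isLittleO_of_contDiffAt (k := k + 1) hf
  replace hR := hR.mono (nhdsWithin_le_nhds (s := {a}ᶜ))
  obtain ⟨S, rfl⟩ : (X - C a) ^ (k + 1) ∣ R := by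
    refine X_sub_C_pow_succ_dvd_of_eval_isLittleO ?_
    have := (hfa.sub (hR.trans ((sub_pow_succ_isLittleO a k).mono nhdsWithin_le_nhds)))
    simpa only [sub_sub_cancel] using this
  refine ⟨S.eval a, ?_⟩
  have := hR.tendsto_div_nhds_zero.add (S.continuous.continuousWithinAt (s := {a}ᶜ) (x := a))
  rw [zero_add] at this
  refine this.congr' ?_
  filter_upwards [eventually_sub_ne_zero a] with t ht
  simp [field]

theorem isLittleO_sub_of_nonneg {f : ℝ → ℝ} {a : ℝ} (hf : DifferentiableAt ℝ f a)
    (hf_nonneg : ∀ t, 0 ≤ f t) (hfa : f a = 0) : f =o[𝓝 a] fun t => t - a := by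
  have is_min : IsLocalMin f a := Eventually.of_forall fun t => hfa.trans_le (hf_nonneg t)
  have := hf.hasDerivAt.isLittleO
  simpa only [is_min.deriv_eq_zero, hfa, sub_zero, smul_zero] using this

end Taylor

theorem contDiffAt_of_isRoot_of_derivative_ne_zero {𝕜 E : Type*} [RCLike 𝕜] [NormedAddCommGroup E]
    [NormedSpace 𝕜 E] [CompleteSpace E] {n : ℕ∞ω} (hn : n ≠ 0) {P : E → 𝕜[X]} {N : ℕ}
    (hN : ∀ e, (P e).natDegree < N) {a : E} (hP : ∀ k, ContDiffAt 𝕜 n (fun e => (P e).coeff k) a)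
    {y : E → 𝕜} (hy : ContinuousAt y a) (hroot : ∀ᶠ e in 𝓝 a, (P e).IsRoot (y e))
    (hsimple : (P a).derivative.eval (y a) ≠ 0) : ContDiffAt 𝕜 n y a := by
  let F : E × 𝕜 → 𝕜 := fun z => (P z.1).eval z.2
  have hF : ContDiffAt 𝕜 n F (a, y a) := by
    have hF_sum : F = fun z => ∑ k ∈ Finset.range N, (P z.1).coeff k * z.2 ^ k :=
      funext fun z => eval_eq_sum_range' (hN z.1) z.2
    rw [hF_sum]
    exact ContDiffAt.sum fun k _ => ((hP k).comp (a, y a) contDiffAt_fst).mul (contDiffAt_snd.pow k)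
  have partial_deriv : fderiv 𝕜 F (a, y a) (0, 1) = (P a).derivative.eval (y a) :=
    ((hF.differentiableAt hn).hasFDerivAt.comp_hasDerivAt (y a)
      ((hasDerivAt_const (y a) a).prodMk (hasDerivAt_id (y a)))).unique ((P a).hasDerivAt (y a))
  have partial_invertible : (fderiv 𝕜 F (a, y a) ∘L .inr 𝕜 E 𝕜).IsInvertible := by
    refine ⟨ContinuousLinearEquiv.unitsEquivAut 𝕜 (Units.mk0 _ hsimple), ?_⟩
    ext
    simp [partial_deriv]
  refine (hF.contDiffAt_implicitFunction hn partial_invertible).congr_of_eventuallyEq ?_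
  filter_upwards [hroot, (continuousAt_id.prodMk hy).eventually
    (hF.eventually_apply_eq_iff_implicitFunction hn partial_invertible)] with e hroot_e iff_e
  refine (iff_e.1 ?_).symm
  simpa [F, hroot.self_of_nhds.eq_zero] using hroot_e.eq_zero

section SameProjection

variable (G : Type*) {X α : Type*} [Group G] [MulAction G X]

/-- The curves `x` and `y` have the same image in the orbit space: they are lifts of one curve. -/
def SameProjection (x y : α → X) : Prop :=
  ∀ t, y t ∈ MulAction.orbit G (x t)

variable {G} {x y z : α → X}

theorem SameProjection.refl (x : α → X) : SameProjection G x x := fun t =>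
  MulAction.mem_orbit_self (x t)

theorem SameProjection.symm (h : SameProjection G x y) : SameProjection G y x := fun t =>
  MulAction.mem_orbit_symm.1 (h t)

theorem SameProjection.trans (hxy : SameProjection G x y) (hyz : SameProjection G y z) :
    SameProjection G x z := fun t =>
  MulAction.orbit_eq_iff.2 (hxy t) ▸ hyz t

theorem SameProjection.smul (h : SameProjection G x y) (g : G) : SameProjection G x (g • y) :=
  fun t => MulAction.mem_orbit_of_mem_orbit g (h t)

theorem SameProjection.piecewise (hy : SameProjection G x y) (hz : SameProjection G x z)
    (s : Set α) [∀ t, Decidable (t ∈ s)] : SameProjection G x (s.piecewise y z) := fun t => by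
  by_cases ht : t ∈ s
  · simpa [ht] using hy t
  · simpa [ht] using hz t

end SameProjection

section LiftableOn

variable (G : Type*) {E : Type*} [Group G] [NormedAddCommGroup E] [NormedSpace ℝ E] [MulAction G E]

/-- The curve of orbits of `x` has a lift that is differentiable at every point of `U`. -/
def LiftableOn (x : ℝ → E) (U : Set ℝ) : Prop :=
  ∃ y, SameProjection G x y ∧ ∀ t ∈ U, DifferentiableAt ℝ y t

/-- The curve of orbits of `x` has a lift that is differentiable near `t`. -/
def LiftableAt (x : ℝ → E) (t : ℝ) : Prop :=
  ∃ y, SameProjection G x y ∧ ∀ᶠ s in 𝓝 t, DifferentiableAt ℝ y s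

variable {G} {x : ℝ → E} {t : ℝ} {U I : Set ℝ}

theorem LiftableOn.mono (h : LiftableOn G x U) (hIU : I ⊆ U) : LiftableOn G x I :=
  h.imp fun _ hy => hy.imp_right fun dy t ht => dy t (hIU ht)

theorem LiftableOn.liftableAt (h : LiftableOn G x U) (hU : U ∈ 𝓝 t) : LiftableAt G x t :=
  h.imp fun _ hy => hy.imp_right fun dy => Filter.mem_of_superset hU dy

theorem LiftableAt.eventually_uIcc (h : LiftableAt G x t) :
    ∀ᶠ s in 𝓝 t, LiftableOn G x (uIcc t s) := by
  obtain ⟨y, hy, dy⟩ := h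
  obtain ⟨ε, hε, hball⟩ := Metric.eventually_nhds_iff_ball.1 dy
  filter_upwards [Metric.ball_mem_nhds t hε] with s hs
  exact ⟨y, hy, fun r hr => hball r <|
    (convex_ball t ε).ordConnected.uIcc_subset (Metric.mem_ball_self hε) hs hr⟩

end LiftableOn

section PiecewiseIic

theorem piecewise_Iic_eqOn_Ici {α β : Type*} [LinearOrder α] {y z : α → β} {s : α}
    (h : y s = z s) : EqOn ((Iic s).piecewise y z) z (Ici s) := fun t ht => by
  rcases (mem_Ici.1 ht).eq_or_lt with rfl | lt
  · simpa using h
  · simp [lt]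

variable {E : Type*} [NormedAddCommGroup E] [NormedSpace ℝ E] {y z : ℝ → E} {s t : ℝ} {w : E}

theorem hasDerivAt_piecewise_Iic (hy : HasDerivWithinAt y w (Iic s) s)
    (hz : HasDerivWithinAt z w (Ici s) s) (h : y s = z s) :
    HasDerivAt ((Iic s).piecewise y z) w s := by
  have left := hy.congr (piecewise_eqOn (Iic s) y z) (piecewise_eqOn (Iic s) y z self_mem_Iic)
  have right := hz.congr (piecewise_Iic_eqOn_Ici h) (piecewise_Iic_eqOn_Ici h self_mem_Ici)
  simpa only [Iic_union_Ici, hasDerivWithinAt_univ] using left.union right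

theorem differentiableAt_piecewise_Iic_of_lt (hy : DifferentiableAt ℝ y t) (h : t < s) :
    DifferentiableAt ℝ ((Iic s).piecewise y z) t :=
  hy.congr_of_eventuallyEq ((piecewise_eqOn (Iic s) y z).eventuallyEq_of_mem (Iic_mem_nhds h))

theorem differentiableAt_piecewise_Iic_of_gt (hz : DifferentiableAt ℝ z t) (h : s < t) :
    DifferentiableAt ℝ ((Iic s).piecewise y z) t :=
  hz.congr_of_eventuallyEq <| (piecewise_eqOn_compl (Iic s) y z).eventuallyEq_of_mem <|
    isClosed_Iic.isOpen_compl.mem_nhds (notMem_Iic.2 h)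

end PiecewiseIic

section Gluing

variable {G E : Type*} [Group G] [NormedAddCommGroup E] [NormedSpace ℝ E] [DistribMulAction G E]
  [SMulCommClass ℝ G E] [ContinuousConstSMul G E] {x y z : ℝ → E} {s : ℝ} {U I J : Set ℝ}

theorem SameProjection.exists_smul_eq_and_smul_deriv_eq [Finite G] (h : SameProjection G z y)
    (hy : DifferentiableAt ℝ y s) (hz : DifferentiableAt ℝ z s) :
    ∃ g : G, g • z s = y s ∧ g • deriv z s = deriv y s := by
  obtain ⟨g, hg⟩ : ∃ g : G, ∃ᶠ t in 𝓝[≠] s, g • z t = y t := by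
    by_contra! never
    simp only [← eventually_all] at never
    obtain ⟨t, ht⟩ := never.exists
    obtain ⟨g, hg⟩ := h t
    exact ht g hg
  have unique : UniqueDiffWithinAt ℝ {t | g • z t = y t} s :=
    (accPt_iff_frequently_nhdsNE.2 hg).uniqueDiffWithinAt
  have value : g • z s = y s := tendsto_nhds_unique_of_frequently_eq
    (hz.continuousAt.const_smul g).continuousWithinAt hy.continuousAt.continuousWithinAt hg
  refine ⟨g, value, ?_⟩
  refine unique.eq_deriv _ (hz.hasDerivAt.const_smul g).hasDerivWithinAt ?_
  exact hy.hasDerivAt.hasDerivWithinAt.congr (fun t ht => ht) value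

theorem exists_smul_glue [Finite G] (hy : SameProjection G x y)
    (hz : SameProjection G x z) (dy : DifferentiableAt ℝ y s) (dz : DifferentiableAt ℝ z s) :
    ∃ (g : G) (u : ℝ → E), SameProjection G x u ∧ EqOn u y (Iic s) ∧ EqOn u (g • z) (Ici s) ∧
      (∀ t ≤ s, DifferentiableAt ℝ y t → DifferentiableAt ℝ u t) ∧
      ∀ t ≥ s, DifferentiableAt ℝ z t → DifferentiableAt ℝ u t := by
  obtain ⟨g, value, deriv_eq⟩ := (hz.symm.trans hy).exists_smul_eq_and_smul_deriv_eq dy dz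
  have at_s : DifferentiableAt ℝ ((Iic s).piecewise y (g • z)) s :=
    (hasDerivAt_piecewise_Iic dy.hasDerivAt.hasDerivWithinAt
      (deriv_eq ▸ (dz.hasDerivAt.const_smul g).hasDerivWithinAt) value.symm).differentiableAt
  refine ⟨g, (Iic s).piecewise y (g • z), hy.piecewise (hz.smul g) (Iic s), piecewise_eqOn ..,
    piecewise_Iic_eqOn_Ici value.symm, fun t ht dyt => ?_, fun t ht dzt => ?_⟩
  · rcases ht.eq_or_lt with rfl | ht
    · exact at_s
    · exact differentiableAt_piecewise_Iic_of_lt dyt ht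
  · rcases ht.eq_or_lt with rfl | ht
    · exact at_s
    · exact differentiableAt_piecewise_Iic_of_gt (dzt.const_smul g) ht

variable [Finite G] {a b a' b' c : ℝ}

theorem LiftableOn.inter_Iic_union_inter_Ici (hI : LiftableOn G x I) (hJ : LiftableOn G x J)
    (hsI : s ∈ I) (hsJ : s ∈ J) : LiftableOn G x (I ∩ Iic s ∪ J ∩ Ici s) := by
  obtain ⟨y, hy, dy⟩ := hI
  obtain ⟨z, hz, dz⟩ := hJ
  obtain ⟨g, u, hu, -, -, du_left, du_right⟩ := exists_smul_glue hy hz (dy s hsI) (dz s hsJ)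
  refine ⟨u, hu, ?_⟩
  rintro t (⟨htI, hts⟩ | ⟨htJ, hst⟩)
  · exact du_left t hts (dy t htI)
  · exact du_right t hst (dz t htJ)

theorem LiftableOn.uIcc_trans (hab : LiftableOn G x (uIcc a b)) (hbc : LiftableOn G x (uIcc b c)) :
    LiftableOn G x (uIcc a c) := by
  rcases le_total a c with hac | hca
  · refine (hab.inter_Iic_union_inter_Ici hbc right_mem_uIcc left_mem_uIcc).mono ?_
    grind [mem_uIcc]
  · refine (hbc.inter_Iic_union_inter_Ici hab left_mem_uIcc right_mem_uIcc).mono ?_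
    grind [mem_uIcc]

theorem LiftableOn.exists_extension (h : LiftableOn G x (Icc a' b')) (hy : SameProjection G x y)
    (dy : ∀ t ∈ Icc a b, DifferentiableAt ℝ y t) (hab : a ≤ b) (ha : a' ≤ a) (hb : b ≤ b') :
    ∃ u, SameProjection G x u ∧ (∀ t ∈ Icc a' b', DifferentiableAt ℝ u t) ∧ EqOn u y (Icc a b) := by
  obtain ⟨z, hz, dz⟩ := h
  obtain ⟨-, u, hu, hu_left, -, du_left, du_right⟩ :=
    exists_smul_glue hy hz (dy b ⟨hab, le_rfl⟩) (dz b ⟨ha.trans hab, hb⟩)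
  obtain ⟨g, w, hw, -, hw_right, dw_left, dw_right⟩ :=
    exists_smul_glue hz hu (dz a ⟨ha, hab.trans hb⟩) (du_left a hab (dy a ⟨le_rfl, hab⟩))
  refine ⟨g⁻¹ • w, hw.smul g⁻¹, fun t ht => DifferentiableAt.const_smul ?_ g⁻¹, fun t ht => ?_⟩
  · rcases le_total t a with hta | hat
    · exact dw_left t hta (dz t ht)
    · refine dw_right t hat ?_
      rcases le_total t b with htb | hbt
      · exact du_left t htb (dy t ⟨hat, htb⟩)
      · exact du_right t hbt (dz t ht)
  · simp [hw_right ht.1, hu_left ht.2]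

theorem liftableOn_Icc_of_forall_liftableAt (hJ : J.OrdConnected) (h : ∀ t ∈ J, LiftableAt G x t)
    (ha : a ∈ J) (hb : b ∈ J) : LiftableOn G x (Icc a b) := by
  refine LiftableOn.mono ?_ Icc_subset_uIcc
  exact hJ.isPreconnected.induction₂ (fun a b => LiftableOn G x (uIcc a b))
    (fun t ht => nhdsWithin_le_nhds (h t ht).eventually_uIcc)
    (fun _ _ _ _ _ _ => LiftableOn.uIcc_trans) (fun a b _ _ hab => uIcc_comm a b ▸ hab) ha hb

theorem exists_seq_lift_eqOn {α β : ℕ → ℝ} (hα : Antitone α) (hβ : Monotone β) (hαβ : α 0 ≤ β 0)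
    (h : ∀ n, LiftableOn G x (Icc (α n) (β n))) :
    ∃ Y : ℕ → ℝ → E, ∀ n, SameProjection G x (Y n) ∧
      (∀ t ∈ Icc (α n) (β n), DifferentiableAt ℝ (Y n) t) ∧
      ∀ k ≥ n, EqOn (Y k) (Y n) (Icc (α n) (β n)) := by
  have step : ∀ n y, SameProjection G x y → (∀ t ∈ Icc (α n) (β n), DifferentiableAt ℝ y t) →
      ∃ u, SameProjection G x u ∧ (∀ t ∈ Icc (α (n + 1)) (β (n + 1)), DifferentiableAt ℝ u t) ∧
        EqOn u y (Icc (α n) (β n)) := fun n y hy dy =>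
    (h (n + 1)).exists_extension hy dy
      ((hα n.zero_le).trans (hαβ.trans (hβ n.zero_le))) (hα n.le_succ) (hβ n.le_succ)
  choose! ext hext dext ext_eqOn using step
  obtain ⟨y₀, hy₀, dy₀⟩ := h 0
  let Y : ℕ → ℝ → E := fun n => n.rec y₀ ext
  have hY : ∀ n, SameProjection G x (Y n) ∧ ∀ t ∈ Icc (α n) (β n), DifferentiableAt ℝ (Y n) t := by
    intro n
    induction n with
    | zero => exact ⟨hy₀, dy₀⟩
    | succ n ih => exact ⟨hext n _ ih.1 ih.2, dext n _ ih.1 ih.2⟩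
  refine ⟨Y, fun n => ⟨(hY n).1, (hY n).2, fun k hk => ?_⟩⟩
  induction k, hk using Nat.le_induction with
  | base => exact eqOn_refl _ _
  | succ k hk ih =>
    exact ((ext_eqOn k _ (hY k).1 (hY k).2).mono (Icc_subset_Icc (hα hk) (hβ hk))).trans ih

theorem liftableOn_iUnion_Ioo {α β : ℕ → ℝ} (hα : Antitone α) (hβ : Monotone β) (hαβ : α 0 ≤ β 0)
    (h : ∀ n, LiftableOn G x (Icc (α n) (β n))) : LiftableOn G x (⋃ n, Ioo (α n) (β n)) := by
  obtain ⟨Y, hY⟩ := exists_seq_lift_eqOn hα hβ hαβ h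
  have exists_index : ∀ t ∈ ⋃ n, Ioo (α n) (β n), ∃ n, t ∈ Ioo (α n) (β n) := fun _ => mem_iUnion.1
  choose! N hN using exists_index
  have limit_eqOn : ∀ n, EqOn (fun t => Y (N t) t) (Y n) (Ioo (α n) (β n)) := fun n t ht => by
    rcases le_total n (N t) with hle | hle
    · exact (hY n).2.2 _ hle (Ioo_subset_Icc_self ht)
    · exact ((hY (N t)).2.2 n hle (Ioo_subset_Icc_self (hN t (mem_iUnion_of_mem n ht)))).symm
  refine ⟨fun t => Y (N t) t, fun t => (hY (N t)).1 t, fun t ht => ?_⟩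
  exact ((hY (N t)).2.1 t (Ioo_subset_Icc_self (hN t ht))).congr_of_eventuallyEq
    ((limit_eqOn (N t)).eventuallyEq_of_mem (Ioo_mem_nhds (hN t ht).1 (hN t ht).2))

theorem exists_seq_Ioo_iUnion_eq (hJ : J.OrdConnected) (hJ_open : IsOpen J) (hJ_ne : J.Nonempty) :
    ∃ α β : ℕ → ℝ, Antitone α ∧ Monotone β ∧ α 0 ≤ β 0 ∧ (∀ n, α n ∈ J ∧ β n ∈ J) ∧
      J ⊆ ⋃ n, Ioo (α n) (β n) := by
  obtain ⟨t₀, ht₀⟩ := hJ_ne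
  have : Nonempty J := ⟨t₀, ht₀⟩
  obtain ⟨β, hβ, hβ_top⟩ := exists_seq_monotone_tendsto_atTop_atTop J
  obtain ⟨α, hα, hα_bot⟩ := exists_seq_antitone_tendsto_atTop_atBot J
  refine ⟨fun n => (α n ⊓ ⟨t₀, ht₀⟩ : J), fun n => (β n ⊔ ⟨t₀, ht₀⟩ : J),
    fun m n hmn => inf_le_inf_right _ (hα hmn), fun m n hmn => sup_le_sup_right (hβ hmn) _,
    inf_le_right.trans le_sup_right, fun n => ⟨Subtype.coe_prop _, Subtype.coe_prop _⟩,
    fun t ht => mem_iUnion.2 ?_⟩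
  obtain ⟨p, hpt, hp⟩ := ((frequently_lt_nhds t).and_eventually (hJ_open.mem_nhds ht)).exists
  obtain ⟨q, htq, hq⟩ := ((frequently_gt_nhds t).and_eventually (hJ_open.mem_nhds ht)).exists
  obtain ⟨n, hαp, hqβ⟩ := ((hα_bot.eventually_le_atBot (⟨p, hp⟩ : J)).and
    (hβ_top.eventually_ge_atTop (⟨q, hq⟩ : J))).exists
  exact ⟨n, (Subtype.coe_le_coe.2 (inf_le_left.trans hαp)).trans_lt hpt,
    htq.trans_le (Subtype.coe_le_coe.2 (hqβ.trans le_sup_left))⟩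

theorem liftableOn_of_ordConnected (hJ : J.OrdConnected) (hJ_open : IsOpen J)
    (h : ∀ t ∈ J, LiftableAt G x t) : LiftableOn G x J := by
  rcases J.eq_empty_or_nonempty with rfl | hJ_ne
  · exact ⟨x, .refl x, by simp⟩
  obtain ⟨α, β, hα, hβ, hαβ, mem_J, hJ_subset⟩ := exists_seq_Ioo_iUnion_eq hJ hJ_open hJ_ne
  exact (liftableOn_iUnion_Ioo hα hβ hαβ fun n =>
    liftableOn_Icc_of_forall_liftableAt hJ h (mem_J n).1 (mem_J n).2).mono hJ_subset

theorem isOpen_ordConnectedComponent (hU : IsOpen U) (t : ℝ) :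
    IsOpen (U.ordConnectedComponent t) := by
  refine isOpen_iff_mem_nhds.2 fun s hs => ?_
  rw [ordConnectedComponent_eq hs]
  exact ordConnectedComponent_mem_nhds.2 (hU.mem_nhds (ordConnectedComponent_subset hs))

theorem liftableOn_of_forall_liftableAt (hU : IsOpen U) (h : ∀ t ∈ U, LiftableAt G x t) :
    LiftableOn G x U := by
  classical
  have component : ∀ τ, LiftableOn G x (U.ordConnectedComponent τ) := fun τ =>
    liftableOn_of_ordConnected inferInstance (isOpen_ordConnectedComponent hU τ) fun t ht =>
      h t (ordConnectedComponent_subset ht)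
  choose Y hY dY using component
  let base : ℝ → ℝ := fun t => if ht : t ∈ U then ordConnectedProj U ⟨t, ht⟩ else t
  refine ⟨fun t => Y (base t) t, fun t => hY (base t) t, fun t ht => ?_⟩
  have base_eq : ∀ s (hs : s ∈ U), base s = ordConnectedProj U ⟨s, hs⟩ := fun s hs => dif_pos hs
  refine (dY (base t) t ?_).congr_of_eventuallyEq ?_
  · exact base_eq t ht ▸ mem_ordConnectedComponent_ordConnectedProj U ⟨t, ht⟩
  · filter_upwards [(isOpen_ordConnectedComponent hU t).mem_nhds
      (self_mem_ordConnectedComponent.2 ht)] with s hs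
    have base_s_eq : base s = base t := by
      rw [base_eq s (ordConnectedComponent_subset hs), base_eq t ht]
      exact ordConnectedProj_eq.2 (uIcc_comm t s ▸ hs)
    rw [base_s_eq]

theorem exists_sameProjection_of_eventually_liftableAt (h : ∀ᶠ t in 𝓝[≠] s, LiftableAt G x t) :
    ∃ y, SameProjection G x y ∧ ∀ᶠ t in 𝓝[≠] s, DifferentiableAt ℝ y t := by
  obtain ⟨U, hU, hs, hU_liftable⟩ := mem_nhdsWithin.1 h
  obtain ⟨y, hy, dy⟩ :=
    liftableOn_of_forall_liftableAt (hU.inter isOpen_compl_singleton) hU_liftable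
  exact ⟨y, hy, mem_nhdsWithin.2 ⟨U, hU, hs, dy⟩⟩

end Gluing

section Convergence

theorem tendsto_nhds_of_tendsto_nhdsSet {X α : Type*} [TopologicalSpace X] {F : Set X} {w : X}
    {N : X → Set X} (hN : ∀ v, v ∈ N v ∧ IsOpen (N v)) (hN_disj : F.PairwiseDisjoint N)
    {u : α → X} {l : Filter α} (h : Tendsto u l (𝓝ˢ F)) (hw : w ∈ F)
    (huw : ∀ᶠ t in l, u t ∈ N w) : Tendsto u l (𝓝 w) := by
  classical
  intro V hV
  have hW : ⋃ v ∈ F, (if v = w then V else N v) ∈ 𝓝ˢ F := bUnion_mem_nhdsSet fun v _ => by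
    split_ifs with hvw
    · exact hvw ▸ hV
    · exact (hN v).2.mem_nhds (hN v).1
  filter_upwards [h hW, huw] with t ht htw
  obtain ⟨v, hv, htv⟩ := mem_iUnion₂.1 ht
  split_ifs at htv with hvw
  · exact htv
  · exact (disjoint_left.1 (hN_disj hv hw hvw) htv htw).elim

theorem exists_tendsto_nhds_of_tendsto_nhdsSet_finite {X α ι : Type*} [TopologicalSpace X]
    [T2Space X] [TopologicalSpace α] {F : Set X} (hF : F.Finite) {u : α → X} {l : Filter α}
    [l.NeBot] {p : ι → Prop} {B : ι → Set α} (hl : l.HasBasis p B)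
    (hB : ∀ i, p i → IsPreconnected (B i)) (hu : ∀ᶠ t in l, ContinuousAt u t)
    (h : Tendsto u l (𝓝ˢ F)) : ∃ w ∈ F, Tendsto u l (𝓝 w) := by
  obtain ⟨N, hN, hN_disj⟩ := hF.t2_separation
  have mem_iUnion_N : ∀ᶠ t in l, u t ∈ ⋃ v ∈ F, N v :=
    h (bUnion_mem_nhdsSet fun v _ => (hN v).2.mem_nhds (hN v).1)
  obtain ⟨i, hi, hBi⟩ := hl.mem_iff.1 (mem_iUnion_N.and hu)
  obtain ⟨s, hs⟩ := Filter.nonempty_of_mem (hl.mem_of_mem hi)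
  obtain ⟨w, hw, hsw⟩ := mem_iUnion₂.1 (hBi hs).1
  have image_subset : u '' B i ⊆ N w := by
    refine ((hB i hi).image u fun t ht => (hBi ht).2.continuousWithinAt).subset_left_of_subset_union
      (v := ⋃ v ∈ F \ {w}, N v) (hN w).2 (isOpen_biUnion fun v _ => (hN v).2)
      (disjoint_iUnion₂_right.2 fun v hv => hN_disj hw hv.1 (Ne.symm hv.2)) ?_
      ⟨u s, mem_image_of_mem u hs, hsw⟩
    rw [← biUnion_insert, insert_sdiff_singleton, insert_eq_of_mem hw]
    exact image_subset_iff.2 fun t ht => (hBi ht).1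
  exact ⟨w, hw, tendsto_nhds_of_tendsto_nhdsSet hN hN_disj h hw
    (mem_of_superset (hl.mem_of_mem hi) (image_subset_iff.1 image_subset))⟩

/-- The functions in `A` distinguish any two orbits of `G`. -/
def SeparatesOrbits (G : Type*) {X : Type*} [Group G] [MulAction G X] (A : Set (X → ℝ)) : Prop :=
  ∀ v w, (∀ f ∈ A, f v = f w) → v ∈ MulAction.orbit G w

variable {G X α : Type*} [Group G] [MulAction G X] [TopologicalSpace X] {A : Set (X → ℝ)}
  {K : Set X} {u : α → X} {l : Filter α} {v w : X}

theorem eq_of_mapClusterPt_of_tendsto {Y : Type*} [TopologicalSpace Y] [T2Space Y] {f : X → Y}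
    {y : Y} (hf : ContinuousAt f v) (hv : MapClusterPt v l u) (h : Tendsto (f ∘ u) l (𝓝 y)) :
    f v = y :=
  eq_of_nhds_neBot ((hv.continuousAt_comp hf).clusterPt.mono h)

theorem SeparatesOrbits.tendsto_nhdsSet_orbit (hA : SeparatesOrbits G A)
    (hA_cont : ∀ f ∈ A, Continuous f) (hK : IsCompact K) (hu : ∀ᶠ t in l, u t ∈ K)
    (h : ∀ f ∈ A, Tendsto (f ∘ u) l (𝓝 (f w))) : Tendsto u l (𝓝ˢ (MulAction.orbit G w)) := by
  refine hK.le_nhdsSet_of_clusterPt hu fun v _ hv => hA v w fun f hf => ?_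
  exact eq_of_mapClusterPt_of_tendsto (hA_cont f hf).continuousAt hv (h f hf)

theorem SeparatesOrbits.exists_tendsto_nhdsSet_orbit [l.NeBot] (hA : SeparatesOrbits G A)
    (hA_cont : ∀ f ∈ A, Continuous f) (hK : IsCompact K) (hu : ∀ᶠ t in l, u t ∈ K)
    (h : ∀ f ∈ A, ∃ L, Tendsto (f ∘ u) l (𝓝 L)) :
    ∃ w, Tendsto u l (𝓝ˢ (MulAction.orbit G w)) := by
  obtain ⟨w, -, hw⟩ := hK.exists_mapClusterPt_of_frequently hu.frequently
  refine ⟨w, hA.tendsto_nhdsSet_orbit hA_cont hK hu fun f hf => ?_⟩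
  obtain ⟨L, hL⟩ := h f hf
  rwa [eq_of_mapClusterPt_of_tendsto (hA_cont f hf).continuousAt hw hL]

theorem isClosed_mulAction_fixedPoints [ContinuousConstSMul G X] [T2Space X] :
    IsClosed (MulAction.fixedPoints G X) := by
  simp only [MulAction.fixedPoints, ofPred_forall]
  exact isClosed_iInter fun g => isClosed_eq (continuous_const_smul g) continuous_id

theorem mem_fixedPoints_of_frequently [ContinuousConstSMul G X] [T2Space X]
    (h : Tendsto u l (𝓝ˢ (MulAction.orbit G w)))
    (hu : ∃ᶠ t in l, u t ∈ MulAction.fixedPoints G X) : w ∈ MulAction.fixedPoints G X := by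
  by_contra hw
  have compl_mem : (MulAction.fixedPoints G X)ᶜ ∈ 𝓝ˢ (MulAction.orbit G w) := by
    refine isClosed_mulAction_fixedPoints.isOpen_compl.mem_nhdsSet.2 fun v hv hv_fixed => hw ?_
    rwa [MulAction.mem_fixedPoints'.1 hv_fixed w (MulAction.mem_orbit_symm.1 hv)]
  exact hu (h compl_mem)

end Convergence

section PolyFun

/-- The real polynomial functions on `V`, without reference to a basis: the algebra generated by
the linear functionals. -/
def polyFun (V : Type*) [AddCommGroup V] [Module ℝ V] : Subalgebra ℝ (V → ℝ) :=
  Algebra.adjoin ℝ (range fun ℓ : Module.Dual ℝ V => ⇑ℓ)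

theorem coe_mem_polyFun {V : Type*} [AddCommGroup V] [Module ℝ V] (ℓ : Module.Dual ℝ V) :
    ⇑ℓ ∈ polyFun V :=
  Algebra.subset_adjoin (mem_range_self ℓ)

theorem comp_affine_mem_polyFun {V W : Type*} [AddCommGroup V] [Module ℝ V] [AddCommGroup W]
    [Module ℝ W] {f : V → ℝ} (hf : f ∈ polyFun V) (L : W →ₗ[ℝ] V) (v₀ : V) :
    (fun w => f (L w + v₀)) ∈ polyFun W := by
  induction hf using Algebra.adjoin_induction with
  | mem f hf =>
    obtain ⟨ℓ, rfl⟩ := hf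
    simp only [map_add]
    exact add_mem (coe_mem_polyFun (ℓ ∘ₗ L)) ((polyFun W).algebraMap_mem (ℓ v₀))
  | algebraMap r => exact (polyFun W).algebraMap_mem r
  | add f g _ _ hf hg => exact add_mem hf hg
  | mul f g _ _ hf hg => exact mul_mem hf hg

theorem continuous_of_mem_polyFun {V : Type*} [NormedAddCommGroup V] [NormedSpace ℝ V]
    [FiniteDimensional ℝ V] {f : V → ℝ} (hf : f ∈ polyFun V) : Continuous f := by
  induction hf using Algebra.adjoin_induction with
  | mem f hf =>
    obtain ⟨ℓ, rfl⟩ := hf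
    exact ℓ.continuous_of_finiteDimensional
  | algebraMap r => exact continuous_const
  | add f g _ _ hf hg => exact hf.add hg
  | mul f g _ _ hf hg => exact hf.mul hg

theorem norm_sub_sq_mem_polyFun {V : Type*} [NormedAddCommGroup V] [InnerProductSpace ℝ V]
    [FiniteDimensional ℝ V] (v₀ : V) : (fun v => ‖v - v₀‖ ^ 2) ∈ polyFun V := by
  have norm_sq_mem : (fun v => ‖v‖ ^ 2) ∈ polyFun V := by
    convert sum_mem (S := polyFun V) (t := Finset.univ) fun i _ =>
      pow_mem (coe_mem_polyFun (innerₛₗ ℝ (stdOrthonormalBasis ℝ V i))) 2 using 1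
    ext v
    simp [← (stdOrthonormalBasis ℝ V).sum_sq_norm_inner_right v]
  simpa only [sub_eq_add_neg, LinearMap.id_apply] using
    comp_affine_mem_polyFun norm_sq_mem .id (-v₀)

end PolyFun

section DegreeLE

variable {V : Type*} [AddCommGroup V] [Module ℝ V]

/-- The restriction of `f` to every affine line is a polynomial of degree at most `d`. -/
def DegreeLE (d : ℕ) (f : V → ℝ) : Prop :=
  ∀ v u, ∃ q : ℝ[X], q.natDegree ≤ d ∧ ∀ s : ℝ, f (v + s • u) = q.eval s

variable {d : ℕ} {f : V → ℝ}

theorem DegreeLE.comp_affine {W : Type*} [AddCommGroup W] [Module ℝ W] (hf : DegreeLE d f)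
    (L : W →ₗ[ℝ] V) (v₀ : V) : DegreeLE d fun w => f (L w + v₀) := fun w u => by
  obtain ⟨q, hq, hfq⟩ := hf (L w + v₀) (L u)
  refine ⟨q, hq, fun s => ?_⟩
  simp only [← hfq, map_add, map_smul, add_right_comm]

theorem DegreeLE.exists_homogeneous_decomposition (hf : DegreeLE d f) {A : Submodule ℝ (V → ℝ)}
    (hfA : ∀ s : ℝ, (fun v => f (s • v)) ∈ A) :
    ∃ F : ℕ → V → ℝ, (∀ k, F k ∈ A) ∧ (∀ k (s : ℝ) v, F k (s • v) = s ^ k * F k v) ∧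
      f = ∑ k ∈ Finset.range (d + 1), F k := by
  choose q hq hfq using hf 0
  simp only [zero_add] at hfq
  refine ⟨fun k v => (q v).coeff k, fun k => ?_, fun k s v => ?_, funext fun v => ?_⟩
  · -- Interpolation at `d + 1` nodes expresses the coefficients through dilates of `f`.
    have interpolate_eq : ∀ v, q v = Lagrange.interpolate (Finset.range (d + 1)) (Nat.cast : ℕ → ℝ)
        fun j => f ((j : ℝ) • v) := fun v => by
      refine Lagrange.eq_interpolate_of_eval_eq _ Nat.cast_injective.injOn ?_
        fun j _ => (hfq v j).symm
      rw [Finset.card_range]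
      exact degree_le_natDegree.trans_lt (by exact_mod_cast (hq v).trans_lt d.lt_succ_self)
    simp only [interpolate_eq, Lagrange.interpolate_apply, finsetSum_coeff, coeff_C_mul]
    convert A.sum_mem fun (j : ℕ) (_ : j ∈ Finset.range (d + 1)) => A.smul_mem
      ((Lagrange.basis (Finset.range (d + 1)) Nat.cast j).coeff k) (hfA j) using 1
    ext v
    simp [mul_comm]
  · have comp_eq : q (s • v) = (q v).comp (C s * X) := Polynomial.funext fun r => by
      rw [eval_comp, eval_mul, eval_C, eval_X, ← hfq, ← hfq, smul_smul, mul_comm]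
    simp only [comp_eq, comp_C_mul_X_coeff, mul_comm (s ^ k)]
  · rw [← one_smul ℝ v, hfq, eval_eq_sum_range' (Nat.lt_succ_of_le (hq v)), one_smul]
    simp

end DegreeLE

section InvPolyFun

variable (G V : Type*) [Group G] [NormedAddCommGroup V] [InnerProductSpace ℝ V]
  [DistribMulAction G V]

/-- The algebra `ℝ[V]^G` of invariant polynomial functions. -/
def invPolyFun : Subalgebra ℝ (V → ℝ) where
  carrier := {f | f ∈ polyFun V ∧ ∀ (g : G) v, f (g • v) = f v}
  mul_mem' hf hg := ⟨mul_mem hf.1 hg.1, fun k v => congr_arg₂ (· * ·) (hf.2 k v) (hg.2 k v)⟩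
  add_mem' hf hg := ⟨add_mem hf.1 hg.1, fun k v => congr_arg₂ (· + ·) (hf.2 k v) (hg.2 k v)⟩
  algebraMap_mem' r := ⟨(polyFun V).algebraMap_mem r, fun _ _ => rfl⟩

/-- The invariant polynomial functions of degree at most `d`. -/
def invPolyFunLE (d : ℕ) : Set (V → ℝ) :=
  {f | f ∈ invPolyFun G V ∧ DegreeLE d f}

variable {G V} {f : V → ℝ}

theorem comp_add_mem_invPolyFun [SMulCommClass ℝ G V] (hf : f ∈ invPolyFun G V) (s : ℝ) {v₀ : V}
    (hv₀ : v₀ ∈ MulAction.fixedPoints G V) : (fun v => f (s • v + v₀)) ∈ invPolyFun G V := by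
  refine ⟨comp_affine_mem_polyFun hf.1 (s • .id) v₀, fun g v => ?_⟩
  simpa only [smul_add, hv₀ g, ← smul_comm s g v] using hf.2 g (s • v + v₀)

variable [FiniteDimensional ℝ V] [IsIsometricSMul G V]

theorem norm_sub_sq_mem_invPolyFun {v₀ : V} (hv₀ : v₀ ∈ MulAction.fixedPoints G V) :
    (fun v => ‖v - v₀‖ ^ 2) ∈ invPolyFun G V := by
  refine ⟨norm_sub_sq_mem_polyFun v₀, fun g v => ?_⟩
  simp only [← dist_eq_norm]
  rw [← dist_smul g v v₀, hv₀ g]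

theorem separatesOrbits_invPolyFun [Finite G] :
    SeparatesOrbits G (invPolyFun G V : Set (V → ℝ)) := by
  cases nonempty_fintype G
  intro v w h
  let f : V → ℝ := ∏ g : G, fun u => ‖u - g • w‖ ^ 2
  have f_mem : f ∈ invPolyFun G V := by
    refine ⟨prod_mem fun g _ => norm_sub_sq_mem_polyFun (g • w), fun k u => ?_⟩
    simp only [f, Finset.prod_apply, ← dist_eq_norm]
    refine Fintype.prod_equiv (Equiv.mulLeft k⁻¹) _ _ fun g => ?_
    rw [Equiv.coe_mulLeft, mul_smul, ← dist_smul k u, smul_inv_smul]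
  have f_w : f w = 0 := by
    simp only [f, Finset.prod_apply]
    exact Finset.prod_eq_zero (Finset.mem_univ 1) (by simp)
  obtain ⟨g, -, hg⟩ := Finset.prod_eq_zero_iff.1
    ((Finset.prod_apply v Finset.univ _).symm.trans ((h f f_mem).trans f_w))
  exact ⟨g, (sub_eq_zero.1 (norm_eq_zero.1 (pow_eq_zero_iff two_ne_zero |>.1 hg))).symm⟩

end InvPolyFun

section OrbitPolynomial

theorem prodXSubSMul_coeff_mem {G R : Type*} [Group G] [Fintype G] [CommRing R]
    [MulSemiringAction G R] {S : Subring R} {r : R} (hr : ∀ g : G, g • r ∈ S) (k : ℕ) :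
    (prodXSubSMul G R r).coeff k ∈ S := by
  have mem_lifts : prodXSubSMul G R r ∈ lifts S.subtype := prod_mem fun h _ => by
    induction h using QuotientGroup.induction_on with
    | H g => exact (liftsRing S.subtype).sub_mem (X_mem_lifts _) (C_mem_lifts S.subtype ⟨_, hr g⟩)
  obtain ⟨s, hs⟩ := (lifts_iff_coeff_lifts _).1 mem_lifts k
  exact hs ▸ s.2

open Classical in
theorem eval_derivative_prodXSubSMul {G R : Type*} [Group G] [Fintype G] [CommRing R]
    [MulSemiringAction G R] (r : R) :
    (derivative (prodXSubSMul G R r)).eval r =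
      ∏ h ∈ Finset.univ.erase ((1 : G) : G ⧸ MulAction.stabilizer G r),
        (r - MulAction.ofQuotientStabilizer G r h) := by
  have := Lagrange.eval_nodal_derivative_eval_node_eq (v := MulAction.ofQuotientStabilizer G r)
    (Finset.mem_univ ((1 : G) : G ⧸ MulAction.stabilizer G r))
  rw [MulAction.ofQuotientStabilizer_mk, one_smul, Lagrange.eval_nodal] at this
  exact this

open Classical in
theorem exists_polynomial_coeff_mem_invPolyFun {G V : Type*} [Group G] [Finite G]
    [NormedAddCommGroup V] [InnerProductSpace ℝ V] [DistribMulAction G V] [SMulCommClass ℝ G V]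
    {q : V → ℝ} (hq : q ∈ polyFun V) :
    ∃ P : (V → ℝ)[X], (∀ k, P.coeff k ∈ invPolyFun G V) ∧ P.eval q = 0 ∧
      ∀ v, (∀ g : G, q (g • v) = q v → ∀ u, q (g • u) = q u) → (derivative P).eval q v ≠ 0 := by
  let : MulSemiringAction Gᵈᵐᵃ (V → ℝ) :=
    { (inferInstance : DistribMulAction Gᵈᵐᵃ (V → ℝ)) with
      smul_one := fun _ => rfl
      smul_mul := fun _ _ _ => rfl }
  have : Finite Gᵈᵐᵃ := Finite.of_equiv G DomMulAct.mk
  let : Fintype Gᵈᵐᵃ := Fintype.ofFinite Gᵈᵐᵃ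
  have : SMulCommClass G ℝ V := .symm ℝ G V
  refine ⟨prodXSubSMul Gᵈᵐᵃ (V → ℝ) q, fun k => ⟨?_, fun g v => ?_⟩, ?_, fun v hv => ?_⟩
  · refine prodXSubSMul_coeff_mem (S := (polyFun V).toSubring) (fun g => ?_) k
    have comp_smul_mem : (fun v => q (DomMulAct.mk.symm g • v)) ∈ polyFun V := by
      simpa using comp_affine_mem_polyFun hq (DistribSMul.toLinearMap ℝ V (DomMulAct.mk.symm g)) 0
    exact comp_smul_mem
  · exact congr_fun (prodXSubSMul.coeff Gᵈᵐᵃ (V → ℝ) q (DomMulAct.mk g) k) v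
  · exact prodXSubSMul.eval Gᵈᵐᵃ (V → ℝ) q
  · rw [eval_derivative_prodXSubSMul, Finset.prod_apply]
    refine Finset.prod_ne_zero_iff.2 fun h hh => ?_
    induction h using QuotientGroup.induction_on with
    | H g =>
      refine fun eq_zero => Finset.ne_of_mem_erase hh (QuotientGroup.eq.2 ?_)
      rw [mul_one, inv_mem_iff]
      exact funext (hv (DomMulAct.mk.symm g) (sub_eq_zero.1 eq_zero).symm)

end OrbitPolynomial

section SmoothAlong

variable (G : Type*) {V : Type*} [Group G] [NormedAddCommGroup V] [InnerProductSpace ℝ V]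
  [DistribMulAction G V]

/-- All invariant polynomials are of class `C^d` along the curve `x` at `t`, that is, the curve of
orbits of `x` is of class `C^d` at `t`. -/
def SmoothAlong (d : ℕ) (x : ℝ → V) (t : ℝ) : Prop :=
  ∀ f ∈ invPolyFun G V, ContDiffAt ℝ d (fun s => f (x s)) t

variable {G} {d : ℕ} {x y : ℝ → V} {t : ℝ} {v₀ : V} {r : ℝ}

theorem SameProjection.apply_eq (h : SameProjection G x y) {f : V → ℝ} (hf : f ∈ invPolyFun G V)
    (s : ℝ) : f (y s) = f (x s) := by
  obtain ⟨g, hg⟩ := h s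
  rw [← hg]
  exact hf.2 g (x s)

theorem SmoothAlong.congr (hx : SmoothAlong G d x t) (h : SameProjection G x y) :
    SmoothAlong G d y t := fun f hf => by
  simpa only [h.apply_eq hf] using hx f hf

variable [Finite G]

theorem SmoothAlong.contDiffAt_of_separates [SMulCommClass ℝ G V] (hx : SmoothAlong G d x t)
    (hd : d ≠ 0) {q : V → ℝ} (hq : q ∈ polyFun V) (hq_cont : ContinuousAt (fun s => q (x s)) t)
    (hq_sep : ∀ g : G, q (g • x t) = q (x t) → ∀ u, q (g • u) = q u) :
    ContDiffAt ℝ d (fun s => q (x s)) t := by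
  obtain ⟨P, hP_coeff, hP_root, hP_simple⟩ := exists_polynomial_coeff_mem_invPolyFun (G := G) hq
  refine contDiffAt_of_isRoot_of_derivative_ne_zero (n := d) (by exact_mod_cast hd)
    (P := fun s => P.map (Pi.evalRingHom _ (x s))) (fun s => natDegree_map_le.trans_lt
    P.natDegree.lt_succ_self) (fun k => ?_) hq_cont (.of_forall fun s => ?_) ?_
  · simp only [coeff_map]
    exact hx _ (hP_coeff k)
  · exact IsRoot.map (f := Pi.evalRingHom _ (x s)) hP_root
  · rw [derivative_map]
    exact (eval_map_apply (Pi.evalRingHom _ (x t)) q).trans_ne (hP_simple (x t) hq_sep)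

variable [FiniteDimensional ℝ V] [IsIsometricSMul G V]

theorem SmoothAlong.tendsto_nhdsSet_orbit (hx : SmoothAlong G d x t) :
    Tendsto x (𝓝 t) (𝓝ˢ (MulAction.orbit G (x t))) := by
  have norm_cont : ContinuousAt (fun s => ‖x s‖) t := by
    simpa using (hx _ (norm_sub_sq_mem_invPolyFun fun g => smul_zero g)).continuousAt.sqrt
  refine separatesOrbits_invPolyFun.tendsto_nhdsSet_orbit
    (fun f hf => continuous_of_mem_polyFun hf.1) (isCompact_closedBall 0 (‖x t‖ + 1)) ?_
    fun f hf => (hx f hf).continuousAt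
  filter_upwards [norm_cont.eventually_lt_const (lt_add_one _)] with s hs
  exact mem_closedBall_zero_iff.2 hs.le

end SmoothAlong

section SliceRadius

variable (G : Type*) {X : Type*} [Group G] [MetricSpace X] [MulAction G X]

/-- The ball of radius `r` about `v₀` is a slice for the action: only the elements of the
stabilizer of `v₀` do not move it away from itself. -/
def IsSliceRadius (v₀ : X) (r : ℝ) : Prop :=
  ∀ v ∈ Metric.ball v₀ r, ∀ g ∉ MulAction.stabilizer G v₀, r < dist (g • v) v₀

variable {G} {v₀ v : X} {r : ℝ}

theorem eventually_isSliceRadius [Finite G] [IsIsometricSMul G X] (v₀ : X) :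
    ∀ᶠ r in 𝓝[>] 0, IsSliceRadius G v₀ r := by
  have two_mul_lt : ∀ᶠ r in 𝓝[>] (0 : ℝ), ∀ g : G, g ∉ MulAction.stabilizer G v₀ →
      2 * r < dist (g • v₀) v₀ := by
    refine eventually_all.2 fun g => eventually_imp_distrib_left.2 fun hg => ?_
    have tendsto_zero : Tendsto (fun r : ℝ => 2 * r) (𝓝[>] 0) (𝓝 0) :=
      (Continuous.tendsto' (by fun_prop) 0 0 (mul_zero 2)).mono_left nhdsWithin_le_nhds
    exact tendsto_zero.eventually_lt_const (dist_pos.2 hg)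
  filter_upwards [two_mul_lt] with r hr v hv g hg
  have := dist_triangle_left (g • v₀) v₀ (g • v)
  rw [dist_smul] at this
  linarith [hr g hg, Metric.mem_ball.1 hv]

theorem IsSliceRadius.mem_stabilizer (hr : IsSliceRadius G v₀ r) (hv : v ∈ Metric.ball v₀ r) {g : G}
    (hg : g • v ∈ Metric.closedBall v₀ r) : g ∈ MulAction.stabilizer G v₀ := by
  by_contra h
  exact (hr v hv g h).not_ge hg

theorem IsSliceRadius.tendsto_nhdsSet_orbit_stabilizer (hr : IsSliceRadius G v₀ r)
    (hv : v ∈ Metric.ball v₀ r) {α : Type*} {l : Filter α} {x : α → X}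
    (h : Tendsto x l (𝓝ˢ (MulAction.orbit G v))) (hx : ∀ᶠ s in l, x s ∈ Metric.ball v₀ r) :
    Tendsto x l (𝓝ˢ (MulAction.orbit (MulAction.stabilizer G v₀) v)) := by
  have inter_subset : MulAction.orbit G v ∩ Metric.closedBall v₀ r ⊆
      MulAction.orbit (MulAction.stabilizer G v₀) v := by
    rintro _ ⟨⟨g, rfl⟩, hg⟩
    exact ⟨⟨g, hr.mem_stabilizer hv hg⟩, rfl⟩
  intro N hN
  have union_mem : N ∪ (Metric.closedBall v₀ r)ᶜ ∈ 𝓝ˢ (MulAction.orbit G v) :=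
    Metric.isClosed_closedBall.nhdsSet_le_sup _ <|
      mem_sup.2 ⟨mem_of_superset (nhdsSet_mono inter_subset hN) subset_union_left,
        mem_principal.2 subset_union_right⟩
  filter_upwards [h union_mem, hx] with s hs hsr
  exact hs.resolve_right fun h => h (Metric.ball_subset_closedBall hsr)

end SliceRadius

section Slice

theorem isIsometricSMul_subgroup {G X : Type*} [Group G] [PseudoEMetricSpace X] [MulAction G X]
    [IsIsometricSMul G X] (H : Subgroup G) : IsIsometricSMul H X :=
  ⟨fun h => isometry_smul X (h : G)⟩

variable {G V : Type*} [Group G] [Finite G] [NormedAddCommGroup V] [InnerProductSpace ℝ V]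
  [DistribMulAction G V] [IsIsometricSMul G V]
  {d : ℕ} {x : ℝ → V} {t : ℝ} {v₀ : V} {r : ℝ}

attribute [local instance] isIsometricSMul_subgroup

theorem SeparatesOrbits.stabilizer [SMulCommClass ℝ G V]
    (h : SeparatesOrbits G (invPolyFunLE G V d)) (v₀ : V) :
    SeparatesOrbits (MulAction.stabilizer G v₀) (invPolyFunLE (MulAction.stabilizer G v₀) V d) := by
  intro v w hvw
  obtain ⟨r, hr, hr_pos⟩ :=
    ((eventually_isSliceRadius (G := G) v₀).and eventually_mem_nhdsWithin).exists
  have eventually_mem_ball : ∀ u : V, ∀ᶠ s in 𝓝[≠] (0 : ℝ), s • u + v₀ ∈ Metric.ball v₀ r :=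
    fun u => nhdsWithin_le_nhds <| (Continuous.tendsto' (by fun_prop) 0 v₀ (by simp)).eventually
      (Metric.ball_mem_nhds v₀ hr_pos)
  obtain ⟨s, ⟨hv, hw⟩, hs⟩ :=
    (((eventually_mem_ball v).and (eventually_mem_ball w)).and eventually_mem_nhdsWithin).exists
  obtain ⟨g, hg⟩ := h (s • v + v₀) (s • w + v₀) fun f ⟨⟨hf_poly, hf_inv⟩, hf_deg⟩ =>
    hvw (fun u => f (s • u + v₀))
      ⟨comp_add_mem_invPolyFun (G := MulAction.stabilizer G v₀) ⟨hf_poly, fun k => hf_inv k⟩ s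
        fun k => k.2, hf_deg.comp_affine (s • .id) v₀⟩
  change g • (s • w + v₀) = s • v + v₀ at hg
  have hg_stab : g ∈ MulAction.stabilizer G v₀ :=
    hr.mem_stabilizer hw (hg ▸ Metric.ball_subset_closedBall hv)
  rw [smul_add, MulAction.mem_stabilizer_iff.1 hg_stab, add_left_inj, ← smul_comm s g w] at hg
  exact ⟨⟨g, hg_stab⟩, smul_right_injective V hs hg⟩

variable [FiniteDimensional ℝ V]

theorem IsSliceRadius.continuousAt_of_mem_invPolyFun (hr : IsSliceRadius G v₀ r)
    (hx : SmoothAlong G d x t) (hxr : ∀ᶠ s in 𝓝 t, x s ∈ Metric.ball v₀ r) {f : V → ℝ}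
    (hf : f ∈ invPolyFun (MulAction.stabilizer G v₀) V) : ContinuousAt (fun s => f (x s)) t := by
  have maps_to : MapsTo f (MulAction.orbit (MulAction.stabilizer G v₀) (x t)) {f (x t)} := by
    rintro _ ⟨h, rfl⟩
    exact hf.2 h (x t)
  have := ((continuous_of_mem_polyFun hf.1).tendsto_nhdsSet maps_to).comp
    (hr.tendsto_nhdsSet_orbit_stabilizer hxr.self_of_nhds hx.tendsto_nhdsSet_orbit hxr)
  rwa [nhdsSet_singleton] at this

variable [SMulCommClass ℝ G V]

theorem SmoothAlong.stabilizer (hx : SmoothAlong G d x t) (hd : d ≠ 0) (hr : IsSliceRadius G v₀ r)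
    (hxr : ∀ᶠ s in 𝓝 t, x s ∈ Metric.ball v₀ r) :
    SmoothAlong (MulAction.stabilizer G v₀) d x t := by
  have contDiffAt_of_separates : ∀ f ∈ invPolyFun (MulAction.stabilizer G v₀) V,
      (∀ g : G, f (g • x t) = f (x t) → g ∈ MulAction.stabilizer G v₀) →
      ContDiffAt ℝ d (fun s => f (x s)) t := fun f hf hsep =>
    hx.contDiffAt_of_separates hd hf.1 (hr.continuousAt_of_mem_invPolyFun hx hxr hf)
      fun g hg => hf.2 ⟨g, hsep g hg⟩
  let q : V → ℝ := fun v => ‖v - v₀‖ ^ 2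
  have hq : q ∈ invPolyFun (MulAction.stabilizer G v₀) V :=
    norm_sub_sq_mem_invPolyFun fun h => h.2
  have hq_sep : ∀ g : G, q (g • x t) = q (x t) → g ∈ MulAction.stabilizer G v₀ := fun g hg => by
    refine hr.mem_stabilizer hxr.self_of_nhds (Metric.ball_subset_closedBall ?_)
    simpa only [Metric.mem_ball, dist_eq_norm,
      (pow_left_inj₀ (norm_nonneg _) (norm_nonneg _) two_ne_zero).1 hg] using hxr.self_of_nhds
  intro f hf
  -- For general `a` the combination `f + a q`, like `q`, separates `x t` from `g • x t` unless `g`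
  -- is in the stabilizer.
  obtain ⟨a, ha⟩ : ∃ a : ℝ, ∀ g : G, (f + a • q) (g • x t) = (f + a • q) (x t) →
      q (g • x t) = q (x t) := by
    refine (eventually_all.2 fun g => ?_ : ∀ᶠ a : ℝ in cofinite, ∀ g : G, _).exists
    refine Set.Subsingleton.finite fun a ha b hb => ?_
    simp only [mem_compl_iff, mem_ofPred_eq, Pi.add_apply, Pi.smul_apply, smul_eq_mul,
      Classical.not_imp] at ha hb
    exact mul_right_cancel₀ (sub_ne_zero.2 ha.2) (by linear_combination ha.1 - hb.1)
  have hfq : f + a • q ∈ invPolyFun (MulAction.stabilizer G v₀) V :=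
    add_mem hf (Subalgebra.smul_mem _ hq a)
  have := (contDiffAt_of_separates _ hfq fun g hg => hq_sep g (ha g hg)).sub
    ((contDiffAt_of_separates q hq hq_sep).const_smul a)
  simpa only [Pi.add_apply, Pi.smul_apply, add_sub_cancel_right] using this

end Slice

section FixedPoint

variable {G V : Type*} [Group G] [NormedAddCommGroup V] [InnerProductSpace ℝ V]
  [FiniteDimensional ℝ V] [DistribMulAction G V] [IsIsometricSMul G V] {d : ℕ} {x : ℝ → V}
  {t₀ : ℝ}

theorem SmoothAlong.exists_slope_mem_closedBall (hx : SmoothAlong G d x t₀) (hd : 2 ≤ d)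
    (hfix : x t₀ ∈ MulAction.fixedPoints G V) :
    ∃ C, ∀ᶠ t in 𝓝[≠] t₀, slope x t₀ t ∈ Metric.closedBall 0 C := by
  have contDiffAt : ContDiffAt ℝ (1 + 1) (fun t => ‖x t - x t₀‖ ^ 2) t₀ :=
    (hx _ (norm_sub_sq_mem_invPolyFun hfix)).of_le (by exact_mod_cast hd)
  have isLittleO : (fun t => ‖x t - x t₀‖ ^ 2) =o[𝓝[≠] t₀] fun t => (t - t₀) ^ 1 := by
    simp only [pow_one]
    exact (isLittleO_sub_of_nonneg (contDiffAt.differentiableAt (by simp))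
      (fun t => sq_nonneg _) (by simp)).mono nhdsWithin_le_nhds
  obtain ⟨L, hL⟩ := exists_tendsto_div_pow_of_contDiffAt_of_isLittleO contDiffAt isLittleO
  have norm_slope_sq : ∀ t, ‖x t - x t₀‖ ^ 2 / (t - t₀) ^ 2 = ‖slope x t₀ t‖ ^ 2 := fun t => by
    rw [slope_def_module, norm_smul, mul_pow, norm_inv, inv_pow, Real.norm_eq_abs, sq_abs,
      inv_mul_eq_div]
  simp only [Nat.reduceAdd, norm_slope_sq] at hL
  refine ⟨√(L + 1), (hL.eventually_lt_const (lt_add_one L)).mono fun t ht => ?_⟩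
  exact mem_closedBall_zero_iff.2 (Real.le_sqrt_of_sq_le ht.le)

variable [SMulCommClass ℝ G V]

theorem SmoothAlong.exists_tendsto_comp_slope_of_homogeneous (hx : SmoothAlong G d x t₀)
    (hd : 2 ≤ d) (hfix : x t₀ ∈ MulAction.fixedPoints G V) {F : V → ℝ} (hF : F ∈ invPolyFun G V)
    {k : ℕ} (hk : k ≤ d) (hF_hom : ∀ (s : ℝ) v, F (s • v) = s ^ k * F v) :
    ∃ L, Tendsto (fun t => F (slope x t₀ t)) (𝓝[≠] t₀) (𝓝 L) := by
  rcases k with _ | k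
  · refine ⟨F 0, tendsto_const_nhds.congr fun t => ?_⟩
    simpa using hF_hom 0 (slope x t₀ t)
  have contDiffAt : ContDiffAt ℝ (k + 1) (fun t => F (x t - x t₀)) t₀ := by
    have neg_fixed : -x t₀ ∈ MulAction.fixedPoints G V := fun g => by rw [smul_neg, hfix g]
    have := hx _ (comp_add_mem_invPolyFun hF 1 neg_fixed)
    simp only [one_smul, ← sub_eq_add_neg] at this
    exact this.of_le (by exact_mod_cast hk)
  have sub_smul_slope : ∀ t, F (x t - x t₀) = (t - t₀) ^ (k + 1) * F (slope x t₀ t) := fun t => by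
    rw [← hF_hom, sub_smul_slope, vsub_eq_sub]
  have isLittleO : (fun t => F (x t - x t₀)) =o[𝓝[≠] t₀] fun t => (t - t₀) ^ k := by
    obtain ⟨C, hC⟩ := hx.exists_slope_mem_closedBall hd hfix
    obtain ⟨M, hM⟩ := (isCompact_closedBall (0 : V) C).exists_bound_of_continuousOn
      (continuous_of_mem_polyFun hF.1).continuousOn
    have bounded : (fun t => F (slope x t₀ t)) =O[𝓝[≠] t₀] (fun _ => (1 : ℝ)) :=
      IsBigO.of_bound M (hC.mono fun t ht => by simpa using hM _ ht)
    simpa only [sub_smul_slope, mul_one] using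
      ((sub_pow_succ_isLittleO t₀ k).mono nhdsWithin_le_nhds).mul_isBigO bounded
  obtain ⟨L, hL⟩ := exists_tendsto_div_pow_of_contDiffAt_of_isLittleO contDiffAt isLittleO
  refine ⟨L, hL.congr' ?_⟩
  filter_upwards [eventually_sub_ne_zero t₀] with t ht
  rw [sub_smul_slope, mul_div_cancel_left₀ _ (pow_ne_zero _ ht)]

theorem SmoothAlong.exists_tendsto_comp_slope (hx : SmoothAlong G d x t₀) (hd : 2 ≤ d)
    (hfix : x t₀ ∈ MulAction.fixedPoints G V) {f : V → ℝ} (hf : f ∈ invPolyFunLE G V d) :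
    ∃ L, Tendsto (fun t => f (slope x t₀ t)) (𝓝[≠] t₀) (𝓝 L) := by
  obtain ⟨F, hF, hF_hom, hF_sum⟩ := hf.2.exists_homogeneous_decomposition
    (A := (invPolyFun G V).toSubmodule) fun s => by
      simpa using comp_add_mem_invPolyFun hf.1 s fun g => smul_zero g
  have component : ∀ k ∈ Finset.range (d + 1),
      ∃ L, Tendsto (fun t => F k (slope x t₀ t)) (𝓝[≠] t₀) (𝓝 L) := fun k hk =>
    hx.exists_tendsto_comp_slope_of_homogeneous hd hfix (hF k)
      (Nat.lt_succ_iff.1 (Finset.mem_range.1 hk)) (hF_hom k)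
  choose! L hL using component
  exact ⟨_, by simpa only [hF_sum, Finset.sum_apply] using tendsto_finsetSum _ hL⟩

theorem SmoothAlong.exists_tendsto_slope_nhdsSet_orbit (hx : SmoothAlong G d x t₀) (hd : 2 ≤ d)
    (hsep : SeparatesOrbits G (invPolyFunLE G V d)) (hfix : x t₀ ∈ MulAction.fixedPoints G V) :
    ∃ w, Tendsto (slope x t₀) (𝓝[≠] t₀) (𝓝ˢ (MulAction.orbit G w)) := by
  obtain ⟨C, hC⟩ := hx.exists_slope_mem_closedBall hd hfix
  exact hsep.exists_tendsto_nhdsSet_orbit (fun f hf => continuous_of_mem_polyFun hf.1.1)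
    (isCompact_closedBall 0 C) hC fun f hf => hx.exists_tendsto_comp_slope hd hfix hf

variable [Finite G]

theorem SmoothAlong.differentiableAt_of_frequently_mem_fixedPoints (hx : SmoothAlong G d x t₀)
    (hd : 2 ≤ d) (hsep : SeparatesOrbits G (invPolyFunLE G V d))
    (h : ∃ᶠ t in 𝓝[≠] t₀, x t ∈ MulAction.fixedPoints G V) : DifferentiableAt ℝ x t₀ := by
  have hfix : x t₀ ∈ MulAction.fixedPoints G V :=
    mem_fixedPoints_of_frequently (hx.tendsto_nhdsSet_orbit.mono_left nhdsWithin_le_nhds) h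
  obtain ⟨w, hw⟩ := hx.exists_tendsto_slope_nhdsSet_orbit hd hsep hfix
  have w_fixed : w ∈ MulAction.fixedPoints G V :=
    mem_fixedPoints_of_frequently hw <| h.mono fun t ht g => by
      rw [slope_def_module, ← smul_comm, smul_sub, ht g, hfix g]
  have orbit_w : MulAction.orbit G w = {w} :=
    (MulAction.subsingleton_orbit_iff_mem_fixedPoints.2 w_fixed).eq_singleton_of_mem
      (MulAction.mem_orbit_self w)
  rw [orbit_w, nhdsSet_singleton] at hw
  exact (hasDerivAt_iff_tendsto_slope.2 hw).differentiableAt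

end FixedPoint

section IsolatedFixedPoint

theorem continuousAt_slope {E : Type*} [NormedAddCommGroup E] [NormedSpace ℝ E] {y : ℝ → E}
    {a t : ℝ} (hy : ContinuousAt y t) (ht : t ≠ a) : ContinuousAt (slope y a) t :=
  ((continuousAt_id.sub continuousAt_const).inv₀ (sub_ne_zero.2 ht)).smul
    (hy.sub continuousAt_const)

theorem exists_hasDerivWithinAt_of_tendsto_slope_nhdsSet {E : Type*} [NormedAddCommGroup E]
    [NormedSpace ℝ E] {y : ℝ → E} {a : ℝ} {F : Set E} (hF : F.Finite)
    (hy : ∀ᶠ t in 𝓝[≠] a, ContinuousAt y t) (h : Tendsto (slope y a) (𝓝[≠] a) (𝓝ˢ F)) :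
    (∃ w ∈ F, HasDerivWithinAt y w (Iic a) a) ∧ ∃ w ∈ F, HasDerivWithinAt y w (Ici a) a := by
  have slope_cont : ∀ᶠ t in 𝓝[≠] a, ContinuousAt (slope y a) t := by
    filter_upwards [hy, eventually_mem_nhdsWithin] with t ht hta using continuousAt_slope ht hta
  have left_le : 𝓝[<] a ≤ 𝓝[≠] a := nhdsLT_le_nhdsNE a
  have right_le : 𝓝[>] a ≤ 𝓝[≠] a := nhdsGT_le_nhdsNE a
  obtain ⟨w, hw, left⟩ := exists_tendsto_nhds_of_tendsto_nhdsSet_finite hF (nhdsLT_basis a)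
    (fun _ _ => isPreconnected_Ioo) (slope_cont.filter_mono left_le) (h.mono_left left_le)
  obtain ⟨w', hw', right⟩ := exists_tendsto_nhds_of_tendsto_nhdsSet_finite hF (nhdsGT_basis a)
    (fun _ _ => isPreconnected_Ioo) (slope_cont.filter_mono right_le) (h.mono_left right_le)
  refine ⟨⟨w, hw, ?_⟩, w', hw', ?_⟩
  · exact ((hasDerivWithinAt_iff_tendsto_slope' (by simp)).2 left).Iic_of_Iio
  · exact ((hasDerivWithinAt_iff_tendsto_slope' (by simp)).2 right).Ici_of_Ioi

variable {G V : Type*} [Group G] [Finite G] [NormedAddCommGroup V] [InnerProductSpace ℝ V]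
  [FiniteDimensional ℝ V] [DistribMulAction G V] [SMulCommClass ℝ G V] [IsIsometricSMul G V]
  {d : ℕ} {x : ℝ → V} {t₀ : ℝ}

theorem SmoothAlong.liftableAt_of_eventually_nhdsNE (hx : SmoothAlong G d x t₀) (hd : 2 ≤ d)
    (hsep : SeparatesOrbits G (invPolyFunLE G V d)) (hfix : x t₀ ∈ MulAction.fixedPoints G V)
    (h : ∀ᶠ t in 𝓝[≠] t₀, LiftableAt G x t) : LiftableAt G x t₀ := by
  obtain ⟨y, hy, dy⟩ := exists_sameProjection_of_eventually_liftableAt h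
  have y_fixed : y t₀ ∈ MulAction.fixedPoints G V := by
    rwa [MulAction.mem_fixedPoints'.1 hfix _ (hy t₀)]
  obtain ⟨w, hw⟩ := (hx.congr hy).exists_tendsto_slope_nhdsSet_orbit hd hsep y_fixed
  obtain ⟨⟨_, ⟨g, rfl⟩, left⟩, _, ⟨k, rfl⟩, right⟩ :=
    exists_hasDerivWithinAt_of_tendsto_slope_nhdsSet (finite_range fun g : G => g • w)
      (dy.mono fun t ht => ht.continuousAt) hw
  have right' := right.const_smul (g * k⁻¹)
  simp only [smul_smul, inv_mul_cancel_right] at right'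
  refine ⟨(Iic t₀).piecewise y ((g * k⁻¹) • y), hy.piecewise (hy.smul _) _, ?_⟩
  filter_upwards [eventually_nhdsWithin_iff.1 dy] with t ht
  rcases lt_trichotomy t t₀ with lt | rfl | gt
  · exact differentiableAt_piecewise_Iic_of_lt (ht lt.ne) lt
  · exact (hasDerivAt_piecewise_Iic left right' (y_fixed _).symm).differentiableAt
  · exact differentiableAt_piecewise_Iic_of_gt ((ht gt.ne').const_smul _) gt

end IsolatedFixedPoint

section Induction

variable {G V : Type*} [Group G] [Finite G] [NormedAddCommGroup V] [InnerProductSpace ℝ V]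
  [FiniteDimensional ℝ V] [DistribMulAction G V] [IsIsometricSMul G V]
  {d : ℕ} {x : ℝ → V} {t₀ : ℝ}

attribute [local instance] isIsometricSMul_subgroup

theorem SameProjection.of_subgroup {G X α : Type*} [Group G] [MulAction G X] {H : Subgroup G}
    {x y : α → X} (h : SameProjection H x y) : SameProjection G x y := fun t =>
  MulAction.orbit_subgroup_subset H (x t) (h t)

theorem SmoothAlong.exists_sameProjection_mem_ball (hx : SmoothAlong G d x t₀) {r : ℝ}
    (hr : 0 < r) : ∃ y, SameProjection G x y ∧ ∀ᶠ t in 𝓝 t₀, y t ∈ Metric.ball (x t₀) r := by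
  have eventually_exists : ∀ᶠ t in 𝓝 t₀, ∃ g : G, g • x t ∈ Metric.ball (x t₀) r := by
    have mem_nhdsSet : ⋃ g : G, Metric.ball (g • x t₀) r ∈ 𝓝ˢ (MulAction.orbit G (x t₀)) :=
      (isOpen_iUnion fun g => Metric.isOpen_ball).mem_nhdsSet.2 <| by
        rintro _ ⟨g, rfl⟩
        exact mem_iUnion_of_mem g (Metric.mem_ball_self hr)
    filter_upwards [hx.tendsto_nhdsSet_orbit mem_nhdsSet] with t ht
    obtain ⟨g, hg⟩ := mem_iUnion.1 ht
    refine ⟨g⁻¹, ?_⟩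
    rwa [Metric.mem_ball, ← dist_smul g, smul_inv_smul]
  have exists_imp : ∀ t, ∃ g : G, (∃ k : G, k • x t ∈ Metric.ball (x t₀) r) →
      g • x t ∈ Metric.ball (x t₀) r := fun t => by
    by_cases h : ∃ k : G, k • x t ∈ Metric.ball (x t₀) r
    · exact h.imp fun _ hk _ => hk
    · exact ⟨1, fun h' => (h h').elim⟩
  choose g hg using exists_imp
  exact ⟨fun t => g t • x t, fun t => MulAction.mem_orbit _ _, eventually_exists.mono hg⟩

theorem liftableAt_of_liftableOn_stabilizer [SMulCommClass ℝ G V] (hd : d ≠ 0)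
    (hx : ∀ᶠ t in 𝓝 t₀, SmoothAlong G d x t)
    (h : ∀ (y : ℝ → V) (W : Set ℝ), IsOpen W →
      (∀ t ∈ W, SmoothAlong (MulAction.stabilizer G (x t₀)) d y t) →
        LiftableOn (MulAction.stabilizer G (x t₀)) y W) : LiftableAt G x t₀ := by
  obtain ⟨r, hr, hr_pos⟩ :=
    ((eventually_isSliceRadius (G := G) (x t₀)).and eventually_mem_nhdsWithin).exists
  obtain ⟨y, hy, hyr⟩ := hx.self_of_nhds.exists_sameProjection_mem_ball hr_pos
  obtain ⟨W, hW_smooth, hW, ht₀⟩ := eventually_nhds_iff.1 <|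
    (hx.and hyr.eventually_nhds).mono fun t ht => (ht.1.congr hy).stabilizer hd hr ht.2
  obtain ⟨z, hz, dz⟩ := (h y W hW hW_smooth).liftableAt (hW.mem_nhds ht₀)
  exact ⟨z, hy.trans hz.of_subgroup, dz⟩

theorem card_stabilizer_lt_card {G X : Type*} [Group G] [Finite G] [MulAction G X] {v : X}
    (hv : v ∉ MulAction.fixedPoints G X) : Nat.card (MulAction.stabilizer G v) < Nat.card G := by
  refine (Subgroup.card_le_card_group _).lt_of_ne fun h => hv fun g => ?_
  exact MulAction.mem_stabilizer_iff.1 (Subgroup.eq_top_of_card_eq _ h ▸ Subgroup.mem_top g)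

theorem liftableOn_of_forall_smoothAlong_of_two_le {G V : Type*} [Group G] [Finite G]
    [NormedAddCommGroup V] [InnerProductSpace ℝ V] [FiniteDimensional ℝ V] [DistribMulAction G V]
    [SMulCommClass ℝ G V] [IsIsometricSMul G V] {d : ℕ} {x : ℝ → V} {U : Set ℝ} (hd : 2 ≤ d)
    (hsep : SeparatesOrbits G (invPolyFunLE G V d)) (hU : IsOpen U)
    (hx : ∀ t ∈ U, SmoothAlong G d x t) : LiftableOn G x U := by
  have liftableAt_of_not_fixed : ∀ t ∈ U, x t ∉ MulAction.fixedPoints G V → LiftableAt G x t :=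
    fun t ht hfix => liftableAt_of_liftableOn_stabilizer (by lia)
      (mem_of_superset (hU.mem_nhds ht) hx) fun y W hW hy =>
        have := card_stabilizer_lt_card hfix
        liftableOn_of_forall_smoothAlong_of_two_le hd (hsep.stabilizer (x t)) hW hy
  let W := U ∩ {t | ∀ᶠ s in 𝓝[≠] t, x s ∉ MulAction.fixedPoints G V}
  obtain ⟨y, hy, dy⟩ : LiftableOn G x W := by
    refine liftableOn_of_forall_liftableAt (hU.inter isOpen_setOfPred_eventually_nhdsWithin) ?_
    rintro t ⟨ht, isolated⟩
    by_cases hfix : x t ∈ MulAction.fixedPoints G V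
    · refine (hx t ht).liftableAt_of_eventually_nhdsNE hd hsep hfix ?_
      filter_upwards [isolated, nhdsWithin_le_nhds (hU.mem_nhds ht)] with s hs hsU
      exact liftableAt_of_not_fixed s hsU hs
    · exact liftableAt_of_not_fixed t ht hfix
  refine ⟨y, hy, fun t ht => ?_⟩
  by_cases htW : t ∈ W
  · exact dy t htW
  · have accumulation : ∃ᶠ s in 𝓝[≠] t, x s ∈ MulAction.fixedPoints G V := fun h => htW ⟨ht, h⟩
    refine ((hx t ht).congr hy).differentiableAt_of_frequently_mem_fixedPoints hd hsep ?_
    exact accumulation.mono fun s hs => by rwa [MulAction.mem_fixedPoints'.1 hs _ (hy s)]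
termination_by Nat.card G

end Induction

section LowDegree

variable {G V : Type*} [Group G] [NormedAddCommGroup V] [InnerProductSpace ℝ V]
  [DistribMulAction G V] {d : ℕ}

theorem subsingleton_of_separatesOrbits_zero (hsep : SeparatesOrbits G (invPolyFunLE G V 0)) :
    Subsingleton V := by
  refine subsingleton_of_forall_eq 0 fun v => ?_
  obtain ⟨g, hg⟩ := hsep v 0 fun f hf => by
    obtain ⟨q, hq, hfq⟩ := hf.2 0 v
    rw [eq_C_of_natDegree_le_zero hq] at hfq
    simpa using (hfq 1).trans ((eval_C).trans (eval_C.symm.trans (hfq 0).symm))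
  exact hg.symm.trans (smul_zero g)

theorem mem_fixedPoints_of_separatesOrbits_of_le_one [IsIsometricSMul G V] (hd : d ≤ 1)
    (hsep : SeparatesOrbits G (invPolyFunLE G V d)) (v : V) : v ∈ MulAction.fixedPoints G V := by
  have norm_smul_eq : ∀ (g : G) (u : V), ‖g • u‖ = ‖u‖ := fun g u => by
    rw [← dist_zero_right, ← smul_zero g, dist_smul, dist_zero_right]
  intro g
  have midpoint_mem : v + (1 / 2 : ℝ) • (g • v - v) ∈ MulAction.orbit G v := by
    refine hsep _ _ fun f hf => ?_
    obtain ⟨q, hq, hfq⟩ := hf.2 v (g • v - v)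
    rw [eq_X_add_C_of_natDegree_le_one (hq.trans hd)] at hfq
    have at_zero := hfq 0
    have at_one := hfq 1
    simp only [zero_smul, one_smul, add_zero, add_sub_cancel, hf.1.2, eval_add, eval_mul, eval_C,
      eval_X] at at_zero at_one
    have slope_zero : q.coeff 1 = 0 := by linarith
    rw [hfq, at_zero, slope_zero]
    simp
  have midpoint_eq : ∀ w : V, (1 / 2 : ℝ) • (v + w) = v + (1 / 2 : ℝ) • (w - v) := fun w => by
    module
  have midpoint_norm : ‖(1 / 2 : ℝ) • (v + g • v)‖ = ‖v‖ := by
    obtain ⟨k, hk⟩ := midpoint_mem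
    rw [midpoint_eq, ← hk]
    exact norm_smul_eq k v
  by_contra hne
  exact ((norm_midpoint_lt_iff (norm_smul_eq g v).symm).2 (Ne.symm hne)).ne midpoint_norm

variable [FiniteDimensional ℝ V] {x : ℝ → V} {t : ℝ} {U : Set ℝ}

theorem SmoothAlong.differentiableAt_of_forall_mem_fixedPoints (hx : SmoothAlong G d x t)
    (hd : d ≠ 0) (hfix : ∀ v : V, v ∈ MulAction.fixedPoints G V) : DifferentiableAt ℝ x t := by
  let b := Module.finBasis ℝ V
  refine b.equivFunL.comp_differentiableAt_iff.1 (differentiableAt_pi.2 fun i => ?_)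
  refine (hx (b.coord i) ⟨coe_mem_polyFun _, fun g v => ?_⟩).differentiableAt (by exact_mod_cast hd)
  rw [hfix v g]

theorem liftableOn_of_forall_smoothAlong [Finite G] [SMulCommClass ℝ G V] [IsIsometricSMul G V]
    (hsep : SeparatesOrbits G (invPolyFunLE G V d)) (hU : IsOpen U)
    (hx : ∀ t ∈ U, SmoothAlong G d x t) : LiftableOn G x U := by
  obtain rfl | rfl | hd : d = 0 ∨ d = 1 ∨ 2 ≤ d := by lia
  · have := subsingleton_of_separatesOrbits_zero hsep
    refine ⟨x, .refl x, fun t _ => (differentiableAt_const (x t)).congr_of_eventuallyEq ?_⟩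
    exact .of_forall fun s => Subsingleton.elim _ _
  · exact ⟨x, .refl x, fun t ht => (hx t ht).differentiableAt_of_forall_mem_fixedPoints one_ne_zero
      (mem_fixedPoints_of_separatesOrbits_of_le_one le_rfl hsep)⟩
  · exact liftableOn_of_forall_smoothAlong_of_two_le hd hsep hU hx

end LowDegree

section Generators

/-- The polynomial function on `V` given by a polynomial in the coordinates of the basis `b`. -/
noncomputable def evalCoord {κ V : Type*} [AddCommGroup V] [Module ℝ V] (b : Module.Basis κ ℝ V) :
    MvPolynomial κ ℝ →ₐ[ℝ] V → ℝ :=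
  MvPolynomial.aeval fun k => ⇑(b.coord k)

variable {κ V : Type*}

theorem evalCoord_apply [AddCommGroup V] [Module ℝ V] (b : Module.Basis κ ℝ V)
    (p : MvPolynomial κ ℝ) (v : V) : evalCoord b p v = MvPolynomial.eval (b.repr v) p := by
  have comp_eq : (Pi.evalAlgHom ℝ (fun _ => ℝ) v).comp (evalCoord b) =
      MvPolynomial.aeval (b.repr v) := by
    ext k
    simp [evalCoord]
  exact DFunLike.congr_fun comp_eq p

theorem range_evalCoord [Finite κ] [AddCommGroup V] [Module ℝ V] (b : Module.Basis κ ℝ V) :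
    (evalCoord b).range = polyFun V := by
  cases nonempty_fintype κ
  rw [evalCoord, ← Algebra.adjoin_range_eq_range_aeval]
  refine le_antisymm (Algebra.adjoin_mono ?_) (Algebra.adjoin_le ?_)
  · rintro _ ⟨k, rfl⟩
    exact mem_range_self (b.coord k)
  · rintro _ ⟨ℓ, rfl⟩
    have expansion : ⇑ℓ = ∑ k, ℓ (b k) • ⇑(b.coord k) := funext fun v => by
      rw [← b.sum_repr v, map_sum, b.sum_repr, Finset.sum_apply]
      simp [mul_comm]
    simp only [SetLike.mem_coe]
    rw [expansion]
    exact sum_mem fun k _ => Subalgebra.smul_mem _ (Algebra.subset_adjoin (mem_range_self k)) _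

theorem degreeLE_evalCoord [AddCommGroup V] [Module ℝ V] (b : Module.Basis κ ℝ V)
    {p : MvPolynomial κ ℝ} {d : ℕ} (hp : p.totalDegree ≤ d) : DegreeLE d (evalCoord b p) := by
  intro v u
  let line : κ → ℝ[X] := fun k => C (b.repr v k) + C (b.repr u k) * X
  refine ⟨MvPolynomial.aeval line p, ?_, fun s => ?_⟩
  · have line_degree : ∀ k, (line k).natDegree ≤ 1 := fun k => by
      simp only [line]
      compute_degree
    simpa using MvPolynomial.aeval_natDegree_le p hp line line_degree
  · have comp_eq : (Polynomial.aeval s).comp (MvPolynomial.aeval line) =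
        MvPolynomial.aeval (R := ℝ) (b.repr (v + s • u)) := by
      ext k
      simp [line, mul_comm s]
    rw [evalCoord_apply]
    exact (DFunLike.congr_fun comp_eq p).symm

theorem SeparatesOrbits.of_le_adjoin {G X : Type*} [Group G] [MulAction G X] {A : Set (X → ℝ)}
    {B : Subalgebra ℝ (X → ℝ)} (hB : SeparatesOrbits G (B : Set (X → ℝ)))
    (hBA : B ≤ Algebra.adjoin ℝ A) : SeparatesOrbits G A := fun v w hvw =>
  hB v w fun _ hf => AlgHom.eqOn_adjoin_iff (φ := Pi.evalAlgHom ℝ (fun _ => ℝ) v)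
    (ψ := Pi.evalAlgHom ℝ (fun _ => ℝ) w) |>.2 hvw (hBA hf)

variable {G : Type*} [Group G] [NormedAddCommGroup V] [InnerProductSpace ℝ V]
  [DistribMulAction G V] {d : ℕ}

theorem SmoothAlong.of_le_adjoin {A : Set (V → ℝ)} (hA : invPolyFun G V ≤ Algebra.adjoin ℝ A)
    {x : ℝ → V} {t : ℝ} (hx : ∀ f ∈ A, ContDiffAt ℝ d (fun s => f (x s)) t) :
    SmoothAlong G d x t := fun f hf => by
  have mem_adjoin := hA hf
  clear hf
  induction mem_adjoin using Algebra.adjoin_induction with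
  | mem f hf => exact hx f hf
  | algebraMap r => exact contDiffAt_const
  | add f g _ _ hf hg => exact hf.add hg
  | mul f g _ _ hf hg => exact hf.mul hg

variable {ι : Type*} [Finite κ] {b : Module.Basis κ ℝ V} {σ : ι → MvPolynomial κ ℝ}

theorem invPolyFun_le_adjoin
    (hgen : ∀ p, (∀ (g : G) v, evalCoord b p (g • v) = evalCoord b p v) →
      p ∈ Algebra.adjoin ℝ (range σ)) :
    invPolyFun G V ≤ Algebra.adjoin ℝ (range fun i => evalCoord b (σ i)) := by
  intro f hf
  obtain ⟨p, rfl⟩ : f ∈ (evalCoord b).range := range_evalCoord b ▸ hf.1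
  have := (evalCoord b).map_adjoin (range σ) ▸
    Subalgebra.mem_map.2 ⟨p, hgen p hf.2, rfl⟩
  rwa [← range_comp] at this

end Generators

/-- The linear action of `G` on `V` given by an orthogonal representation. -/
abbrev isometricAction {G V : Type*} [Group G] [NormedAddCommGroup V] [InnerProductSpace ℝ V]
    (ρ : G →* (V ≃ₗᵢ[ℝ] V)) : DistribMulAction G V where
  smul g v := ρ g v
  one_smul v := by simp [HSMul.hSMul]
  mul_smul g h v := by simp [HSMul.hSMul]
  smul_zero g := map_zero (ρ g)
  smul_add g := map_add (ρ g)

theorem exists_differentiable_lift_general {G V κ ι : Type*} [Group G] [Finite G]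
    [NormedAddCommGroup V] [InnerProductSpace ℝ V] [Finite κ] (b : Module.Basis κ ℝ V)
    (ρ : G →* (V ≃ₗᵢ[ℝ] V)) (σ : ι → MvPolynomial κ ℝ)
    (hinv : ∀ i g v,
      MvPolynomial.eval (b.repr (ρ g v)) (σ i) = MvPolynomial.eval (b.repr v) (σ i))
    (hgen : ∀ p : MvPolynomial κ ℝ,
      (∀ g v, MvPolynomial.eval (b.repr (ρ g v)) p = MvPolynomial.eval (b.repr v) p) →
      p ∈ Algebra.adjoin ℝ (range σ))
    {d : ℕ} (hdeg : ∀ i, (σ i).totalDegree ≤ d) {U : Set ℝ} (hU : IsOpen U) {c : ι → ℝ → ℝ}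
    (hc : ∀ i, ContDiffOn ℝ d (c i) U)
    (hcval : ∀ t ∈ U, ∃ v, ∀ i, MvPolynomial.eval (b.repr v) (σ i) = c i t) :
    ∃ cbar : ℝ → V, DifferentiableOn ℝ cbar U ∧
      ∀ t ∈ U, ∀ i, MvPolynomial.eval (b.repr (cbar t)) (σ i) = c i t := by
  have := b.finiteDimensional_of_finite
  let := isometricAction ρ
  have : SMulCommClass ℝ G V := ⟨fun s g v => ((ρ g).map_smul s v).symm⟩
  have : IsIsometricSMul G V := ⟨fun g => (ρ g).isometry⟩
  simp only [← evalCoord_apply] at hinv hgen hcval ⊢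
  have σ_mem : range (fun i => evalCoord b (σ i)) ⊆ invPolyFunLE G V d := by
    rintro _ ⟨i, rfl⟩
    exact ⟨⟨range_evalCoord b ▸ AlgHom.mem_range_self _ _, hinv i⟩, degreeLE_evalCoord b (hdeg i)⟩
  have hle := invPolyFun_le_adjoin hgen
  have hsep : SeparatesOrbits G (invPolyFunLE G V d) :=
    separatesOrbits_invPolyFun.of_le_adjoin (hle.trans (Algebra.adjoin_mono σ_mem))
  choose! x hx using hcval
  have smooth : ∀ t ∈ U, SmoothAlong G d x t := fun t ht => .of_le_adjoin hle <| by
    rintro _ ⟨i, rfl⟩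
    exact ((hc i).contDiffAt (hU.mem_nhds ht)).congr_of_eventuallyEq
      (mem_of_superset (hU.mem_nhds ht) fun s hs => hx s hs i)
  obtain ⟨y, hy, dy⟩ := liftableOn_of_forall_smoothAlong hsep hU smooth
  refine ⟨y, fun t ht => (dy t ht).differentiableWithinAt, fun t ht i => ?_⟩
  exact (hy.apply_eq (σ_mem ⟨i, rfl⟩).1 t).trans (hx t ht i)

/-- For an orthogonal representation `ρ` of a finite group `G` on `V = ℝ^m`, with homogeneous
generators `σ 0, …, σ (n-1)` of the algebra of `G`-invariant polynomials, of maximal degree `d`: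
any curve of class `C^d` in the orbit space `σ(V) ⊆ ℝ^n` admits a differentiable lift to `V`. -/
theorem exists_differentiable_lift
    (G : Type*) [Group G] [Fintype G] (m n : ℕ)
    (ρ : G →* (EuclideanSpace ℝ (Fin m) ≃ₗᵢ[ℝ] EuclideanSpace ℝ (Fin m)))
    (σ : Fin n → MvPolynomial (Fin m) ℝ)
    (deg : Fin n → ℕ)
    (hhom : ∀ i, (σ i).IsHomogeneous (deg i))
    (hinv : ∀ i g (v : EuclideanSpace ℝ (Fin m)),
      MvPolynomial.eval (fun j => ρ g v j) (σ i) = MvPolynomial.eval (fun j => v j) (σ i))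
    (hgen : ∀ p : MvPolynomial (Fin m) ℝ,
      (∀ g (v : EuclideanSpace ℝ (Fin m)),
        MvPolynomial.eval (fun j => ρ g v j) p = MvPolynomial.eval (fun j => v j) p) →
      p ∈ Algebra.adjoin ℝ (Set.range σ))
    (S : EuclideanSpace ℝ (Fin m) → EuclideanSpace ℝ (Fin n))
    (hS : ∀ v i, S v i = MvPolynomial.eval (fun j => v j) (σ i))
    (d : ℕ) (hd : d = Finset.univ.sup deg)
    (c : ℝ → EuclideanSpace ℝ (Fin n))
    (hc : ContDiff ℝ d c)
    (hcval : ∀ t, c t ∈ Set.range S) :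
    ∃ cbar : ℝ → EuclideanSpace ℝ (Fin m),
      Differentiable ℝ cbar ∧ ∀ t, S (cbar t) = c t := by
  obtain ⟨cbar, diff, lift⟩ := exists_differentiable_lift_general
    (EuclideanSpace.basisFun (Fin m) ℝ).toBasis ρ σ hinv hgen
    (fun i => (hhom i).totalDegree_le.trans (hd ▸ Finset.le_sup (Finset.mem_univ i)))
    isOpen_univ (fun i => (contDiff_euclidean.1 hc i).contDiffOn)
    fun t _ => (hcval t).imp fun v hv i => (hS v i).symm.trans (congr_arg (· i) hv)
  exact ⟨cbar, differentiableOn_univ.1 diff, fun t => PiLp.ext fun i =>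
    (hS _ i).trans (lift t trivial i)⟩
end

section
/- Let ρ : G → O(V) be an orthogonal representation of a finite group G on a finite-dimensional real Euclidean vector space V such that G is generated by elements acting as reflections (orthogonal maps fixing a hyperplane pointwise). Let σ_1, …, σ_n be homogeneous generators of ℝ[V]^G and σ = (σ_1, …, σ_n) : V → ℝ^n. Then for every open U ⊆ ℝ^q and every continuous mapping f : U → ℝ^n with values in σ(V), there exists a continuous mapping f̄ : U → V with σ ∘ f̄ = f. -/
/-!
Fix a vector `v` off all reflecting hyperplanes. The closed Weyl chamber `C` containing `v` meets
every orbit of the group exactly once. It meets it because a point `x` of the orbit maximizing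
`⟪x, v⟫` lies in `C`. It does so only once because the reflections in the simple roots generate the
group, and if `x` and `w x` both lie in `C`, the first letter of a word for `w` in these reflections
either fixes `w x` and can be dropped, or the exchange condition yields a shorter word for `w`.

The polynomial `‖x‖ ^ 2` is invariant, hence a polynomial in `σ`, so `σ` is proper. The product of
the squared distances to the points of an orbit is invariant as well and vanishes exactly on that
orbit, so `σ` separates orbits. Therefore `σ` restricts to a closed embedding of `C` with image
`σ(V)`, and composing `f` with its inverse gives the lift.
-/

open Module Set Topology
open scoped RealInnerProductSpace

section HyperplaneReflection

variable {V : Type*} [NormedAddCommGroup V] [InnerProductSpace ℝ V] {a b c v : V}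

/-- The orthogonal reflection in the hyperplane `aᗮ`; it is the identity for `a = 0`. -/
noncomputable def hyperplaneReflection (a : V) : V ≃ₗᵢ[ℝ] V := (ℝ ∙ a)ᗮ.reflection

lemma hyperplaneReflection_apply (ha : ‖a‖ = 1) (x : V) :
    hyperplaneReflection a x = x - (2 * ⟪a, x⟫) • a := by
  rw [hyperplaneReflection, Submodule.reflection_orthogonal_apply,
    Submodule.reflection_singleton_apply]
  simp only [RCLike.ofReal_real_eq_id, id_eq, ha, one_pow, div_one]
  module

lemma inner_hyperplaneReflection_left (ha : ‖a‖ = 1) (x y : V) :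
    ⟪hyperplaneReflection a x, y⟫ = ⟪x, y⟫ - 2 * ⟪a, x⟫ * ⟪a, y⟫ := by
  rw [hyperplaneReflection_apply ha, inner_sub_left, real_inner_smul_left]

@[simp] lemma hyperplaneReflection_self (a : V) : hyperplaneReflection a a = -a :=
  Submodule.reflection_orthogonalComplement_singleton_eq_neg a

@[simp] lemma hyperplaneReflection_inv (a : V) :
    (hyperplaneReflection a)⁻¹ = hyperplaneReflection a :=
  Submodule.reflection_inv

@[simp] lemma hyperplaneReflection_mul_self (a : V) :
    hyperplaneReflection a * hyperplaneReflection a = 1 :=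
  Submodule.reflection_mul_reflection _

lemma hyperplaneReflection_eq_self_iff (a x : V) :
    hyperplaneReflection a x = x ↔ ⟪a, x⟫ = 0 := by
  rw [hyperplaneReflection, Submodule.reflection_eq_self_iff,
    Submodule.mem_orthogonal_singleton_iff_inner_right]

lemma hyperplaneReflection_map (φ : V ≃ₗᵢ[ℝ] V) (a : V) :
    hyperplaneReflection (φ a) = φ * hyperplaneReflection a * φ⁻¹ := by
  have hmap : (ℝ ∙ φ a)ᗮ = (ℝ ∙ a)ᗮ.map (φ.toLinearEquiv : V →ₗ[ℝ] V) := by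
    rw [Submodule.map_orthogonal_equiv, Submodule.map_span, image_singleton]
    rfl
  ext x
  simp only [hyperplaneReflection, hmap]
  exact Submodule.reflection_map_apply φ _ x

lemma hyperplaneReflection_neg (a : V) : hyperplaneReflection (-a) = hyperplaneReflection a := by
  rw [← hyperplaneReflection_self, hyperplaneReflection_map]
  simp

lemma eq_or_eq_neg_of_hyperplaneReflection_eq (ha : ‖a‖ = 1) (hb : ‖b‖ = 1)
    (h : hyperplaneReflection b = hyperplaneReflection a) : b = a ∨ b = -a := by
  have hab : ⟪a, b⟫ • a = b := by
    have hneg : hyperplaneReflection a b = -b := h ▸ hyperplaneReflection_self b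
    rw [hyperplaneReflection_apply ha] at hneg
    linear_combination (norm := module) (-1 / 2 : ℝ) • hneg
  have habs : |⟪a, b⟫| = 1 := by
    simpa [norm_smul, ha, hb] using congrArg norm hab
  rcases (abs_eq zero_le_one).1 habs with h1 | h1
  · left; rw [← hab, h1, one_smul]
  · right; rw [← hab, h1, neg_one_smul]

lemma eq_one_or_eq_hyperplaneReflection [FiniteDimensional ℝ V] {H : Submodule ℝ V}
    (hH : finrank ℝ H + 1 = finrank ℝ V) {φ : V ≃ₗᵢ[ℝ] V} (hφ : ∀ x ∈ H, φ x = x) :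
    φ = 1 ∨ ∃ a : V, ‖a‖ = 1 ∧ φ = hyperplaneReflection a := by
  refine or_iff_not_imp_left.2 fun hne => ?_
  obtain ⟨u, hu⟩ : ∃ u, φ u ≠ u := by
    contrapose! hne
    exact LinearIsometryEquiv.ext hne
  have hsub : u - φ u ≠ 0 := sub_ne_zero.2 hu.symm
  have hscale : hyperplaneReflection (‖u - φ u‖⁻¹ • (u - φ u)) =
      hyperplaneReflection (u - φ u) := by
    simp only [hyperplaneReflection, Submodule.span_singleton_smul_eq
      (isUnit_iff_ne_zero.2 (inv_ne_zero (norm_ne_zero_iff.2 hsub)))]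
  refine ⟨‖u - φ u‖⁻¹ • (u - φ u), norm_smul_inv_norm hsub, ?_⟩
  rw [hscale]
  let E : Submodule ℝ V := LinearMap.eqLocus (φ.toLinearEquiv : V →ₗ[ℝ] V)
    ((hyperplaneReflection (u - φ u)).toLinearEquiv : V →ₗ[ℝ] V)
  have huE : u ∈ E := (Submodule.reflection_sub (φ.norm_map u).symm).symm
  have hHE : H ≤ E := fun x hx => by
    have horth : ⟪u - φ u, x⟫ = 0 := by
      have hinner := φ.inner_map_map u x
      rw [hφ x hx] at hinner
      rw [inner_sub_left, hinner, sub_self]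
    exact (hφ x hx).trans ((hyperplaneReflection_eq_self_iff _ _).2 horth).symm
  have hlt : H < E := lt_of_le_of_ne hHE fun h => hu (hφ u (h ▸ huE))
  have hE : E = ⊤ := Submodule.eq_top_of_finrank_eq <|
    le_antisymm E.finrank_le (hH ▸ Submodule.finrank_lt_finrank_of_lt hlt)
  exact LinearIsometryEquiv.ext fun x => (hE ▸ Submodule.mem_top : x ∈ E)

lemma abs_inner_hyperplaneReflection_lt (hb : ‖b‖ = 1) (hc : ‖c‖ = 1) (hcb : c ≠ b)
    (hpos : 0 < ⟪c, b⟫) (hcv : 0 < ⟪c, v⟫) (hlt : ⟪c, v⟫ < ⟪b, v⟫) :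
    |⟪hyperplaneReflection c b, v⟫| < ⟪b, v⟫ := by
  have hlt_one : ⟪c, b⟫ < 1 := (inner_lt_one_iff_real_of_norm_eq_one hc hb).2 hcb
  rw [inner_hyperplaneReflection_left hc, abs_lt]
  constructor <;> nlinarith

end HyperplaneReflection

section Roots

variable {V : Type*} [NormedAddCommGroup V] [InnerProductSpace ℝ V]

/-- The roots of a group `W` of isometries: the unit normals of the hyperplanes whose
reflections lie in `W`. Every such hyperplane contributes two opposite roots. -/
def unitRoots (W : Subgroup (V ≃ₗᵢ[ℝ] V)) : Set V :=
  {a | ‖a‖ = 1 ∧ hyperplaneReflection a ∈ W}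

/-- `W` is generated by the hyperplane reflections it contains. -/
def IsReflectionGroup (W : Subgroup (V ≃ₗᵢ[ℝ] V)) : Prop :=
  Subgroup.closure (hyperplaneReflection '' unitRoots W) = W

/-- `v` lies on no reflecting hyperplane of `W`. Such a vector decides which roots are positive,
and `⟪a, v⟫` plays the role of the height of a root `a`. -/
def IsRegularVector (W : Subgroup (V ≃ₗᵢ[ℝ] V)) (v : V) : Prop :=
  ∀ a ∈ unitRoots W, ⟪a, v⟫ ≠ 0

/-- The roots of `W` on the same side of their hyperplane as `v`. -/
def positiveRoots (W : Subgroup (V ≃ₗᵢ[ℝ] V)) (v : V) : Set V :=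
  {a ∈ unitRoots W | 0 < ⟪a, v⟫}

/-- The simple roots of `W` with respect to `v`, defined as the positive roots whose reflection
permutes the other positive roots. -/
def simpleRoots (W : Subgroup (V ≃ₗᵢ[ℝ] V)) (v : V) : Set V :=
  {a ∈ positiveRoots W v | ∀ b ∈ positiveRoots W v, b ≠ a →
    hyperplaneReflection a b ∈ positiveRoots W v}

/-- The closed Weyl chamber of `W` containing `v`. -/
def weylChamber (W : Subgroup (V ≃ₗᵢ[ℝ] V)) (v : V) : Set V :=
  {x | ∀ a ∈ positiveRoots W v, 0 ≤ ⟪a, x⟫}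

variable {W : Subgroup (V ≃ₗᵢ[ℝ] V)} {a b v x : V}

lemma map_mem_unitRoots {w : V ≃ₗᵢ[ℝ] V} (hw : w ∈ W) (ha : a ∈ unitRoots W) :
    w a ∈ unitRoots W := by
  refine ⟨(w.norm_map a).trans ha.1, ?_⟩
  rw [hyperplaneReflection_map]
  exact W.mul_mem (W.mul_mem hw ha.2) (W.inv_mem hw)

lemma neg_mem_unitRoots (ha : a ∈ unitRoots W) : -a ∈ unitRoots W :=
  hyperplaneReflection_self a ▸ map_mem_unitRoots ha.2 ha

lemma finite_unitRoots [Finite W] : (unitRoots W).Finite := by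
  have hfiber : ∀ w : V ≃ₗᵢ[ℝ] V, {a : V | ‖a‖ = 1 ∧ hyperplaneReflection a = w}.Finite := by
    intro w
    rcases eq_empty_or_nonempty {a : V | ‖a‖ = 1 ∧ hyperplaneReflection a = w} with h | ⟨a, ha, haw⟩
    · exact h ▸ finite_empty
    · refine (toFinite {a, -a}).subset fun b ⟨hb, hbw⟩ => ?_
      exact eq_or_eq_neg_of_hyperplaneReflection_eq ha hb (hbw.trans haw.symm)
  refine ((toFinite (W : Set (V ≃ₗᵢ[ℝ] V))).biUnion fun w _ => hfiber w).subset fun a ha => ?_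
  exact mem_biUnion ha.2 ⟨ha.1, rfl⟩

lemma exists_isRegularVector [Finite W] : ∃ v, IsRegularVector W v := by
  classical
  let hyperplanes : Finset (Subspace ℝ V) :=
    (finite_unitRoots (W := W)).toFinset.image fun a => (ℝ ∙ a)ᗮ
  have htop : ⊤ ∉ hyperplanes := by
    intro h
    simp only [hyperplanes, Finset.mem_image, Finite.mem_toFinset] at h
    obtain ⟨a, ha, htop⟩ := h
    have ha0 : a = 0 := by
      simpa [Submodule.orthogonal_eq_top_iff] using htop
    simpa [ha0] using ha.1
  obtain ⟨v, hv⟩ := (ne_univ_iff_exists_notMem _).1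
    (Subspace.biUnion_ne_univ_of_top_notMem htop)
  refine ⟨v, fun a ha hav => hv ?_⟩
  simp only [hyperplanes, mem_iUnion, Finset.mem_image, Finite.mem_toFinset, SetLike.mem_coe]
  exact ⟨_, ⟨a, ha, rfl⟩, Submodule.mem_orthogonal_singleton_iff_inner_right.2 hav⟩

lemma IsRegularVector.mem_positiveRoots_or_neg_mem (hv : IsRegularVector W v)
    (ha : a ∈ unitRoots W) : a ∈ positiveRoots W v ∨ -a ∈ positiveRoots W v := by
  rcases (hv a ha).lt_or_gt with h | h
  · exact .inr ⟨neg_mem_unitRoots ha, by rwa [inner_neg_left, neg_pos]⟩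
  · exact .inl ⟨ha, h⟩

/- If `s_b` sends a positive root `c ≠ b` to `-d` with `d` positive, then `c + d = 2⟪b, c⟫ b` with
`⟪b, c⟫ < 1`, so one of `c`, `d` has smaller height than `b`, and reflecting `b` in that one
lowers its height. -/
lemma exists_unitRoot_lower_height (hv : IsRegularVector W v) (hb : b ∈ positiveRoots W v)
    (hb_simple : b ∉ simpleRoots W v) :
    ∃ c ∈ unitRoots W, |⟪c, v⟫| < |⟪b, v⟫| ∧ |⟪hyperplaneReflection c b, v⟫| < |⟪b, v⟫| := by
  have hbroot := hb.1
  have hbv : 0 < ⟪b, v⟫ := hb.2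
  suffices ∃ c ∈ positiveRoots W v, c ≠ b ∧ 0 < ⟪c, b⟫ ∧ ⟪c, v⟫ < ⟪b, v⟫ by
    obtain ⟨c, ⟨hc, hcv⟩, hcb, hpos, hlt⟩ := this
    refine ⟨c, hc, ?_, ?_⟩ <;> rw [abs_of_pos hbv]
    · rwa [abs_of_pos hcv]
    · exact abs_inner_hyperplaneReflection_lt hbroot.1 hc.1 hcb hpos hcv hlt
  obtain ⟨c, hc, hcb, hbc⟩ : ∃ c ∈ positiveRoots W v, c ≠ b ∧
      hyperplaneReflection b c ∉ positiveRoots W v := by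
    simpa [simpleRoots, hb] using hb_simple
  have hcv : 0 < ⟪c, v⟫ := hc.2
  have hd := (hv.mem_positiveRoots_or_neg_mem (map_mem_unitRoots hbroot.2 hc.1)).resolve_left hbc
  have hdv : 0 < 2 * ⟪b, c⟫ * ⟪b, v⟫ - ⟪c, v⟫ := by
    simpa [inner_neg_left, inner_hyperplaneReflection_left hbroot.1] using hd.2
  have hpos : 0 < ⟪b, c⟫ := by
    by_contra! h
    nlinarith
  have hlt_one : ⟪b, c⟫ < 1 := (inner_lt_one_iff_real_of_norm_eq_one hbroot.1 hc.1.1).2 hcb.symm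
  rcases lt_or_ge ⟪c, v⟫ ⟪b, v⟫ with hlt | hge
  · exact ⟨c, hc, hcb, real_inner_comm b c ▸ hpos, hlt⟩
  · refine ⟨_, hd, fun h => hcb ?_, ?_, ?_⟩
    · apply (hyperplaneReflection b).injective
      rw [hyperplaneReflection_self, neg_eq_iff_eq_neg.1 h]
    · rw [inner_neg_left, inner_hyperplaneReflection_left hbroot.1,
        real_inner_self_eq_norm_sq, hbroot.1, real_inner_comm]
      linarith
    · rw [inner_neg_left, inner_hyperplaneReflection_left hbroot.1]
      nlinarith

lemma hyperplaneReflection_mem_closure_simpleRoots [Finite W] (hv : IsRegularVector W v)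
    (hb : b ∈ unitRoots W) :
    hyperplaneReflection b ∈ Subgroup.closure (hyperplaneReflection '' simpleRoots W v) := by
  have hwf : (unitRoots W).WellFoundedOn ((fun a => |⟪a, v⟫|) ⁻¹'o (· < ·)) :=
    finite_unitRoots.wellFoundedOn
  refine hwf.induction (P := fun b => hyperplaneReflection b ∈
    Subgroup.closure (hyperplaneReflection '' simpleRoots W v)) hb fun b hb ih => ?_
  wlog hbpos : b ∈ positiveRoots W v generalizing b with hneg
  · rw [← hyperplaneReflection_neg]
    refine hneg (-b) (neg_mem_unitRoots hb) (fun c hc h => ih c hc ?_)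
      ((hv.mem_positiveRoots_or_neg_mem hb).resolve_left hbpos)
    simpa using h
  by_cases hb_simple : b ∈ simpleRoots W v
  · exact Subgroup.subset_closure (mem_image_of_mem _ hb_simple)
  obtain ⟨c, hc, hcb, hlow⟩ := exists_unitRoot_lower_height hv hbpos hb_simple
  have hconj : hyperplaneReflection b =
      hyperplaneReflection c * hyperplaneReflection (hyperplaneReflection c b) *
        hyperplaneReflection c := by
    rw [hyperplaneReflection_map]
    simp [mul_assoc, ← mul_assoc (hyperplaneReflection c) (hyperplaneReflection c)]
  rw [hconj]
  have hcmem := ih c hc hcb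
  exact mul_mem (mul_mem hcmem (ih _ (map_mem_unitRoots hc.2 hb) hlow)) hcmem

lemma IsReflectionGroup.exists_simple_word [Finite W] (hW : IsReflectionGroup W)
    (hv : IsRegularVector W v) {w : V ≃ₗᵢ[ℝ] V} (hw : w ∈ W) :
    ∃ l : List (V ≃ₗᵢ[ℝ] V), (∀ s ∈ l, s ∈ hyperplaneReflection '' simpleRoots W v) ∧
      l.prod = w := by
  apply Submonoid.exists_list_of_mem_closure
  have hinv : (hyperplaneReflection '' simpleRoots W v)⁻¹ =
      hyperplaneReflection '' simpleRoots W v := by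
    rw [← image_inv_eq_inv, image_image]
    simp only [hyperplaneReflection_inv]
  have hle : W ≤ Subgroup.closure (hyperplaneReflection '' simpleRoots W v) := by
    refine hW.ge.trans ((Subgroup.closure_le _).2 ?_)
    rintro _ ⟨b, hb, rfl⟩
    exact hyperplaneReflection_mem_closure_simpleRoots hv hb
  have hmem := hle hw
  rwa [← Subgroup.mem_toSubmonoid, Subgroup.closure_toSubmonoid, hinv, union_self] at hmem

/- The exchange condition: multiplication by `s_b` cancels one letter of the word. -/
lemma exists_shorter_word {l : List (V ≃ₗᵢ[ℝ] V)}
    (hl : ∀ s ∈ l, s ∈ hyperplaneReflection '' simpleRoots W v)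
    (hb : b ∈ positiveRoots W v) (hneg : l.prod⁻¹ b ∉ positiveRoots W v) :
    ∃ l' : List (V ≃ₗᵢ[ℝ] V), (∀ s ∈ l', s ∈ hyperplaneReflection '' simpleRoots W v) ∧
      l'.length < l.length ∧ l'.prod = hyperplaneReflection b * l.prod := by
  induction l generalizing b with
  | nil => exact absurd hb (by simpa using hneg)
  | cons s l ih =>
    rw [List.forall_mem_cons] at hl
    obtain ⟨⟨a, ha, rfl⟩, hl⟩ := hl
    by_cases hba : b = a
    · exact ⟨l, hl, by simp, by simp [hba, ← mul_assoc]⟩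
    · obtain ⟨l', hl', hlen, hprod⟩ := ih hl (ha.2 b hb hba)
        (by simpa [mul_inv_rev] using hneg)
      refine ⟨hyperplaneReflection a :: l', List.forall_mem_cons.2 ⟨⟨a, ha, rfl⟩, hl'⟩,
        by simpa using hlen, ?_⟩
      rw [List.prod_cons, hprod, hyperplaneReflection_map, hyperplaneReflection_inv]
      simp only [List.prod_cons, ← mul_assoc, hyperplaneReflection_mul_self, one_mul]

lemma isClosed_weylChamber : IsClosed (weylChamber W v) := by
  simp only [weylChamber, ofPred_forall]
  exact isClosed_biInter fun a _ => isClosed_le continuous_const (by fun_prop)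

lemma simple_word_apply_eq_of_mem_weylChamber (l : List (V ≃ₗᵢ[ℝ] V))
    (hl : ∀ s ∈ l, s ∈ hyperplaneReflection '' simpleRoots W v)
    (hx : x ∈ weylChamber W v) (hlx : l.prod x ∈ weylChamber W v) : l.prod x = x := by
  match l with
  | [] => rfl
  | s :: l =>
    rw [List.forall_mem_cons] at hl
    obtain ⟨⟨a, ha, rfl⟩, hl⟩ := hl
    rw [List.prod_cons] at hlx ⊢
    by_cases hla : l.prod⁻¹ a ∈ positiveRoots W v
    · have hnonneg : 0 ≤ ⟪a, l.prod x⟫ :=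
        (hx _ hla).trans_eq (l.prod.symm.inner_map_eq_flip a x)
      have hnonpos : ⟪a, l.prod x⟫ ≤ 0 := by
        have hneg := (hyperplaneReflection a).inner_map_map a (l.prod x)
        rw [hyperplaneReflection_self, inner_neg_left] at hneg
        have hpos : 0 ≤ ⟪a, hyperplaneReflection a (l.prod x)⟫ := hlx a ha.1
        linarith
      have hfix : hyperplaneReflection a (l.prod x) = l.prod x :=
        (hyperplaneReflection_eq_self_iff _ _).2 (le_antisymm hnonpos hnonneg)
      rw [LinearIsometryEquiv.coe_mul, Function.comp_apply, hfix] at hlx ⊢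
      exact simple_word_apply_eq_of_mem_weylChamber l hl hx hlx
    · obtain ⟨l', hl', hlen, hprod⟩ := exists_shorter_word hl ha.1 hla
      rw [← hprod] at hlx ⊢
      exact simple_word_apply_eq_of_mem_weylChamber l' hl' hx hlx
termination_by l.length

theorem IsReflectionGroup.map_eq_of_mem_weylChamber [Finite W] (hW : IsReflectionGroup W)
    (hv : IsRegularVector W v) {w : V ≃ₗᵢ[ℝ] V} (hw : w ∈ W) (hx : x ∈ weylChamber W v)
    (hwx : w x ∈ weylChamber W v) : w x = x := by
  obtain ⟨l, hl, rfl⟩ := hW.exists_simple_word hv hw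
  exact simple_word_apply_eq_of_mem_weylChamber l hl hx hwx

lemma exists_map_mem_weylChamber [Finite W] (v x : V) : ∃ w ∈ W, w x ∈ weylChamber W v := by
  obtain ⟨⟨w, hw⟩, hmax⟩ := Finite.exists_max fun w : W => ⟪(w : V ≃ₗᵢ[ℝ] V) x, v⟫
  refine ⟨w, hw, fun a ha => ?_⟩
  have hle := hmax ⟨hyperplaneReflection a * w, mul_mem ha.1.2 hw⟩
  have hav : 0 < ⟪a, v⟫ := ha.2
  simp only [LinearIsometryEquiv.coe_mul, Function.comp_apply,
    inner_hyperplaneReflection_left ha.1.1] at hle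
  by_contra! h
  nlinarith

lemma image_weylChamber_eq_range [Finite W] {Y : Type*} {F : V → Y} (v : V)
    (hinv : ∀ w ∈ W, ∀ x, F (w x) = F x) : F '' weylChamber W v = range F := by
  refine (image_subset_range _ _).antisymm ?_
  rintro _ ⟨x, rfl⟩
  obtain ⟨w, hw, hwx⟩ := exists_map_mem_weylChamber (W := W) v x
  exact ⟨w x, hwx, hinv w hw x⟩

end Roots

section Lift

variable {V X Y : Type*} [NormedAddCommGroup V] [InnerProductSpace ℝ V]
  [TopologicalSpace X] [TopologicalSpace Y] {W : Subgroup (V ≃ₗᵢ[ℝ] V)} [Finite W]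
  {v : V} {F : V → Y}

lemma IsReflectionGroup.isClosedEmbedding_domRestrict_weylChamber (hW : IsReflectionGroup W)
    (hv : IsRegularVector W v) (hF : IsProperMap F)
    (hsep : ∀ x y, F x = F y → ∃ w ∈ W, w x = y) :
    IsClosedEmbedding ((weylChamber W v).domRestrict F) := by
  have hchamber : IsClosedEmbedding ((↑) : weylChamber W v → V) :=
    isClosed_weylChamber.isClosedEmbedding_subtypeVal
  refine .of_continuous_injective_isClosedMap (hF.continuous.comp continuous_subtype_val) ?_
    (hF.isClosedMap.comp hchamber.isClosedMap)
  rintro ⟨x, hx⟩ ⟨y, hy⟩ hxy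
  obtain ⟨w, hw, rfl⟩ := hsep x y hxy
  exact Subtype.ext (hW.map_eq_of_mem_weylChamber hv hw hx hy).symm

theorem IsReflectionGroup.exists_continuousOn_lift (hW : IsReflectionGroup W)
    (hF : IsProperMap F) (hinv : ∀ w ∈ W, ∀ x, F (w x) = F x)
    (hsep : ∀ x y, F x = F y → ∃ w ∈ W, w x = y) {f : X → Y} {U : Set X}
    (hf : ContinuousOn f U) (hfU : MapsTo f U (range F)) :
    ∃ fbar : X → V, ContinuousOn fbar U ∧ EqOn (F ∘ fbar) f U := by
  obtain ⟨v, hv⟩ := exists_isRegularVector (W := W)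
  have hemb := hW.isClosedEmbedding_domRestrict_weylChamber hv hF hsep
  have : Nonempty (weylChamber W v) := ⟨0, fun a _ => (inner_zero_right a).ge⟩
  have hlift : EqOn ((weylChamber W v).domRestrict F ∘
      Function.invFun ((weylChamber W v).domRestrict F) ∘ f) f U := fun x hx =>
    Function.invFun_eq <| by
      rw [← mem_range, range_domRestrict, image_weylChamber_eq_range v hinv]
      exact hfU hx
  have hcont : ContinuousOn (Function.invFun ((weylChamber W v).domRestrict F) ∘ f) U :=
    hemb.isInducing.continuousOn_iff.2 (hf.congr hlift)
  exact ⟨_, continuous_subtype_val.comp_continuousOn hcont, hlift⟩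

end Lift

section InvariantPolynomials

variable {G ι κ : Type*} [Group G]

lemma exists_eval_eq_eval_of_mem_adjoin {R : Type*} [CommSemiring R] {σ : ι → MvPolynomial κ R}
    {p : MvPolynomial κ R} (hp : p ∈ Algebra.adjoin R (range σ)) :
    ∃ Q : MvPolynomial ι R, ∀ x : κ → R,
      MvPolynomial.eval x p = MvPolynomial.eval (fun i => MvPolynomial.eval x (σ i)) Q := by
  rw [Algebra.adjoin_range_eq_range_aeval] at hp
  obtain ⟨Q, rfl⟩ := hp
  exact ⟨Q, fun x => MvPolynomial.comp_aeval_apply σ (MvPolynomial.aeval x) Q⟩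

/-- The map `σ = (σ_i)_i : ℝ^κ → ℝ^ι` whose components are the given polynomials. -/
noncomputable def evalMap (σ : ι → MvPolynomial κ ℝ) (x : EuclideanSpace ℝ κ) :
    EuclideanSpace ℝ ι :=
  WithLp.toLp 2 fun i => MvPolynomial.eval (fun j => x j) (σ i)

lemma continuous_evalMap (σ : ι → MvPolynomial κ ℝ) : Continuous (evalMap σ) :=
  (PiLp.continuous_toLp 2 _).comp <| continuous_pi fun i =>
    (MvPolynomial.continuous_eval (σ i)).comp (PiLp.continuous_ofLp 2 _)

variable [Fintype κ]

/-- The polynomial `p` is invariant, as a function on `ℝ^κ`, under the representation `ρ`. -/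
def IsInvariantPolynomial (ρ : G →* (EuclideanSpace ℝ κ ≃ₗᵢ[ℝ] EuclideanSpace ℝ κ))
    (p : MvPolynomial κ ℝ) : Prop :=
  ∀ g (x : EuclideanSpace ℝ κ),
    MvPolynomial.eval (fun j => ρ g x j) p = MvPolynomial.eval (fun j => x j) p

/-- The squared Euclidean distance to `x`, as a polynomial. -/
noncomputable def distSqPolynomial (x : EuclideanSpace ℝ κ) : MvPolynomial κ ℝ :=
  ∑ j, (MvPolynomial.X j - MvPolynomial.C (x j)) ^ 2

variable {ρ : G →* (EuclideanSpace ℝ κ ≃ₗᵢ[ℝ] EuclideanSpace ℝ κ)} {σ : ι → MvPolynomial κ ℝ}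

lemma eval_distSqPolynomial (x z : EuclideanSpace ℝ κ) :
    MvPolynomial.eval (fun j => z j) (distSqPolynomial x) = ‖z - x‖ ^ 2 := by
  simp [distSqPolynomial, EuclideanSpace.real_norm_sq_eq]

lemma isInvariantPolynomial_distSqPolynomial_zero :
    IsInvariantPolynomial ρ (distSqPolynomial 0) := fun g x => by
  simp only [eval_distSqPolynomial, sub_zero, (ρ g).norm_map]

lemma exists_isInvariantPolynomial_eval_eq_zero_iff [Finite G] (x : EuclideanSpace ℝ κ) :
    ∃ p : MvPolynomial κ ℝ, IsInvariantPolynomial ρ p ∧ ∀ z : EuclideanSpace ℝ κ,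
      MvPolynomial.eval (fun j => z j) p = 0 ↔ ∃ g, ρ g x = z := by
  have := Fintype.ofFinite G
  refine ⟨∏ g, distSqPolynomial (ρ g x), fun h z => ?_, fun z => ?_⟩
  · simp only [map_prod, eval_distSqPolynomial]
    rw [← Equiv.prod_comp (Equiv.mulLeft h)]
    refine Finset.prod_congr rfl fun g _ => ?_
    simp [← map_sub]
  · simp [eval_distSqPolynomial, Finset.prod_eq_zero_iff, sub_eq_zero, eq_comm (a := z)]

lemma isProperMap_evalMap (hσ : distSqPolynomial 0 ∈ Algebra.adjoin ℝ (range σ)) :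
    IsProperMap (evalMap σ) := by
  obtain ⟨Q, hQ⟩ := exists_eval_eq_eval_of_mem_adjoin hσ
  let evalQ (y : EuclideanSpace ℝ ι) : ℝ := MvPolynomial.eval (fun i => y i) Q
  have hevalQ : Continuous evalQ :=
    (MvPolynomial.continuous_eval Q).comp (PiLp.continuous_ofLp 2 _)
  have hnorm : evalQ ∘ evalMap σ = fun x => ‖x‖ ^ 2 := by
    funext x
    have h := eval_distSqPolynomial 0 x
    rw [hQ, sub_zero] at h
    exact h
  have hproper : IsProperMap fun x : EuclideanSpace ℝ κ => ‖x‖ ^ 2 :=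
    isProperMap_iff_tendsto_cocompact.2 ⟨by fun_prop,
      ((Filter.tendsto_pow_atTop two_ne_zero).comp tendsto_norm_cocompact_atTop).mono_right
        atTop_le_cocompact⟩
  exact isProperMap_of_comp_of_t2 (continuous_evalMap σ) hevalQ (hnorm ▸ hproper)

lemma exists_map_eq_of_evalMap_eq [Finite G]
    (hgen : ∀ p, IsInvariantPolynomial ρ p → p ∈ Algebra.adjoin ℝ (range σ))
    {x y : EuclideanSpace ℝ κ} (hxy : evalMap σ x = evalMap σ y) : ∃ g, ρ g x = y := by
  obtain ⟨p, hp, hzero⟩ := exists_isInvariantPolynomial_eval_eq_zero_iff (ρ := ρ) x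
  obtain ⟨Q, hQ⟩ := exists_eval_eq_eval_of_mem_adjoin (hgen p hp)
  have hpxy : MvPolynomial.eval (fun j => y j) p = MvPolynomial.eval (fun j => x j) p := by
    have hσ : ∀ i, MvPolynomial.eval (fun j => x j) (σ i) =
        MvPolynomial.eval (fun j => y j) (σ i) := fun i => congrArg (· i) hxy
    simp only [hQ, hσ]
  exact (hzero y).1 (hpxy.trans ((hzero x).2 ⟨1, by rw [map_one, LinearIsometryEquiv.coe_one, id]⟩))

end InvariantPolynomials

lemma isReflectionGroup_range {V G : Type*} [NormedAddCommGroup V] [InnerProductSpace ℝ V]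
    [FiniteDimensional ℝ V] [Group G] {ρ : G →* (V ≃ₗᵢ[ℝ] V)}
    (hρ : Subgroup.closure {g : G | ∃ H : Submodule ℝ V,
      finrank ℝ H + 1 = finrank ℝ V ∧ ∀ x ∈ H, ρ g x = x} = ⊤) :
    IsReflectionGroup ρ.range := by
  refine ((Subgroup.closure_le _).2 ?_).antisymm ?_
  · rintro _ ⟨a, ha, rfl⟩
    exact ha.2
  · refine (MonoidHom.range_eq_map ρ).le.trans (Subgroup.map_le_iff_le_comap.2 ?_)
    rw [← hρ, Subgroup.closure_le]
    rintro g ⟨H, hH, hfix⟩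
    rw [SetLike.mem_coe, Subgroup.mem_comap]
    rcases eq_one_or_eq_hyperplaneReflection hH hfix with h | ⟨a, ha, h⟩
    · rw [h]
      exact one_mem _
    · rw [h]
      exact Subgroup.subset_closure (mem_image_of_mem _ ⟨ha, g, h⟩)

theorem reflection_group_continuous_lift_general {G X ι κ : Type*} [Group G] [Finite G]
    [TopologicalSpace X] [Fintype κ]
    {ρ : G →* (EuclideanSpace ℝ κ ≃ₗᵢ[ℝ] EuclideanSpace ℝ κ)} (hρ : IsReflectionGroup ρ.range)
    {σ : ι → MvPolynomial κ ℝ} (hinv : ∀ i, IsInvariantPolynomial ρ (σ i))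
    (hgen : ∀ p, IsInvariantPolynomial ρ p → p ∈ Algebra.adjoin ℝ (range σ))
    {f : X → EuclideanSpace ℝ ι} {U : Set X} (hf : ContinuousOn f U)
    (hfU : ∀ x ∈ U, f x ∈ range (evalMap σ)) :
    ∃ fbar : X → EuclideanSpace ℝ κ, ContinuousOn fbar U ∧ ∀ x ∈ U, evalMap σ (fbar x) = f x := by
  have : Finite ρ.range := (finite_range ρ).to_subtype
  have hproper : IsProperMap (evalMap σ) :=
    isProperMap_evalMap (hgen _ isInvariantPolynomial_distSqPolynomial_zero)
  have hmap : ∀ w ∈ ρ.range, ∀ x, evalMap σ (w x) = evalMap σ x := by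
    rintro _ ⟨g, rfl⟩ x
    exact PiLp.ext fun i => hinv i g x
  have hsep : ∀ x y, evalMap σ x = evalMap σ y → ∃ w ∈ ρ.range, w x = y := by
    intro x y hxy
    obtain ⟨g, hg⟩ := exists_map_eq_of_evalMap_eq hgen hxy
    exact ⟨ρ g, ⟨g, rfl⟩, hg⟩
  exact hρ.exists_continuousOn_lift hproper hmap hsep hf hfU

/-- If a finite group `G` acting orthogonally on `V = ℝ^m` is generated by elements acting as
reflections (orthogonal maps fixing a hyperplane pointwise), then any continuous mapping
`f : U → σ(V) ⊆ ℝ^n` on an open set `U ⊆ ℝ^q` admits a continuous lift `fbar : U → V`. -/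
theorem reflection_group_continuous_lift
    (G : Type*) [Group G] [Fintype G] (m n : ℕ)
    (ρ : G →* (EuclideanSpace ℝ (Fin m) ≃ₗᵢ[ℝ] EuclideanSpace ℝ (Fin m)))
    -- G is generated by elements acting as reflections
    (href : Subgroup.closure {g : G |
        ∃ H : Submodule ℝ (EuclideanSpace ℝ (Fin m)),
          Module.finrank ℝ H + 1 = m ∧ ∀ w ∈ H, ρ g w = w} = ⊤)
    (σ : Fin n → MvPolynomial (Fin m) ℝ)
    (deg : Fin n → ℕ)
    (hhom : ∀ i, (σ i).IsHomogeneous (deg i))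
    (hinv : ∀ i g (v : EuclideanSpace ℝ (Fin m)),
      MvPolynomial.eval (fun j => ρ g v j) (σ i) = MvPolynomial.eval (fun j => v j) (σ i))
    (hgen : ∀ p : MvPolynomial (Fin m) ℝ,
      (∀ g (v : EuclideanSpace ℝ (Fin m)),
        MvPolynomial.eval (fun j => ρ g v j) p = MvPolynomial.eval (fun j => v j) p) →
      p ∈ Algebra.adjoin ℝ (Set.range σ))
    (S : EuclideanSpace ℝ (Fin m) → EuclideanSpace ℝ (Fin n))
    (hS : ∀ v i, S v i = MvPolynomial.eval (fun j => v j) (σ i))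
    (q : ℕ) (U : Set (EuclideanSpace ℝ (Fin q))) (hU : IsOpen U)
    (f : EuclideanSpace ℝ (Fin q) → EuclideanSpace ℝ (Fin n))
    (hf : ContinuousOn f U)
    (hfval : ∀ x ∈ U, f x ∈ Set.range S) :
    ∃ fbar : EuclideanSpace ℝ (Fin q) → EuclideanSpace ℝ (Fin m),
      ContinuousOn fbar U ∧ ∀ x ∈ U, S (fbar x) = f x := by
  obtain rfl : S = evalMap σ := funext fun v => PiLp.ext (hS v)
  exact reflection_group_continuous_lift_general
    (isReflectionGroup_range (by simpa using href)) hinv hgen hf hfval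
end
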